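/- arXiv:math/0412313 — 2 statements merged into one kernel-verified Lean document; each statement's English description precedes it below -/
import Mathlib

section
/- Assume the Riemann Hypothesis. There is an absolute constant C such that for all T ≥ 2 and all x > 0, | ∑_{0<γ≤T} x^{iγ} | ≤ C √( T · max_{2≤t≤T} F(x,t) ), where the sum runs over ordinates γ of non-trivial zeros of ζ counted with multiplicity. -/
/-!
The damped waves `e^{-a|ξ| + iγξ}` and `e^{-b|ξ| + iδξ}` have inner product
`2(a + b) / ((a + b)² + (γ - δ)²)` in `L²(ℝ)`. For `a = b = 1` this is the Montgomery weight
`w(γ - δ)`, so `F(x, t)` is the square of the norm of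
`f_t = ∑_{γ ≤ t} x^{iγ} e^{-|ξ| + iγξ}`. Pairing `f_t` with the single wave `e^{-(T-1)|ξ|}` and
applying Cauchy–Schwarz gives `|∑_{γ ≤ t} x^{iγ} T² / (T² + γ²)| ≤ √(T F(x, t))`, and the
smooth weight, which lies in `[1/2, 1]`, is removed by partial summation.

The partial summation also involves the ranges `t < 2`, where `F(x, t)` is not controlled by the
maximum. There the sum is at most the number of zeros up to height `2`, and linear
independence of the characters `ξ ↦ e^{iγξ}` bounds `F(x, 2)` from below uniformly in `x` if
there are any such zeros.
-/

open Complex Filter MeasureTheory Real Set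

noncomputable section

/-- A non-trivial zero of the Riemann zeta function. -/
def ZetaNontrivZero (ρ : ℂ) : Prop := riemannZeta ρ = 0 ∧ 0 < ρ.re ∧ ρ.re < 1

/-- The multiplicity of `ρ` as a zero of `ζ`. -/
def zetaMult (ρ : ℂ) : ℕ := sInf {n : ℕ | iteratedDeriv n riemannZeta ρ ≠ 0}

/-- The set of non-trivial zeros with ordinate in `(0, T]`. -/
def zerosUpTo (T : ℝ) : Set ℂ := {ρ | ZetaNontrivZero ρ ∧ 0 < ρ.im ∧ ρ.im ≤ T}

/-- Montgomery's pair correlation function `F(x,T)`, zeros counted with multiplicity. -/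
def Fxt (x T : ℝ) : ℂ :=
  ∑' p : zerosUpTo T × zerosUpTo T,
    (zetaMult p.1 * zetaMult p.2 : ℂ) *
      Complex.exp (Complex.I * (((p.1 : ℂ).im - (p.2 : ℂ).im : ℝ) : ℂ) * (Real.log x : ℂ)) *
      ((4 / (4 + ((p.1 : ℂ).im - (p.2 : ℂ).im) ^ 2) : ℝ) : ℂ)

section NormedSpace

variable {ι κ E : Type*} [NormedAddCommGroup E]

lemma norm_sum_smul_le_of_norm_sum_filter_le [NormedSpace ℝ E] [CompleteSpace E] {s : Finset ι}
    {w : ι → ℝ} {a : ι → E} {H M : ℝ} (hH : 0 ≤ H) (hw : ∀ i ∈ s, w i ∈ Icc 0 H)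
    (hM : ∀ u, ‖∑ i ∈ s with u ≤ w i, a i‖ ≤ M) :
    ‖∑ i ∈ s, w i • a i‖ ≤ H * M := by
  have layer_integrable (i : ι) :
      IntervalIntegrable ({u | u ≤ w i}.indicator fun _ => a i) volume 0 H :=
    intervalIntegrable_iff.mpr <|
      (intervalIntegrable_iff.mp intervalIntegrable_const).indicator measurableSet_Iic
  have layer_cake : ∑ i ∈ s, w i • a i = ∫ u in (0 : ℝ)..H, ∑ i ∈ s with u ≤ w i, a i := by
    simp_rw [Finset.sum_filter]
    change _ = ∫ u in (0 : ℝ)..H, ∑ i ∈ s, {u | u ≤ w i}.indicator (fun _ => a i) u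
    rw [intervalIntegral.integral_finsetSum fun i _ => layer_integrable i]
    refine Finset.sum_congr rfl fun i hi => ?_
    calc w i • a i = ∫ _ in (0 : ℝ)..w i, a i := by
          rw [intervalIntegral.integral_const, sub_zero]
      _ = _ := (intervalIntegral.integral_indicator (hw i hi)).symm
  calc ‖∑ i ∈ s, w i • a i‖ ≤ M * |H - 0| := by
        rw [layer_cake]
        exact intervalIntegral.norm_integral_le_of_norm_le_const fun u _ => hM u
    _ = H * M := by rw [sub_zero, abs_of_nonneg hH, mul_comm]

variable {𝕜 : Type*} [NontriviallyNormedField 𝕜] [CompleteSpace 𝕜] [NormedSpace 𝕜 E]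

lemma exists_sum_norm_le_mul_norm_sum_smul {v : κ → E} (hv : LinearIndependent 𝕜 v)
    (t : Finset κ) :
    ∃ D : ℝ, 0 ≤ D ∧ ∀ c : κ → 𝕜, ∑ k ∈ t, ‖c k‖ ≤ D * ‖∑ k ∈ t, c k • v k‖ := by
  have hker : (Fintype.linearCombination 𝕜 fun k : t => v k).ker = ⊥ :=
    LinearMap.ker_eq_bot.mpr (hv.comp _ Subtype.val_injective).fintypeLinearCombination_injective
  obtain ⟨K, -, hK⟩ := LinearMap.exists_antilipschitzWith _ hker
  refine ⟨t.card * K, by positivity, fun c => ?_⟩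
  have hsup := hK.le_mul_norm (map_zero _) fun k : t => c k
  rw [Fintype.linearCombination_apply, Finset.sum_coe_sort t fun k => c k • v k] at hsup
  calc ∑ k ∈ t, ‖c k‖ = ∑ k : t, ‖c k‖ := (Finset.sum_coe_sort t fun k => ‖c k‖).symm
    _ ≤ t.card * ‖fun k : t => c k‖ := by
        simpa using Pi.sum_norm_apply_le_norm fun k : t => c k
    _ ≤ t.card * K * ‖∑ k ∈ t, c k • v k‖ := by rw [mul_assoc]; gcongr

end NormedSpace

-- The phase `z` depends on `g i` alone, so terms with equal `g i` cannot cancel.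
lemma exists_sum_le_mul_norm_sum_phase_smul {ι κ E : Type*} [NormedAddCommGroup E]
    [NormedSpace ℂ E] {v : κ → E} (hv : LinearIndependent ℂ v) (s : Finset ι) (g : ι → κ)
    {m : ι → ℝ} (hm : ∀ i ∈ s, 0 ≤ m i) :
    ∃ D : ℝ, 0 ≤ D ∧ ∀ z : κ → ℂ, (∀ k, ‖z k‖ = 1) →
      ∑ i ∈ s, m i ≤ D * ‖∑ i ∈ s, (m i * z (g i)) • v (g i)‖ := by
  classical
  obtain ⟨D, hD0, hD⟩ := exists_sum_norm_le_mul_norm_sum_smul hv (s.image g)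
  refine ⟨D, hD0, fun z hz => ?_⟩
  let mass (k : κ) : ℝ := ∑ i ∈ s with g i = k, m i
  have norm_coeff (k : κ) : ‖(mass k : ℂ) * z k‖ = mass k := by
    rw [norm_mul, hz, mul_one, Complex.norm_of_nonneg]
    exact Finset.sum_nonneg fun i hi => hm i (Finset.filter_subset _ _ hi)
  have group_mass : ∑ k ∈ s.image g, mass k = ∑ i ∈ s, m i :=
    Finset.sum_fiberwise_of_maps_to (fun _ => Finset.mem_image_of_mem g) m
  have group_wave : ∑ k ∈ s.image g, ((mass k : ℂ) * z k) • v k =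
      ∑ i ∈ s, (m i * z (g i)) • v (g i) := by
    rw [← Finset.sum_fiberwise_of_maps_to fun _ => Finset.mem_image_of_mem g]
    refine Finset.sum_congr rfl fun k _ => ?_
    rw [Complex.ofReal_sum, Finset.sum_mul, Finset.sum_smul]
    refine Finset.sum_congr rfl fun i hi => ?_
    rw [(Finset.mem_filter.mp hi).2]
  simpa only [norm_coeff, group_mass, group_wave] using hD fun k => mass k * z k

/-- The exponential `e^{-a|ξ| + iγξ}`, as a function of `ξ`. -/
def dampedExp (a γ ξ : ℝ) : ℂ := Complex.exp (-(a * |ξ|) + γ * ξ * I)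

section DampedExp

variable {a b : ℝ}

lemma continuous_dampedExp (a γ : ℝ) : Continuous (dampedExp a γ) := by
  unfold dampedExp
  fun_prop

lemma conj_dampedExp_mul_dampedExp (a b γ δ ξ : ℝ) :
    starRingEnd ℂ (dampedExp a γ ξ) * dampedExp b δ ξ = dampedExp (a + b) (δ - γ) ξ := by
  simp only [dampedExp, ← Complex.exp_conj, ← Complex.exp_add, map_add, map_neg, map_mul,
    Complex.conj_I, Complex.conj_ofReal]
  congr 1
  push_cast
  ring

lemma eqOn_dampedExp_Ioi (a γ : ℝ) :
    EqOn (dampedExp a γ) (fun ξ => Complex.exp ((-a + γ * I) * ξ)) (Ioi 0) := fun ξ hξ => by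
  simp only [dampedExp, abs_of_pos (mem_Ioi.mp hξ)]
  ring_nf

lemma eqOn_dampedExp_Iic (a γ : ℝ) :
    EqOn (dampedExp a γ) (fun ξ => Complex.exp ((a + γ * I) * ξ)) (Iic 0) := fun ξ hξ => by
  simp only [dampedExp, abs_of_nonpos (mem_Iic.mp hξ), Complex.ofReal_neg]
  ring_nf

lemma integrableOn_dampedExp_Ioi (ha : 0 < a) (γ : ℝ) : IntegrableOn (dampedExp a γ) (Ioi 0) :=
  (integrableOn_congr_fun (eqOn_dampedExp_Ioi a γ) measurableSet_Ioi).mpr <|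
    integrableOn_exp_mul_complex_Ioi (by simpa) 0

lemma integrableOn_dampedExp_Iic (ha : 0 < a) (γ : ℝ) : IntegrableOn (dampedExp a γ) (Iic 0) :=
  (integrableOn_congr_fun (eqOn_dampedExp_Iic a γ) measurableSet_Iic).mpr <|
    integrableOn_exp_mul_complex_Iic (by simpa) 0

lemma integrable_dampedExp (ha : 0 < a) (γ : ℝ) : Integrable (dampedExp a γ) := by
  rw [← integrableOn_univ, ← Iic_union_Ioi (a := (0 : ℝ))]
  exact (integrableOn_dampedExp_Iic ha γ).union (integrableOn_dampedExp_Ioi ha γ)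

lemma integral_dampedExp (ha : 0 < a) (γ : ℝ) :
    ∫ ξ, dampedExp a γ ξ = (2 * a / (a ^ 2 + γ ^ 2) : ℝ) := by
  have re_neg : (-a + γ * I : ℂ).re < 0 := by simpa
  have re_pos : 0 < (a + γ * I : ℂ).re := by simpa
  have left_ne : (-a + γ * I : ℂ) ≠ 0 := fun h => by simp [h] at re_neg
  have right_ne : (a + γ * I : ℂ) ≠ 0 := fun h => by simp [h] at re_pos
  have factor : (a : ℂ) ^ 2 + γ ^ 2 = -((-a + γ * I) * (a + γ * I)) := by
    linear_combination γ ^ 2 * I_sq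
  rw [← intervalIntegral.integral_Iic_add_Ioi (integrableOn_dampedExp_Iic ha γ)
      (integrableOn_dampedExp_Ioi ha γ),
    setIntegral_congr_fun measurableSet_Iic (eqOn_dampedExp_Iic a γ),
    setIntegral_congr_fun measurableSet_Ioi (eqOn_dampedExp_Ioi a γ),
    integral_exp_mul_complex_Iic re_pos, integral_exp_mul_complex_Ioi re_neg]
  push_cast
  rw [factor, mul_zero, mul_zero, Complex.exp_zero]
  field_simp
  ring

lemma memLp_dampedExp (ha : 0 < a) (γ : ℝ) : MemLp (dampedExp a γ) 2 := by
  rw [memLp_two_iff_integrable_sq_norm (continuous_dampedExp a γ).aestronglyMeasurable]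
  refine (integrable_dampedExp (add_pos ha ha) (γ - γ)).norm.congr (.of_forall fun ξ => ?_)
  simp only [← conj_dampedExp_mul_dampedExp, norm_mul, RCLike.norm_conj, sq]

lemma linearIndependent_cexp_mul_I :
    LinearIndependent ℂ fun γ ξ : ℝ => Complex.exp (γ * ξ * I) := by
  let character (γ : ℝ) : Multiplicative ℝ →* ℂ :=
    { toFun := fun ξ => Complex.exp (γ * ξ.toAdd * I)
      map_one' := by simp
      map_mul' := fun ξ η => by
        rw [← Complex.exp_add, toAdd_mul]
        push_cast
        ring_nf }
  have character_injective : Function.Injective character := by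
    intro γ δ h
    by_contra hne
    have hsub : γ - δ ≠ 0 := sub_ne_zero.mpr hne
    have hval : Complex.exp (γ * (π / (γ - δ) : ℝ) * I) = Complex.exp (δ * (π / (γ - δ) : ℝ) * I) :=
      DFunLike.congr_fun h (Multiplicative.ofAdd (π / (γ - δ)))
    have hangle : (γ * (π / (γ - δ) : ℝ) * I : ℂ) = δ * (π / (γ - δ) : ℝ) * I + π * I := by
      have : γ * (π / (γ - δ)) = δ * (π / (γ - δ)) + π := by field_simp; ring
      rw [← add_mul]
      exact_mod_cast congrArg (fun r : ℝ => (r : ℂ) * I) this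
    rw [hangle, Complex.exp_add, Complex.exp_pi_mul_I, mul_neg_one] at hval
    exact Complex.exp_ne_zero _ (self_eq_neg.mp hval.symm)
  exact (linearIndependent_monoidHom (Multiplicative ℝ) ℂ).comp character character_injective

/-- The exponential `e^{-a|ξ| + iγξ}` with `a > 0`, as an element of `L²(ℝ)`. The Gram matrices of
these waves are the source of the Montgomery weight. -/
def dampedWave (ha : 0 < a) (γ : ℝ) : Lp ℂ 2 (volume : Measure ℝ) := (memLp_dampedExp ha γ).toLp

lemma inner_dampedWave (ha : 0 < a) (hb : 0 < b) (γ δ : ℝ) :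
    inner ℂ (dampedWave ha γ) (dampedWave hb δ) =
      (2 * (a + b) / ((a + b) ^ 2 + (δ - γ) ^ 2) : ℝ) := by
  rw [← integral_dampedExp (add_pos ha hb), L2.inner_def]
  refine integral_congr_ae ?_
  filter_upwards [(memLp_dampedExp ha γ).coeFn_toLp, (memLp_dampedExp hb δ).coeFn_toLp]
    with ξ hγ hδ
  rw [dampedWave, dampedWave, hγ, hδ, ← conj_dampedExp_mul_dampedExp, RCLike.inner_apply,
    mul_comm]

lemma norm_dampedWave_sq (ha : 0 < a) (γ : ℝ) : ‖dampedWave ha γ‖ ^ 2 = a⁻¹ := by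
  rw [← inner_self_eq_norm_sq (𝕜 := ℂ), inner_dampedWave, RCLike.re_to_complex, Complex.ofReal_re]
  field_simp
  ring

lemma coeFn_sum_smul_dampedWave (ha : 0 < a) (s : Finset ℝ) (c : ℝ → ℂ) :
    ⇑(∑ γ ∈ s, c γ • dampedWave ha γ) =ᵐ[volume] fun ξ => ∑ γ ∈ s, c γ * dampedExp a γ ξ := by
  have summand_ae : ∀ᵐ ξ, ∀ γ ∈ s, (c γ • dampedWave ha γ) ξ = c γ * dampedExp a γ ξ :=
    s.eventually_all.mpr fun γ _ => by
      filter_upwards [Lp.coeFn_smul (c γ) (dampedWave ha γ), (memLp_dampedExp ha γ).coeFn_toLp]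
        with ξ hsmul hwave
      rw [hsmul, Pi.smul_apply, dampedWave, hwave, smul_eq_mul]
  filter_upwards [summand_ae, Lp.coeFn_fun_finsetSum s fun γ => c γ • dampedWave ha γ]
    with ξ hsummand hsum
  rw [hsum, Finset.sum_congr rfl hsummand]

lemma linearIndependent_dampedWave (ha : 0 < a) : LinearIndependent ℂ (dampedWave ha) := by
  rw [linearIndependent_iff']
  intro s c hc
  refine linearIndependent_iff'.mp linearIndependent_cexp_mul_I s c (funext fun ξ => ?_)
  have sum_ae_zero : (fun ξ => ∑ γ ∈ s, c γ * dampedExp a γ ξ) =ᵐ[volume] 0 :=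
    (coeFn_sum_smul_dampedWave ha s c).symm.trans (hc ▸ Lp.coeFn_zero ℂ 2 volume)
  have sum_zero : (fun ξ => ∑ γ ∈ s, c γ * dampedExp a γ ξ) = 0 :=
    (Continuous.ae_eq_iff_eq volume (continuous_finsetSum s fun γ _ =>
      continuous_const.mul (continuous_dampedExp a γ)) continuous_zero).mp sum_ae_zero
  have factor : Complex.exp (-(a * |ξ|)) * ∑ γ ∈ s, c γ * Complex.exp (γ * ξ * I) = 0 := by
    rw [Finset.mul_sum, ← Pi.zero_apply (M := fun _ => ℂ) ξ, ← sum_zero]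
    refine Finset.sum_congr rfl fun γ _ => ?_
    rw [dampedExp, Complex.exp_add]
    ring
  simpa using factor

end DampedExp

section SmoothedSum

variable {ι : Type*}

lemma norm_sum_smoothed_le (s : Finset ι) (γ : ι → ℝ) (c : ι → ℂ) {A : ℝ} (hA : 2 ≤ A) :
    ‖∑ i ∈ s, (A ^ 2 / (A ^ 2 + γ i ^ 2)) • c i‖ ≤
      √A * ‖∑ i ∈ s, c i • dampedWave one_pos (γ i)‖ := by
  have hA1 : 0 < A - 1 := by linarith
  set f := ∑ i ∈ s, c i • dampedWave one_pos (γ i)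
  have pairing : ∑ i ∈ s, (A ^ 2 / (A ^ 2 + γ i ^ 2)) • c i =
      (A / 2) • inner ℂ (dampedWave hA1 0) f := by
    rw [inner_sum, Finset.smul_sum]
    refine Finset.sum_congr rfl fun i _ => ?_
    rw [inner_smul_right, inner_dampedWave, sub_add_cancel, sub_zero, mul_comm,
      ← Complex.real_smul, smul_smul]
    congr 1
    ring
  have norm_kernel : A / 2 * ‖dampedWave hA1 0‖ ≤ √A := by
    refine Real.le_sqrt_of_sq_le ?_
    rw [mul_pow, norm_dampedWave_sq, ← div_eq_mul_inv, div_le_iff₀ hA1]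
    nlinarith
  calc ‖∑ i ∈ s, (A ^ 2 / (A ^ 2 + γ i ^ 2)) • c i‖
      = A / 2 * ‖inner ℂ (dampedWave hA1 0) f‖ := by
        rw [pairing, norm_smul, Real.norm_of_nonneg (by positivity)]
    _ ≤ A / 2 * (‖dampedWave hA1 0‖ * ‖f‖) := by gcongr; exact norm_inner_le_norm _ _
    _ ≤ √A * ‖f‖ := by rw [← mul_assoc]; gcongr

lemma norm_sum_le_three_mul_of_norm_sum_smoothed_le {E : Type*} [NormedAddCommGroup E]
    [NormedSpace ℝ E] [CompleteSpace E] {s : Finset ι} {γ : ι → ℝ} {c : ι → E} {T M : ℝ}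
    (hT : 0 < T) (hγ : ∀ i ∈ s, γ i ∈ Ioc 0 T)
    (hM : ∀ u, ‖∑ i ∈ s with γ i ≤ u, (T ^ 2 / (T ^ 2 + γ i ^ 2)) • c i‖ ≤ M) :
    ‖∑ i ∈ s, c i‖ ≤ 3 * M := by
  set a : ι → E := fun i => (T ^ 2 / (T ^ 2 + γ i ^ 2)) • c i
  set w : ι → ℝ := fun i => 1 - γ i ^ 2 / T ^ 2
  have hw (i : ι) (hi : i ∈ s) : w i ∈ Icc 0 1 := by
    have : γ i ^ 2 ≤ T ^ 2 := pow_le_pow_left₀ (hγ i hi).1.le (hγ i hi).2 2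
    exact ⟨sub_nonneg.mpr (div_le_one_of_le₀ this (by positivity)), sub_le_self _ (by positivity)⟩
  have weighted_le : ‖∑ i ∈ s, w i • a i‖ ≤ 1 * M := by
    refine norm_sum_smul_le_of_norm_sum_filter_le zero_le_one hw fun u => ?_
    convert hM √((1 - u) * T ^ 2) using 3
    refine Finset.filter_congr fun i hi => ?_
    rw [Real.le_sqrt' (hγ i hi).1, ← div_le_iff₀ (by positivity), le_sub_comm]
  have total_le : ‖∑ i ∈ s, a i‖ ≤ M := by
    simpa only [Finset.filter_true_of_mem fun i hi => (hγ i hi).2] using hM T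
  have unsmooth : ∑ i ∈ s, c i = (2 : ℝ) • ∑ i ∈ s, a i - ∑ i ∈ s, w i • a i := by
    rw [Finset.smul_sum, ← Finset.sum_sub_distrib]
    refine Finset.sum_congr rfl fun i _ => ?_
    rw [← sub_smul, smul_smul, eq_comm]
    convert one_smul ℝ (c i) using 2
    simp only [w]
    field_simp
    ring
  calc ‖∑ i ∈ s, c i‖ ≤ 2 * ‖∑ i ∈ s, a i‖ + ‖∑ i ∈ s, w i • a i‖ := by
        rw [unsmooth]
        exact (norm_sub_le _ _).trans_eq (by rw [norm_smul, Real.norm_two])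
    _ ≤ 3 * M := by linarith

end SmoothedSum

section Zeros

variable (x : ℝ)

lemma finite_zerosUpTo (T : ℝ) : (zerosUpTo T).Finite := by
  have strip_compact : IsCompact (Icc (0 : ℝ) 1 ×ℂ Icc (0 : ℝ) T) :=
    isCompact_Icc.reProdIm isCompact_Icc
  refine strip_compact.inter_riemannZetaZeros_finite.subset ?_
  rintro ρ ⟨⟨hzero, hre_pos, hre_lt⟩, him_pos, him_le⟩
  exact ⟨⟨⟨hre_pos.le, hre_lt.le⟩, ⟨him_pos.le, him_le⟩⟩, hzero⟩

instance instFintypeZerosUpTo (T : ℝ) : Fintype (zerosUpTo T) := (finite_zerosUpTo T).fintype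

lemma monotone_toFinset_zerosUpTo : Monotone fun T => (zerosUpTo T).toFinset := fun _ _ h =>
  Set.toFinset_mono fun _ hρ => ⟨hρ.1, hρ.2.1, hρ.2.2.trans h⟩

lemma filter_im_le_zerosUpTo (T u : ℝ) :
    {ρ ∈ (zerosUpTo T).toFinset | ρ.im ≤ u} = (zerosUpTo (min u T)).toFinset := by
  ext ρ
  rw [Finset.mem_filter, Set.mem_toFinset, Set.mem_toFinset]
  change (_ ∧ _ ∧ _) ∧ _ ↔ _ ∧ _ ∧ _ ≤ min u T
  rw [le_min_iff]
  tauto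

lemma monotone_sum_zetaMult :
    Monotone fun T => ∑ ρ ∈ (zerosUpTo T).toFinset, (zetaMult ρ : ℝ) := fun _ _ h =>
  Finset.sum_le_sum_of_subset_of_nonneg (monotone_toFinset_zerosUpTo h)
    fun _ _ _ => Nat.cast_nonneg _

/-- The term `m(ρ) x^{iγ}` of the exponential sum over zeros. -/
def zeroTerm (x : ℝ) (ρ : ℂ) : ℂ := zetaMult ρ * Complex.exp (I * ρ.im * Real.log x)

/-- The wave `f_T = ∑_{0 < γ ≤ T} m(ρ) x^{iγ} e^{-|ξ| + iγξ}`, whose squared norm is `F(x, T)`. -/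
def zeroWave (x T : ℝ) : Lp ℂ 2 (volume : Measure ℝ) :=
  ∑ ρ ∈ (zerosUpTo T).toFinset, zeroTerm x ρ • dampedWave one_pos ρ.im

lemma norm_cexp_I_mul_mul (r s : ℝ) : ‖Complex.exp (I * r * s)‖ = 1 := by
  rw [mul_assoc, ← Complex.ofReal_mul, mul_comm, Complex.norm_exp_ofReal_mul_I]

lemma norm_zeroTerm (ρ : ℂ) : ‖zeroTerm x ρ‖ = zetaMult ρ := by
  rw [zeroTerm, norm_mul, norm_cexp_I_mul_mul, mul_one, Complex.norm_natCast]

lemma zeroTerm_mul_conj_zeroTerm (ρ σ : ℂ) :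
    zeroTerm x ρ * starRingEnd ℂ (zeroTerm x σ) =
      zetaMult ρ * zetaMult σ * Complex.exp (I * (ρ.im - σ.im : ℝ) * Real.log x) := by
  simp only [zeroTerm, map_mul, map_natCast, ← Complex.exp_conj, Complex.conj_I,
    Complex.conj_ofReal]
  rw [mul_mul_mul_comm, ← Complex.exp_add]
  push_cast
  ring_nf

lemma Fxt_eq_norm_zeroWave_sq (T : ℝ) : Fxt x T = (‖zeroWave x T‖ ^ 2 : ℝ) := by
  have norm_sq_eq_inner :
      ((‖zeroWave x T‖ ^ 2 : ℝ) : ℂ) = inner ℂ (zeroWave x T) (zeroWave x T) := by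
    rw [inner_self_eq_norm_sq_to_K, Complex.ofReal_pow, RCLike.ofReal_eq_complex_ofReal]
  rw [norm_sq_eq_inner, zeroWave, inner_sum, Fxt, tsum_fintype, Fintype.sum_prod_type,
    ← Finset.sum_set_coe]
  refine Finset.sum_congr rfl fun ρ _ => ?_
  rw [sum_inner, ← Finset.sum_set_coe]
  refine Finset.sum_congr rfl fun σ _ => ?_
  rw [inner_smul_left, inner_smul_right, inner_dampedWave, ← mul_assoc,
    mul_comm (starRingEnd ℂ _), zeroTerm_mul_conj_zeroTerm]
  norm_num

lemma norm_zeroWave_le_sum_zetaMult (T : ℝ) :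
    ‖zeroWave x T‖ ≤ ∑ ρ ∈ (zerosUpTo T).toFinset, (zetaMult ρ : ℝ) := by
  have norm_wave (ρ : ℂ) : ‖dampedWave one_pos ρ.im‖ = 1 := by
    rw [← sq_eq_sq₀ (norm_nonneg _) zero_le_one, norm_dampedWave_sq, inv_one, one_pow]
  refine (norm_sum_le _ _).trans_eq (Finset.sum_congr rfl fun ρ _ => ?_)
  rw [norm_smul, norm_zeroTerm, norm_wave, mul_one]

lemma norm_zeroWave_le_sqrt_sSup {t T : ℝ} (ht : t ∈ Icc 2 T) :
    ‖zeroWave x t‖ ≤ √(sSup ((fun t => (Fxt x t).re) '' Icc 2 T)) := by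
  have bddAbove : BddAbove ((fun t => (Fxt x t).re) '' Icc 2 T) := by
    refine ⟨(∑ ρ ∈ (zerosUpTo T).toFinset, (zetaMult ρ : ℝ)) ^ 2, ?_⟩
    rintro _ ⟨u, hu, rfl⟩
    simp only [Fxt_eq_norm_zeroWave_sq, Complex.ofReal_re]
    gcongr
    exact (norm_zeroWave_le_sum_zetaMult x u).trans (monotone_sum_zetaMult hu.2)
  refine Real.le_sqrt_of_sq_le (le_csSup bddAbove ⟨t, ht, ?_⟩)
  simp only [Fxt_eq_norm_zeroWave_sq, Complex.ofReal_re]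

lemma exists_sum_zetaMult_le_mul_norm_zeroWave (T : ℝ) :
    ∃ D : ℝ, 0 ≤ D ∧ ∀ x : ℝ,
      ∑ ρ ∈ (zerosUpTo T).toFinset, (zetaMult ρ : ℝ) ≤ D * ‖zeroWave x T‖ := by
  obtain ⟨D, hD0, hD⟩ := exists_sum_le_mul_norm_sum_phase_smul
    (linearIndependent_dampedWave one_pos) (zerosUpTo T).toFinset Complex.im
    (m := fun ρ => zetaMult ρ) fun _ _ => Nat.cast_nonneg _
  refine ⟨D, hD0, fun x => ?_⟩
  simpa only [Complex.ofReal_natCast, zeroWave, zeroTerm] using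
    hD (fun γ => Complex.exp (I * γ * Real.log x)) fun γ => norm_cexp_I_mul_mul _ _

lemma norm_sum_smoothed_zeroTerm_le_sum_zetaMult (A t : ℝ) :
    ‖∑ ρ ∈ (zerosUpTo t).toFinset, (A ^ 2 / (A ^ 2 + ρ.im ^ 2)) • zeroTerm x ρ‖ ≤
      ∑ ρ ∈ (zerosUpTo t).toFinset, (zetaMult ρ : ℝ) := by
  refine norm_sum_le_of_le _ fun ρ _ => ?_
  rw [norm_smul, norm_zeroTerm, Real.norm_of_nonneg (by positivity)]
  exact mul_le_of_le_one_left (Nat.cast_nonneg _) <|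
    div_le_one_of_le₀ (le_add_of_nonneg_right (sq_nonneg _)) (by positivity)

lemma norm_sum_smoothed_zeroTerm_le {D t T : ℝ} (hT : 2 ≤ T) (hD0 : 0 ≤ D)
    (hD : ∑ ρ ∈ (zerosUpTo 2).toFinset, (zetaMult ρ : ℝ) ≤ D * ‖zeroWave x 2‖) (ht : t ≤ T) :
    ‖∑ ρ ∈ (zerosUpTo t).toFinset, (T ^ 2 / (T ^ 2 + ρ.im ^ 2)) • zeroTerm x ρ‖ ≤
      (D + 1) * √(T * sSup ((fun t => (Fxt x t).re) '' Icc 2 T)) := by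
  have hT0 : 0 ≤ T := zero_le_two.trans hT
  set V := sSup ((fun t => (Fxt x t).re) '' Icc 2 T)
  have sqrt_le : √V ≤ √(T * V) := by
    rw [Real.sqrt_mul hT0]
    exact le_mul_of_one_le_left (Real.sqrt_nonneg V) (Real.one_le_sqrt.mpr (by linarith))
  rcases le_total 2 t with h2t | ht2
  · calc _ ≤ √T * ‖zeroWave x t‖ := norm_sum_smoothed_le _ _ _ hT
      _ ≤ √T * √V := by gcongr; exact norm_zeroWave_le_sqrt_sSup x ⟨h2t, ht⟩
      _ = 1 * √(T * V) := by rw [Real.sqrt_mul hT0, one_mul]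
      _ ≤ (D + 1) * √(T * V) := by gcongr; linarith
  · calc _ ≤ ∑ ρ ∈ (zerosUpTo t).toFinset, (zetaMult ρ : ℝ) :=
          norm_sum_smoothed_zeroTerm_le_sum_zetaMult x T t
      _ ≤ ∑ ρ ∈ (zerosUpTo 2).toFinset, (zetaMult ρ : ℝ) := monotone_sum_zetaMult ht2
      _ ≤ D * √V := hD.trans <| by gcongr; exact norm_zeroWave_le_sqrt_sSup x ⟨le_rfl, hT⟩
      _ ≤ (D + 1) * √(T * V) := by gcongr; linarith

end Zeros

theorem heath_brown_zero_sum_bound_general :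
    ∃ C : ℝ, 0 < C ∧ ∀ T : ℝ, 2 ≤ T → ∀ x : ℝ, 0 < x →
      ‖∑' ρ : zerosUpTo T,
          (zetaMult (ρ : ℂ) : ℂ) *
            Complex.exp (Complex.I * (((ρ : ℂ).im : ℝ) : ℂ) * (Real.log x : ℂ))‖
        ≤ C * Real.sqrt (T * sSup ((fun t => (Fxt x t).re) '' Set.Icc 2 T)) := by
  obtain ⟨D, hD0, hD⟩ := exists_sum_zetaMult_le_mul_norm_zeroWave 2
  refine ⟨3 * (D + 1), by positivity, fun T hT x _ => ?_⟩
  have sum_eq : ∑' ρ : zerosUpTo T, zeroTerm x ρ = ∑ ρ ∈ (zerosUpTo T).toFinset, zeroTerm x ρ := by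
    rw [tsum_fintype, Finset.sum_set_coe]
  change ‖∑' ρ : zerosUpTo T, zeroTerm x ρ‖ ≤ _
  rw [sum_eq, mul_assoc]
  refine norm_sum_le_three_mul_of_norm_sum_smoothed_le (γ := Complex.im) (by linarith)
    (fun ρ hρ => (Set.mem_toFinset.mp hρ).2) fun u => ?_
  rw [filter_im_le_zerosUpTo]
  exact norm_sum_smoothed_zeroTerm_le x hT hD0 (hD x) (min_le_right u T)

/-- Heath-Brown's bound: assuming RH, `|∑_{0<γ≤T} x^{iγ}| ≪ √(T · max_{t≤T} F(x,t))`,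
the sum over ordinates of non-trivial zeros counted with multiplicity. -/
theorem heath_brown_zero_sum_bound (hRH : RiemannHypothesis) :
    ∃ C : ℝ, 0 < C ∧ ∀ T : ℝ, 2 ≤ T → ∀ x : ℝ, 0 < x →
      ‖∑' ρ : zerosUpTo T,
          (zetaMult (ρ : ℂ) : ℂ) *
            Complex.exp (Complex.I * (((ρ : ℂ).im : ℝ) : ℂ) * (Real.log x : ℂ))‖
        ≤ C * Real.sqrt (T * sSup ((fun t => (Fxt x t).re) '' Set.Icc 2 T)) :=
  heath_brown_zero_sum_bound_general
end
end

section
/- Assume the Riemann Hypothesis. Then ψ(x) = x + O( x^{1/2} (log x)² ) for x ≥ 2, i.e. there is an absolute constant C with |ψ(x) − x| ≤ C x^{1/2} (log x)² for all x ≥ 2. -/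
open Filter Real

noncomputable section

/-- The Chebyshev function `ψ(x) = ∑_{n ≤ x} Λ(n)`. -/
def chebyshevPsi (x : ℝ) : ℝ := ∑ n ∈ Finset.Iic ⌊x⌋₊, ArithmeticFunction.vonMangoldt n

/-! On RH the function `ξ'/ξ` has nonnegative real part on `re s > 1 / 2`. This is usually read off
the Hadamard product; here it comes from the Phragmén–Lindelöf principle, applied on the half-plane
`re s ≥ 1 / 2` to `ξ (s - h) / ξ (s + h)` with small real `h > 0`, whose denominator stays at
distance `h` from the zeros: the functional equation makes the quotient unimodular on the boundary,
hence it is bounded by one inside, and `h → 0` gives the sign.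

Positivity turns averages into absolute bounds: integrating `ξ'/ξ` against a sine kernel around
rectangles whose left side is the line `re s = σ` shows that the mass of `re (ξ'/ξ)` on each unit
segment of that line is `O(log (2 + |t|))`, uniformly as `σ → 1 / 2`.

Finally, `-ζ'/ζ(s) - 1 / (s - 1)` is an archimedean term of logarithmic size minus `ξ'/ξ`.
A smoothed explicit formula for `ψ`, obtained on `re s > 1` from the Dirichlet series and moved to
`re s = 1 / 2 + ε` by analytic continuation, bounds the error of `ψ` smoothed over a ramp of
logarithmic width `1 / x` by `O(x ^ (1 / 2 + 2 * ε) / ε ^ 2)`. The choice `ε = 1 / (4 * log x)`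
gives the theorem. -/

namespace VonKoch

open Complex Set Topology MeasureTheory

open scoped Interval ArithmeticFunction.vonMangoldt

theorem rpow_le_rpow_add_rpow {x a b c : ℝ} (hx : 0 < x) (hac : a ≤ c) (hcb : c ≤ b) :
    x ^ c ≤ x ^ a + x ^ b := by
  rcases le_total x 1 with h | h
  · exact le_add_of_le_of_nonneg (Real.rpow_le_rpow_of_exponent_ge hx h hac) (by positivity)
  · exact le_add_of_nonneg_of_le (by positivity) (Real.rpow_le_rpow_of_exponent_le h hcb)

theorem tendsto_deriv_of_norm_le {ι E : Type*} [NormedAddCommGroup E] [NormedSpace ℂ E]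
    [CompleteSpace E] {l : Filter ι} [l.IsCountablyGenerated] {F : ι → ℂ → E} {f : ℂ → E}
    {U : Set ℂ} {c : ℂ} {r M : ℝ} (hU : IsOpen U) (hr : 0 < r) (hsub : Metric.closedBall c r ⊆ U)
    (hF : ∀ᶠ n in l, DifferentiableOn ℂ (F n) U) (hf : DifferentiableOn ℂ f U)
    (hM : ∀ᶠ n in l, ∀ w ∈ Metric.sphere c r, ‖F n w‖ ≤ M)
    (hlim : ∀ w ∈ Metric.sphere c r, Tendsto (F · w) l (𝓝 (f w))) :
    Tendsto (fun n ↦ deriv (F n) c) l (𝓝 (deriv f c)) := by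
  have hmem (θ : ℝ) : circleMap c r θ ∈ Metric.sphere c r := circleMap_mem_sphere c hr.le θ
  rw [← cderiv_eq_deriv hU hf hr hsub]
  refine Tendsto.congr' (hF.mono fun n hn ↦ cderiv_eq_deriv hU hn hr hsub) ?_
  refine Tendsto.const_smul ?_ _
  refine intervalIntegral.tendsto_integral_filter_of_dominated_convergence
    (fun _ ↦ r * ((r ^ 2)⁻¹ * M)) ?_ ?_ intervalIntegrable_const
    (.of_forall fun θ _ ↦ ((hlim _ (hmem θ)).const_smul _).const_smul _)
  · filter_upwards [hF] with n hn
    have hcont : ContinuousOn (fun w ↦ ((w - c) ^ 2)⁻¹ • F n w) (Metric.sphere c r) := by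
      refine ContinuousOn.smul (ContinuousOn.inv₀ (by fun_prop) fun w hw ↦ ?_)
        (hn.continuousOn.mono (Metric.sphere_subset_closedBall.trans hsub))
      exact pow_ne_zero _ (sub_ne_zero.mpr (Metric.ne_of_mem_sphere hw hr.ne'))
    have hderiv : Continuous (deriv (circleMap c r)) :=
      (contDiff_circleMap c r (n := 1)).continuous_deriv le_rfl
    exact (hderiv.smul
      (hcont.comp_continuous (continuous_circleMap c r) hmem)).aestronglyMeasurable
  · filter_upwards [hM] with n hn
    refine .of_forall fun θ _ ↦ ?_
    simp only [norm_smul, norm_inv, norm_pow, deriv_circleMap, norm_mul, norm_circleMap_zero,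
      norm_I, mul_one, circleMap_sub_center, abs_of_pos hr]
    gcongr
    exact hn _ (hmem θ)

section Digamma

theorem norm_GammaSeq_le {a b : ℝ} {w : ℂ} (ha : 0 < a) (haw : a ≤ w.re) (hwb : w.re ≤ b) {n : ℕ}
    (hn : n ≠ 0) : ‖Complex.GammaSeq w n‖ ≤ Real.Gamma a + Real.Gamma b := by
  have hb : 0 < b := by linarith
  have hn₀ : (0 : ℝ) ≤ n := Nat.cast_nonneg n
  have hint := (Real.GammaIntegral_convergent ha).add (Real.GammaIntegral_convergent hb)
  rw [Complex.GammaSeq_eq_approx_Gamma_integral (by linarith) hn, Real.Gamma_eq_integral ha,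
    Real.Gamma_eq_integral hb, ← integral_add (Real.GammaIntegral_convergent ha)
      (Real.GammaIntegral_convergent hb)]
  have hsub : Ioc (0 : ℝ) n ⊆ Ioi 0 := Ioc_subset_Ioi_self
  refine (intervalIntegral.norm_integral_le_of_norm_le hn₀ (.of_forall fun x hx ↦ ?_)
    ((intervalIntegrable_iff_integrableOn_Ioc_of_le hn₀).mpr (hint.mono_set hsub))).trans ?_
  · have hx₀ : 0 < x := hx.1
    have hrpow : x ^ (w.re - 1) ≤ x ^ (a - 1) + x ^ (b - 1) :=
      rpow_le_rpow_add_rpow hx₀ (by linarith) (by linarith)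
    rw [norm_mul, Complex.norm_of_nonneg (pow_nonneg
        (sub_nonneg.mpr <| div_le_one_of_le₀ hx.2 hn₀) _), norm_cpow_eq_rpow_re_of_pos hx₀,
      sub_re, one_re, Pi.add_apply, ← mul_add]
    gcongr
    exact one_sub_div_pow_le_exp_neg hx.2
  · rw [intervalIntegral.integral_of_le hn₀]
    refine setIntegral_mono_set hint ?_ hsub.eventuallyLE
    filter_upwards [ae_restrict_mem measurableSet_Ioi] with x hx
    have : 0 < x := hx
    exact add_nonneg (by positivity) (by positivity)

variable {s : ℂ}

theorem ne_neg_natCast_of_re_pos (hs : 0 < s.re) (m : ℕ) : s ≠ -m := by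
  rintro rfl
  have : (0 : ℝ) ≤ m := m.cast_nonneg
  simp only [neg_re, natCast_re] at hs
  linarith

theorem add_natCast_ne_zero_of_re_pos (hs : 0 < s.re) (m : ℕ) : s + m ≠ 0 :=
  fun h ↦ ne_neg_natCast_of_re_pos hs m (eq_neg_of_add_eq_zero_left h)

theorem prod_add_natCast_ne_zero_of_re_pos (hs : 0 < s.re) (n : ℕ) :
    ∏ j ∈ Finset.range n, (s + j) ≠ 0 :=
  Finset.prod_ne_zero_iff.mpr fun j _ ↦ add_natCast_ne_zero_of_re_pos hs j

theorem natCast_cpow_mul_factorial_ne_zero (s : ℂ) {n : ℕ} (hn : n ≠ 0) :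
    (n : ℂ) ^ s * n.factorial ≠ 0 :=
  mul_ne_zero (by simp [cpow_eq_zero_iff, hn]) (by exact_mod_cast n.factorial_ne_zero)

theorem differentiableAt_GammaSeq (hs : 0 < s.re) {n : ℕ} (hn : n ≠ 0) :
    DifferentiableAt ℂ (Complex.GammaSeq · n) s :=
  ((differentiableAt_id.const_cpow (Or.inl (Nat.cast_ne_zero.mpr hn))).mul_const _).fun_div
    (DifferentiableAt.fun_finsetProd fun _ _ ↦ by fun_prop)
    (prod_add_natCast_ne_zero_of_re_pos hs (n + 1))

theorem logDeriv_GammaSeq (hs : 0 < s.re) {n : ℕ} (hn : n ≠ 0) :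
    logDeriv (Complex.GammaSeq · n) s =
      Real.log n - ∑ j ∈ Finset.range (n + 1), 1 / (s + j) := by
  have hn₀ : (n : ℂ) ≠ 0 := Nat.cast_ne_zero.mpr hn
  have hpow : HasDerivAt (fun w : ℂ ↦ (n : ℂ) ^ w) ((n : ℂ) ^ s * Complex.log n) s := by
    simpa using (hasDerivAt_id s).const_cpow (Or.inl hn₀)
  have hfac : (n.factorial : ℂ) ≠ 0 := by exact_mod_cast n.factorial_ne_zero
  have hpow₀ : (n : ℂ) ^ s ≠ 0 := by simp [cpow_eq_zero_iff, hn]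
  unfold Complex.GammaSeq
  rw [logDeriv_div s (natCast_cpow_mul_factorial_ne_zero s hn)
    (prod_add_natCast_ne_zero_of_re_pos hs (n + 1)) (hpow.differentiableAt.mul_const _)
    (DifferentiableAt.fun_finsetProd fun _ _ ↦ by fun_prop), logDeriv_mul_const _ _ hfac,
    logDeriv_prod (fun j _ ↦ add_natCast_ne_zero_of_re_pos hs j) (fun _ _ ↦ by fun_prop)]
  congr 1
  · rw [logDeriv_apply, hpow.deriv, mul_div_cancel_left₀ _ hpow₀, natCast_log]
  · simp [logDeriv_apply]

theorem tendsto_deriv_GammaSeq (hs : 0 < s.re) :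
    Tendsto (fun n ↦ deriv (Complex.GammaSeq · n) s) atTop (𝓝 (deriv Complex.Gamma s)) := by
  have hre (w : ℂ) (hw : w ∈ Metric.closedBall s (s.re / 2)) :
      s.re / 2 ≤ w.re ∧ w.re ≤ 2 * s.re := by
    have hdist : |(w - s).re| ≤ s.re / 2 :=
      (abs_re_le_norm _).trans (by simpa [dist_eq_norm] using hw)
    rw [abs_le, sub_re] at hdist
    constructor <;> linarith
  refine tendsto_deriv_of_norm_le (isOpen_lt continuous_const continuous_re) (half_pos hs)
    (U := {w : ℂ | 0 < w.re}) (M := Real.Gamma (s.re / 2) + Real.Gamma (2 * s.re))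
    (fun w hw ↦ (half_pos hs).trans_le (hre w hw).1) ?_ ?_ ?_
    fun w _ ↦ Complex.GammaSeq_tendsto_Gamma w
  · filter_upwards [eventually_ne_atTop 0] with n hn w hw
      using (differentiableAt_GammaSeq hw hn).differentiableWithinAt
  · exact fun w hw ↦
      (differentiableAt_Gamma w (ne_neg_natCast_of_re_pos hw)).differentiableWithinAt
  · filter_upwards [eventually_ne_atTop 0] with n hn w hw
    have hw' := hre w (Metric.sphere_subset_closedBall hw)
    exact norm_GammaSeq_le (half_pos hs) hw'.1 hw'.2 hn

theorem tendsto_log_sub_sum_digamma (hs : 0 < s.re) :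
    Tendsto (fun n : ℕ ↦ (Real.log n : ℂ) - ∑ j ∈ Finset.range (n + 1), 1 / (s + j)) atTop
      (𝓝 (digamma s)) := by
  refine Tendsto.congr' ?_ ((tendsto_deriv_GammaSeq hs).div (Complex.GammaSeq_tendsto_Gamma s)
    (Gamma_ne_zero_of_re_pos hs))
  filter_upwards [eventually_ne_atTop 0] with n hn
  rw [← logDeriv_GammaSeq hs hn, logDeriv_apply]
  rfl

theorem norm_inv_sub_inv_add_natCast (hs : 0 < s.re) (j : ℕ) :
    ‖1 / ((1 : ℂ) + j) - 1 / (s + j)‖ = ‖s - 1‖ / ((1 + j) * ‖s + j‖) := by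
  have hnorm : ‖(1 : ℂ) + j‖ = 1 + j := by
    rw [← Nat.cast_one, ← Nat.cast_add, Complex.norm_natCast]
    push_cast
    rfl
  rw [div_sub_div _ _ (add_natCast_ne_zero_of_re_pos (by simp) j)
    (add_natCast_ne_zero_of_re_pos hs j), norm_div, norm_mul, hnorm]
  congr 2
  ring

theorem norm_le_norm_add_natCast (hs : 0 ≤ s.re) (j : ℕ) : ‖s‖ ≤ ‖s + j‖ := by
  rw [norm_def, norm_def]
  refine Real.sqrt_le_sqrt ?_
  simp only [normSq_apply, add_re, natCast_re, add_im, natCast_im, add_zero]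
  nlinarith [j.cast_nonneg (α := ℝ)]

theorem norm_inv_sub_inv_le_head (hs : 1 / 4 ≤ s.re) (j : ℕ) :
    ‖1 / ((1 : ℂ) + j) - 1 / (s + j)‖ ≤ 5 * (1 / (1 + j)) := by
  have hnorm : 1 / 4 ≤ ‖s‖ := hs.trans (re_le_norm s)
  have hge := norm_le_norm_add_natCast (by linarith : 0 ≤ s.re) j
  have hsub : ‖s - 1‖ ≤ ‖s‖ + 1 := by simpa using norm_sub_le s 1
  have hpos : 0 < ‖s + j‖ := by linarith
  rw [norm_inv_sub_inv_add_natCast (by linarith), div_le_iff₀ (by positivity),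
    show 5 * (1 / (1 + (j : ℝ))) * ((1 + j) * ‖s + j‖) = 5 * ‖s + j‖ by field_simp]
  linarith

theorem norm_inv_sub_inv_le_tail (hs : 0 < s.re) {N j : ℕ} (hN : ‖s‖ + 1 ≤ N) (hj : N ≤ j) :
    ‖1 / ((1 : ℂ) + j) - 1 / (s + j)‖ ≤ N * (1 / j - 1 / (j + 1)) := by
  have hNj : (N : ℝ) ≤ j := Nat.cast_le.mpr hj
  have hj₀ : (0 : ℝ) < j := by linarith [norm_nonneg s]
  have hsub : ‖s - 1‖ ≤ ‖s‖ + 1 := by simpa using norm_sub_le s 1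
  have hre : (j : ℝ) ≤ ‖s + j‖ := by
    have := re_le_norm (s + j)
    simp only [add_re, natCast_re] at this
    linarith
  rw [norm_inv_sub_inv_add_natCast hs,
    show (N : ℝ) * (1 / j - 1 / (j + 1)) = N / ((1 + j) * j) by field_simp; ring]
  gcongr
  linarith

theorem sum_one_div_one_add_eq_harmonic (n : ℕ) :
    ∑ j ∈ Finset.range n, 1 / (1 + (j : ℝ)) = harmonic n := by
  simp [harmonic, add_comm]

theorem sum_norm_inv_sub_inv_le (hs : 1 / 4 ≤ s.re) (m : ℕ) :
    ∑ j ∈ Finset.range m, ‖1 / ((1 : ℂ) + j) - 1 / (s + j)‖ ≤ 6 + 5 * Real.log (2 + ‖s‖) := by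
  set N : ℕ := ⌈‖s‖⌉₊ + 1 with hN
  have hN_ge : ‖s‖ + 1 ≤ N := by rw [hN]; push_cast; linarith [Nat.le_ceil ‖s‖]
  have hN_le : (N : ℝ) ≤ 2 + ‖s‖ := by
    rw [hN]; push_cast; linarith [Nat.ceil_lt_add_one (norm_nonneg s)]
  have hN₀ : (0 : ℝ) < N := by positivity
  have hhead : ∑ j ∈ Finset.range N, ‖1 / ((1 : ℂ) + j) - 1 / (s + j)‖ ≤
      5 + 5 * Real.log (2 + ‖s‖) := calc
    _ ≤ ∑ j ∈ Finset.range N, 5 * (1 / (1 + (j : ℝ))) :=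
      Finset.sum_le_sum fun j _ ↦ norm_inv_sub_inv_le_head hs j
    _ = 5 * harmonic N := by rw [← Finset.mul_sum, sum_one_div_one_add_eq_harmonic]
    _ ≤ 5 * (1 + Real.log N) := by gcongr; exact harmonic_le_one_add_log N
    _ ≤ 5 * (1 + Real.log (2 + ‖s‖)) := by gcongr
    _ = _ := by ring
  have htail (k : ℕ) (hk : N ≤ k) : ∑ j ∈ Finset.range k, ‖1 / ((1 : ℂ) + j) - 1 / (s + j)‖ ≤
      5 + 5 * Real.log (2 + ‖s‖) + N * (1 / N - 1 / k) := by
    induction k, hk using Nat.le_induction with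
    | base => simpa using hhead
    | succ k hk ih =>
      have := norm_inv_sub_inv_le_tail (by linarith) hN_ge hk
      rw [Finset.sum_range_succ]
      push_cast
      linarith
  calc
    _ ≤ ∑ j ∈ Finset.range (max N m), ‖1 / ((1 : ℂ) + j) - 1 / (s + j)‖ :=
      Finset.sum_le_sum_of_subset_of_nonneg (Finset.range_mono (le_max_right _ _))
        fun _ _ _ ↦ norm_nonneg _
    _ ≤ 5 + 5 * Real.log (2 + ‖s‖) + N * (1 / N - 1 / (max N m : ℕ)) := htail _ (le_max_left _ _)
    _ ≤ 5 + 5 * Real.log (2 + ‖s‖) + N * (1 / N) := by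
      gcongr; exact sub_le_self _ (by positivity)
    _ = _ := by rw [mul_one_div_cancel hN₀.ne']; ring

theorem abs_log_sub_harmonic_succ_le {n : ℕ} (hn : n ≠ 0) :
    |Real.log n - harmonic (n + 1)| ≤ 2 := by
  have hn₁ : (1 : ℝ) ≤ n := by exact_mod_cast Nat.one_le_iff_ne_zero.mpr hn
  have hlower := log_add_one_le_harmonic (n + 1)
  have hupper := harmonic_le_one_add_log (n + 1)
  push_cast at hlower hupper
  have hmono : Real.log n ≤ Real.log (n + 1 + 1) := Real.log_le_log (by linarith) (by linarith)
  have hlog : Real.log (n + 1) ≤ Real.log n + 1 := by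
    calc
      _ ≤ Real.log (n * Real.exp 1) :=
        Real.log_le_log (by positivity) (by nlinarith [Real.add_one_le_exp (1 : ℝ)])
      _ = Real.log n + 1 := by rw [Real.log_mul (by positivity) (by positivity), Real.log_exp]
  rw [abs_le]
  constructor <;> linarith

theorem norm_digamma_le (hs : 1 / 4 ≤ s.re) : ‖digamma s‖ ≤ 17 * Real.log (2 + ‖s‖) := by
  refine le_of_tendsto (tendsto_log_sub_sum_digamma (by linarith)).norm ?_
  filter_upwards [eventually_ne_atTop 0] with n hn
  have hlog_two : Real.log 2 ≤ Real.log (2 + ‖s‖) :=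
    Real.log_le_log (by norm_num) (by linarith [norm_nonneg s])
  calc
    _ = ‖((Real.log n - harmonic (n + 1) : ℝ) : ℂ) +
          ∑ j ∈ Finset.range (n + 1), (1 / ((1 : ℂ) + j) - 1 / (s + j))‖ := by
      rw [Finset.sum_sub_distrib, ← sum_one_div_one_add_eq_harmonic]
      push_cast
      congr 1
      ring
    _ ≤ 2 + ∑ j ∈ Finset.range (n + 1), ‖1 / ((1 : ℂ) + j) - 1 / (s + j)‖ := by
      refine (norm_add_le _ _).trans (add_le_add ?_ (norm_sum_le _ _))
      rw [norm_real]
      exact abs_log_sub_harmonic_succ_le hn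
    _ ≤ 17 * Real.log (2 + ‖s‖) := by
      linarith [sum_norm_inv_sub_inv_le hs (n + 1), Real.log_two_gt_d9]

end Digamma

section RiemannXi

/-- The entire function `s (s - 1) Λ(s)`, that is, twice Riemann's `ξ`. It is written in terms of
the entire part `Λ₀` of the completed zeta function, so that it has the right values at `0`
and `1` too. -/
def riemannXi (s : ℂ) : ℂ := 1 + s * (s - 1) * completedRiemannZeta₀ s

theorem differentiable_riemannXi : Differentiable ℂ riemannXi := by
  have := differentiable_completedZeta₀
  unfold riemannXi
  fun_prop

theorem riemannXi_one_sub (s : ℂ) : riemannXi (1 - s) = riemannXi s := by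
  rw [riemannXi, riemannXi, completedRiemannZeta₀_one_sub]
  ring

theorem riemannXi_one : riemannXi 1 = 1 := by simp [riemannXi]

theorem riemannXi_eq {s : ℂ} (hs : 0 < s.re) (hs₁ : s ≠ 1) :
    riemannXi s = s * (s - 1) * (Gammaℝ s * riemannZeta s) := by
  have hs₀ : s ≠ 0 := ne_zero_of_re_pos hs
  have hs₁' : 1 - s ≠ 0 := sub_ne_zero.mpr hs₁.symm
  rw [riemannZeta_def_of_ne_zero hs₀, mul_div_cancel₀ _ (Gammaℝ_ne_zero_of_re_pos hs),
    completedRiemannZeta_eq, riemannXi]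
  field_simp
  ring

theorem riemannXi_ne_zero_of_riemannZeta_ne_zero {s : ℂ} (hs : 0 < s.re)
    (hzeta : riemannZeta s ≠ 0) : riemannXi s ≠ 0 := by
  rcases eq_or_ne s 1 with rfl | hs₁
  · simp [riemannXi_one]
  rw [riemannXi_eq hs hs₁]
  exact mul_ne_zero (mul_ne_zero (ne_zero_of_re_pos hs) (sub_ne_zero.mpr hs₁))
    (mul_ne_zero (Gammaℝ_ne_zero_of_re_pos hs) hzeta)

theorem riemannXi_ne_zero_of_one_le_re {s : ℂ} (hs : 1 ≤ s.re) : riemannXi s ≠ 0 :=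
  riemannXi_ne_zero_of_riemannZeta_ne_zero (by linarith) (riemannZeta_ne_zero_of_one_le_re hs)

theorem riemannXi_ne_zero (hRH : RiemannHypothesis) {s : ℂ} (hs : 1 / 2 < s.re) :
    riemannXi s ≠ 0 := by
  have hs₀ : 0 < s.re := by linarith
  rcases le_or_gt 1 s.re with h₁ | h₁
  · exact riemannXi_ne_zero_of_one_le_re h₁
  have hs₁ : s ≠ 1 := by
    rintro rfl
    simp at h₁
  refine riemannXi_ne_zero_of_riemannZeta_ne_zero hs₀ fun hz ↦ hs.ne' (hRH s hz ?_ hs₁)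
  rintro ⟨n, rfl⟩
  refine ne_neg_natCast_of_re_pos hs₀ (2 * (n + 1)) ?_
  push_cast
  ring

theorem Gammaℝ_conj (s : ℂ) : Gammaℝ (starRingEnd ℂ s) = starRingEnd ℂ (Gammaℝ s) := by
  have harg : (π : ℂ).arg ≠ π := by simp [arg_ofReal_of_nonneg pi_pos.le, pi_pos.ne]
  have hneg : -starRingEnd ℂ s / 2 = starRingEnd ℂ (-s / 2) := by simp [conj_ofNat]
  have hhalf : starRingEnd ℂ s / 2 = starRingEnd ℂ (s / 2) := by simp [conj_ofNat]
  rw [Gammaℝ_def, Gammaℝ_def, map_mul, ← Complex.Gamma_conj, hneg, cpow_conj _ _ harg,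
    conj_ofReal, hhalf]

theorem riemannXi_conj {s : ℂ} (hs : 0 < s.re) (hs₁ : s ≠ 1) :
    riemannXi (starRingEnd ℂ s) = starRingEnd ℂ (riemannXi s) := by
  have hconj : starRingEnd ℂ s ≠ 1 := by
    rwa [← map_one (starRingEnd ℂ), (starRingEnd ℂ).injective.ne_iff]
  rw [riemannXi_eq hs hs₁, riemannXi_eq (by simpa using hs) hconj]
  simp [Gammaℝ_conj, riemannZeta_conj]

theorem norm_mellin_le {E : Type*} [NormedAddCommGroup E] [NormedSpace ℂ E] {f : ℝ → E}
    {a b s : ℂ} (ha : MellinConvergent f a) (hb : MellinConvergent f b) (has : a.re ≤ s.re)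
    (hsb : s.re ≤ b.re) :
    ‖mellin f s‖ ≤ ∫ t : ℝ in Ioi 0, (‖(t : ℂ) ^ (a - 1) • f t‖ + ‖(t : ℂ) ^ (b - 1) • f t‖) := by
  refine norm_integral_le_of_norm_le (ha.norm.add hb.norm) ?_
  filter_upwards [ae_restrict_mem measurableSet_Ioi] with t (ht : 0 < t)
  simp only [norm_smul, norm_cpow_eq_rpow_re_of_pos ht, sub_re, one_re, ← add_mul]
  gcongr
  exact rpow_le_rpow_add_rpow ht (by linarith) (by linarith)

theorem exists_norm_completedRiemannZeta₀_le (a b : ℝ) :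
    ∃ K : ℝ, ∀ s : ℂ, a ≤ s.re → s.re ≤ b → ‖completedRiemannZeta₀ s‖ ≤ K := by
  set P := HurwitzZeta.hurwitzEvenFEPair 0
  have hconv (s : ℂ) : MellinConvergent P.f_modif s :=
    (P.isStrongFEPair_toStrongFEPair.hasMellin s).1
  refine ⟨(∫ t : ℝ in Ioi 0, (‖(t : ℂ) ^ ((a / 2 : ℂ) - 1) • P.f_modif t‖ +
    ‖(t : ℂ) ^ ((b / 2 : ℂ) - 1) • P.f_modif t‖)) / 2, fun s ha hb ↦ ?_⟩
  have hmellin : completedRiemannZeta₀ s = mellin P.f_modif (s / 2) / 2 := rfl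
  rw [hmellin, norm_div, Complex.norm_ofNat]
  gcongr
  exact norm_mellin_le (hconv (a / 2)) (hconv (b / 2)) (by simpa using by linarith)
    (by simpa using by linarith)

theorem differentiableAt_Gammaℝ {s : ℂ} (hs : 0 < s.re) : DifferentiableAt ℂ Gammaℝ s := by
  simpa using differentiable_Gammaℝ_inv.differentiableAt.fun_inv
    (inv_ne_zero (Gammaℝ_ne_zero_of_re_pos hs))

theorem logDeriv_Gammaℝ {s : ℂ} (hs : 0 < s.re) :
    logDeriv Gammaℝ s = -(Real.log π / 2 : ℂ) + digamma (s / 2) / 2 := by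
  have hpi : (π : ℂ) ≠ 0 := ofReal_ne_zero.mpr pi_ne_zero
  have hhalf : HasDerivAt (fun z : ℂ ↦ z / 2) (1 / 2) s := (hasDerivAt_id s).div_const 2
  have hs' : 0 < (s / 2).re := by simpa using hs
  have hGamma := differentiableAt_Gamma (s / 2) (ne_neg_natCast_of_re_pos hs')
  have hpow₀ : (π : ℂ) ^ (-s / 2) ≠ 0 := by simp [cpow_eq_zero_iff, hpi]
  have hpow : HasDerivAt (fun z : ℂ ↦ (π : ℂ) ^ (-z / 2))
      ((π : ℂ) ^ (-s / 2) * Complex.log π * (-1 / 2)) s := by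
    simpa using ((hasDerivAt_id s).neg.div_const 2).const_cpow (Or.inl hpi)
  have hcomp : logDeriv (fun z ↦ Complex.Gamma (z / 2)) s = digamma (s / 2) * (1 / 2) := by
    rw [← hhalf.deriv]
    exact logDeriv_comp (g := fun z : ℂ ↦ z / 2) hGamma hhalf.differentiableAt
  rw [show Gammaℝ = fun z ↦ (π : ℂ) ^ (-z / 2) * Complex.Gamma (z / 2) from rfl,
    logDeriv_mul (g := fun z ↦ Complex.Gamma (z / 2)) s hpow₀ (Complex.Gamma_ne_zero_of_re_pos hs')
      hpow.differentiableAt (hGamma.comp s hhalf.differentiableAt),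
    hcomp, logDeriv_apply, hpow.deriv, mul_assoc, mul_div_cancel_left₀ _ hpow₀,
    ofReal_log pi_pos.le]
  ring

/-- The logarithmic derivative of `s Γ_ℝ(s)`: the part of `ξ'/ξ` that comes neither from the
Euler product nor from the pole of `ζ`. -/
def archimedeanTerm (s : ℂ) : ℂ := 1 / s + logDeriv Gammaℝ s

theorem logDeriv_riemannXi {s : ℂ} (hs : 1 < s.re) :
    logDeriv riemannXi s =
      archimedeanTerm s + 1 / (s - 1) - LSeries (fun n ↦ Λ n) s := by
  have hs₀ : 0 < s.re := by linarith
  have hne₀ : s ≠ 0 := ne_zero_of_re_pos hs₀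
  have hne₁ : s ≠ 1 := by rintro rfl; simp at hs
  have hne₁' : s - 1 ≠ 0 := sub_ne_zero.mpr hne₁
  have hGamma := differentiableAt_Gammaℝ hs₀
  have hGamma₀ := Gammaℝ_ne_zero_of_re_pos hs₀
  have hzeta := differentiableAt_riemannZeta hne₁
  have hzeta₀ := riemannZeta_ne_zero_of_one_lt_re hs
  have hev : riemannXi =ᶠ[𝓝 s] fun z ↦ z * (z - 1) * (Gammaℝ z * riemannZeta z) := by
    filter_upwards [(isOpen_lt continuous_const continuous_re).mem_nhds hs] with z (hz : 1 < z.re)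
    exact riemannXi_eq (by linarith) (by rintro rfl; simp at hz)
  rw [(logDeriv_congr_nhds hev).eq_of_nhds,
    logDeriv_mul (f := fun z ↦ z * (z - 1)) (g := fun z ↦ Gammaℝ z * riemannZeta z) s
      (mul_ne_zero hne₀ hne₁') (mul_ne_zero hGamma₀ hzeta₀) (by fun_prop) (hGamma.mul hzeta),
    logDeriv_mul (f := fun z ↦ z) (g := fun z ↦ z - 1) s hne₀ hne₁' (by fun_prop) (by fun_prop),
    logDeriv_mul s hGamma₀ hzeta₀ hGamma hzeta, logDeriv_id', logDeriv_apply (· - 1),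
    deriv_sub_const, deriv_id'', logDeriv_apply riemannZeta,
    ArithmeticFunction.LSeries_vonMangoldt_eq_deriv_riemannZeta_div hs, archimedeanTerm]
  ring

theorem norm_archimedeanTerm_le {s : ℂ} (hs : 1 / 2 ≤ s.re) :
    ‖archimedeanTerm s‖ ≤ 14 * Real.log (2 + ‖s‖) := by
  have hre : s.re ≤ ‖s‖ := re_le_norm s
  have hlog_two : Real.log 2 ≤ Real.log (2 + ‖s‖) :=
    Real.log_le_log (by norm_num) (by linarith [norm_nonneg s])
  have hinv : ‖1 / s‖ ≤ 2 := by
    rw [norm_div, norm_one, div_le_iff₀ (by linarith)]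
    linarith
  have hpi : ‖(Real.log π / 2 : ℂ)‖ ≤ Real.log 2 := by
    have hlog : Real.log π ≤ Real.log (2 ^ 2) :=
      Real.log_le_log pi_pos (by linarith [pi_lt_four])
    rw [Real.log_pow] at hlog
    rw [norm_div, norm_real, Complex.norm_ofNat,
      Real.norm_of_nonneg (Real.log_nonneg (by linarith [pi_gt_three]))]
    push_cast at hlog
    linarith
  have hdigamma : ‖digamma (s / 2)‖ ≤ 17 * Real.log (2 + ‖s‖) := by
    refine (norm_digamma_le (s := s / 2) (by simpa using by linarith)).trans ?_
    gcongr
    rw [norm_div, Complex.norm_ofNat]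
    linarith
  have hdigamma' : ‖digamma (s / 2) / 2‖ = ‖digamma (s / 2)‖ / 2 := by
    rw [norm_div, Complex.norm_ofNat]
  rw [archimedeanTerm, logDeriv_Gammaℝ (by linarith)]
  have := norm_add₃_le (a := 1 / s) (b := -(Real.log π / 2 : ℂ)) (c := digamma (s / 2) / 2)
  rw [norm_neg, add_assoc (1 / s)] at this
  linarith [Real.log_two_gt_d9]

theorem norm_LSeries_le {f : ℕ → ℂ} {s₀ s : ℂ} (hf : LSeriesSummable f s₀) (hs : s₀.re ≤ s.re) :
    ‖LSeries f s‖ ≤ ∑' n, ‖LSeries.term f s₀ n‖ :=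
  tsum_of_norm_bounded hf.norm.hasSum fun n ↦ LSeries.norm_term_le_of_re_le_re f hs n

theorem exists_norm_logDeriv_riemannXi_le :
    ∃ K : ℝ, 0 < K ∧ ∀ s : ℂ, 2 ≤ s.re → ‖logDeriv riemannXi s‖ ≤ K * Real.log (2 + ‖s‖) := by
  have hsum := ArithmeticFunction.LSeriesSummable_vonMangoldt (s := 2) (by norm_num)
  set K := ∑' n, ‖LSeries.term (fun n ↦ Λ n) 2 n‖
  have hK₀ : 0 ≤ K := tsum_nonneg fun _ ↦ norm_nonneg _
  refine ⟨14 + 2 * (1 + K), by positivity, fun s hs ↦ ?_⟩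
  have hpole : ‖1 / (s - 1)‖ ≤ 1 := by
    have hre : (s - 1).re ≤ ‖s - 1‖ := re_le_norm _
    rw [sub_re, one_re] at hre
    rw [norm_div, norm_one, div_le_iff₀ (by linarith)]
    linarith
  have hseries := norm_LSeries_le hsum (s := s) (by simpa using hs)
  have hlog_two : Real.log 2 ≤ Real.log (2 + ‖s‖) :=
    Real.log_le_log (by norm_num) (by linarith [norm_nonneg s])
  rw [logDeriv_riemannXi (by linarith)]
  calc
    _ ≤ ‖archimedeanTerm s‖ + ‖1 / (s - 1)‖ + ‖LSeries (fun n ↦ Λ n) s‖ :=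
      (norm_sub_le _ _).trans (by gcongr; exact norm_add_le _ _)
    _ ≤ 14 * Real.log (2 + ‖s‖) + 1 + K := by
      gcongr
      exact norm_archimedeanTerm_le (by linarith)
    _ ≤ _ := by nlinarith [Real.log_two_gt_d9]

end RiemannXi

section Growth

theorem norm_le_mul_exp_of_norm_logDeriv_le {f : ℂ → ℂ} {z w : ℂ} {K : ℝ}
    (hf : ∀ x ∈ segment ℝ z w, DifferentiableAt ℂ f x) (hne : ∀ x ∈ segment ℝ z w, f x ≠ 0)
    (hK : ∀ x ∈ segment ℝ z w, ‖logDeriv f x‖ ≤ K) :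
    ‖f w‖ ≤ ‖f z‖ * Real.exp (K * ‖w - z‖) := by
  let γ : ℝ → ℂ := fun r ↦ AffineMap.lineMap z w r
  have hγ {r : ℝ} (hr : r ∈ Icc 0 1) : γ r ∈ segment ℝ z w := by
    rw [segment_eq_image_lineMap]
    exact mem_image_of_mem _ hr
  have hderiv {r : ℝ} (hr : r ∈ Icc 0 1) :
      HasDerivAt (f ∘ γ) ((w - z) • deriv f (γ r)) r :=
    (hf _ (hγ hr)).hasDerivAt.scomp r AffineMap.hasDerivAt_lineMap
  have hgronwall := norm_le_gronwallBound_of_norm_deriv_right_le (f := f ∘ γ)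
    (K := K * ‖w - z‖) (ε := 0)
    (fun r hr ↦ (hderiv hr).continuousAt.continuousWithinAt)
    (fun r hr ↦ (hderiv (Ico_subset_Icc_self hr)).hasDerivWithinAt)
    (show ‖(f ∘ γ) 0‖ ≤ ‖f z‖ by simp [γ])
    (fun r hr ↦ ?_) 1 (right_mem_Icc.mpr zero_le_one)
  · rw [gronwallBound_ε0] at hgronwall
    simpa [γ] using hgronwall
  · have hmem := hγ (Ico_subset_Icc_self hr)
    have hbound := hK _ hmem
    rw [logDeriv_apply, norm_div, div_le_iff₀ (norm_pos_iff.mpr (hne _ hmem))] at hbound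
    calc
      ‖(w - z) • deriv f (γ r)‖ ≤ ‖w - z‖ * (K * ‖f (γ r)‖) := by
        rw [norm_smul]
        gcongr
      _ = K * ‖w - z‖ * ‖(f ∘ γ) r‖ + 0 := by
        rw [Function.comp_apply]
        ring

theorem abs_log_norm_sub_log_norm_le {f : ℂ → ℂ} {s : Set ℂ} {z w : ℂ} {K : ℝ}
    (hs : Convex ℝ s) (hf : ∀ x ∈ s, DifferentiableAt ℂ f x) (hne : ∀ x ∈ s, f x ≠ 0)
    (hK : ∀ x ∈ s, ‖logDeriv f x‖ ≤ K) (hz : z ∈ s) (hw : w ∈ s) :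
    |Real.log ‖f w‖ - Real.log ‖f z‖| ≤ K * ‖w - z‖ := by
  have log_norm_le {z w : ℂ} (hz : z ∈ s) (hw : w ∈ s) :
      Real.log ‖f w‖ ≤ Real.log ‖f z‖ + K * ‖w - z‖ := by
    have hsub := hs.segment_subset hz hw
    have hexp := norm_le_mul_exp_of_norm_logDeriv_le (fun x hx ↦ hf x (hsub hx))
      (fun x hx ↦ hne x (hsub hx)) fun x hx ↦ hK x (hsub hx)
    have hlog := Real.log_le_log (norm_pos_iff.mpr (hne w hw)) hexp
    rwa [Real.log_mul (norm_ne_zero_iff.mpr (hne z hz)) (Real.exp_pos _).ne',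
      Real.log_exp] at hlog
  have hzw := log_norm_le hz hw
  have hwz := log_norm_le hw hz
  rw [norm_sub_rev] at hwz
  exact abs_le.mpr ⟨by linarith, by linarith⟩

theorem exists_abs_log_norm_riemannXi_sub_le : ∃ K : ℝ, 0 < K ∧ ∀ z w : ℂ, 2 ≤ z.re → 2 ≤ w.re →
    |Real.log ‖riemannXi w‖ - Real.log ‖riemannXi z‖| ≤
      K * Real.log (2 + (‖z‖ + ‖w‖)) * ‖w - z‖ := by
  obtain ⟨K, hK, hbound⟩ := exists_norm_logDeriv_riemannXi_le
  refine ⟨K, hK, fun z w hz hw ↦ ?_⟩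
  refine abs_log_norm_sub_log_norm_le
    ((convex_halfSpace_re_ge 2).inter (convex_closedBall 0 (‖z‖ + ‖w‖)))
    (fun x _ ↦ differentiable_riemannXi x)
    (fun x hx ↦ riemannXi_ne_zero_of_one_le_re (one_le_two.trans hx.1)) (fun x hx ↦ ?_)
    ⟨hz, by simp⟩ ⟨hw, by simp⟩
  have hx₂ := mem_closedBall_zero_iff.mp hx.2
  refine (hbound x hx.1).trans ?_
  gcongr

theorem mul_log_le_two_mul_rpow {x : ℝ} (hx : 0 ≤ x) : x * Real.log x ≤ 2 * x ^ (3 / 2 : ℝ) := by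
  have hlog := Real.log_le_rpow_div hx (ε := 1 / 2) (by norm_num)
  have hpow : x ^ (3 / 2 : ℝ) = x * x ^ (1 / 2 : ℝ) := by
    rw [← Real.rpow_one_add' hx (by norm_num)]
    norm_num
  rw [hpow]
  nlinarith

theorem exists_abs_log_norm_riemannXi_le : ∃ C : ℝ, 0 < C ∧ ∀ s : ℂ, 2 ≤ s.re →
    |Real.log ‖riemannXi s‖| ≤ C * (4 + ‖s‖) ^ (3 / 2 : ℝ) := by
  obtain ⟨K, hK, hcompare⟩ := exists_abs_log_norm_riemannXi_sub_le
  set A := |Real.log ‖riemannXi 2‖|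
  refine ⟨2 * K + A, by positivity, fun s hs ↦ ?_⟩
  have hW₁ : 1 ≤ 4 + ‖s‖ := by linarith [norm_nonneg s]
  have hpow₁ : 1 ≤ (4 + ‖s‖) ^ (3 / 2 : ℝ) := Real.one_le_rpow hW₁ (by norm_num)
  have hdist : ‖s - 2‖ ≤ 4 + ‖s‖ :=
    (norm_sub_le _ _).trans (by rw [Complex.norm_ofNat]; linarith)
  have hstep := hcompare 2 s (by simp) hs
  rw [Complex.norm_ofNat, show 2 + (2 + ‖s‖) = 4 + ‖s‖ by ring] at hstep
  calc
    |Real.log ‖riemannXi s‖| ≤ |Real.log ‖riemannXi s‖ - Real.log ‖riemannXi 2‖| + A := by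
      exact sub_le_iff_le_add.mp (abs_sub_abs_le_abs_sub _ _)
    _ ≤ K * Real.log (4 + ‖s‖) * (4 + ‖s‖) + A := by
      have hlog := Real.log_nonneg hW₁
      gcongr
      exact hstep.trans (by gcongr)
    _ = K * ((4 + ‖s‖) * Real.log (4 + ‖s‖)) + A * 1 := by ring
    _ ≤ K * (2 * (4 + ‖s‖) ^ (3 / 2 : ℝ)) + A * (4 + ‖s‖) ^ (3 / 2 : ℝ) := by
      gcongr K * ?_ + A * ?_
      exact mul_log_le_two_mul_rpow (zero_le_one.trans hW₁)
    _ = (2 * K + A) * (4 + ‖s‖) ^ (3 / 2 : ℝ) := by ring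

theorem exists_norm_riemannXi_le_exp_of_re_mem_Icc (a b : ℝ) : ∃ C : ℝ, 0 < C ∧ ∀ s : ℂ,
    a ≤ s.re → s.re ≤ b → ‖riemannXi s‖ ≤ Real.exp (C * (4 + ‖s‖)) := by
  obtain ⟨K, hK⟩ := exists_norm_completedRiemannZeta₀_le a b
  refine ⟨2 + |K|, by positivity, fun s ha hb ↦ ?_⟩
  have hs₀ := norm_nonneg s
  have hsub : ‖s - 1‖ ≤ ‖s‖ + 1 := (norm_sub_le _ _).trans (by simp)
  have hexp : 4 + ‖s‖ ≤ Real.exp (4 + ‖s‖) := by linarith [Real.add_one_le_exp (4 + ‖s‖)]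
  calc
    ‖riemannXi s‖ ≤ 1 + ‖s‖ * (‖s‖ + 1) * |K| := by
      rw [riemannXi]
      refine (norm_add_le _ _).trans ?_
      rw [norm_one, norm_mul, norm_mul]
      gcongr
      exact (hK s ha hb).trans (le_abs_self K)
    _ ≤ (4 + ‖s‖) * (4 + ‖s‖) * (|K| + 1) := by nlinarith [abs_nonneg K, mul_nonneg hs₀ hs₀]
    _ ≤ Real.exp (4 + ‖s‖) * Real.exp (4 + ‖s‖) * Real.exp |K| := by
      gcongr
      exact Real.add_one_le_exp _
    _ ≤ Real.exp ((2 + |K|) * (4 + ‖s‖)) := by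
      rw [← Real.exp_add, ← Real.exp_add, Real.exp_le_exp]
      nlinarith [abs_nonneg K]

theorem exists_norm_riemannXi_le_exp : ∃ C : ℝ, 0 < C ∧ ∀ s : ℂ, 0 ≤ s.re →
    ‖riemannXi s‖ ≤ Real.exp (C * (4 + ‖s‖) ^ (3 / 2 : ℝ)) := by
  obtain ⟨C, hC, hright⟩ := exists_abs_log_norm_riemannXi_le
  obtain ⟨C', hC', hstrip⟩ := exists_norm_riemannXi_le_exp_of_re_mem_Icc 0 2
  refine ⟨C + C', by positivity, fun s hs ↦ ?_⟩
  rcases le_total 2 s.re with h | h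
  · have hpos := norm_pos_iff.mpr (riemannXi_ne_zero_of_one_le_re (one_le_two.trans h))
    rw [← Real.log_le_iff_le_exp hpos]
    refine ((le_abs_self _).trans (hright s h)).trans ?_
    gcongr
    linarith
  · have hpow : 4 + ‖s‖ ≤ (4 + ‖s‖) ^ (3 / 2 : ℝ) :=
      Real.self_le_rpow_of_one_le (by linarith [norm_nonneg s]) (by norm_num)
    refine (hstrip s hs h).trans ?_
    gcongr
    linarith

theorem exists_eq_mul_exp_of_ne_zero {f : ℂ → ℂ} {c : ℂ} {R : ℝ} (hR : 0 < R)
    (hf : DifferentiableOn ℂ f (Metric.ball c R)) (hne : ∀ z ∈ Metric.ball c R, f z ≠ 0) :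
    ∃ g : ℂ → ℂ, DifferentiableOn ℂ g (Metric.ball c R) ∧ g c = 0 ∧
      ∀ z ∈ Metric.ball c R, f z = f c * Complex.exp (g z) := by
  have hlogDeriv : DifferentiableOn ℂ (logDeriv f) (Metric.ball c R) :=
    (hf.deriv Metric.isOpen_ball).div hf hne
  obtain ⟨g, hgc, hg⟩ := hlogDeriv.isExactOn_ball.with_val_at c 0
  have hg' : DifferentiableOn ℂ g (Metric.ball c R) :=
    fun z hz ↦ (hg z hz).differentiableAt.differentiableWithinAt
  have heq : EqOn (logDeriv f) (logDeriv (Complex.exp ∘ g)) (Metric.ball c R) := by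
    intro z hz
    rw [logDeriv_apply (Complex.exp ∘ g), ((Complex.hasDerivAt_exp _).comp z (hg z hz)).deriv]
    simp
  obtain ⟨a, -, ha⟩ := (logDeriv_eqOn_iff hf hg'.cexp Metric.isOpen_ball
    (convex_ball c R).isPreconnected (fun _ _ ↦ Complex.exp_ne_zero _) hne).mp heq
  have hac : f c = a := by simpa [hgc] using ha (Metric.mem_ball_self hR)
  exact ⟨g, hg', hgc, fun z hz ↦ by simpa [hac] using ha hz⟩

theorem log_norm_ge_of_log_norm_le_on_ball {f : ℂ → ℂ} {c z : ℂ} {R M : ℝ} (hM : 0 < M)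
    (hf : DifferentiableOn ℂ f (Metric.ball c R)) (hne : ∀ w ∈ Metric.ball c R, f w ≠ 0)
    (hle : ∀ w ∈ Metric.ball c R, Real.log ‖f w‖ ≤ Real.log ‖f c‖ + M)
    (hz : z ∈ Metric.ball c R) :
    Real.log ‖f c‖ - 2 * M * ‖z - c‖ / (R - ‖z - c‖) ≤ Real.log ‖f z‖ := by
  have hR : 0 < R := dist_nonneg.trans_lt hz
  obtain ⟨g, hg, hgc, hfg⟩ := exists_eq_mul_exp_of_ne_zero hR hf hne
  have hlog {w : ℂ} (hw : w ∈ Metric.ball c R) :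
      Real.log ‖f w‖ = Real.log ‖f c‖ + (g w).re := by
    rw [hfg w hw, norm_mul, Complex.norm_exp,
      Real.log_mul (norm_ne_zero_iff.mpr (hne c (Metric.mem_ball_self hR))) (Real.exp_pos _).ne',
      Real.log_exp]
  have hmaps : MapsTo (c + ·) (Metric.ball 0 R) (Metric.ball c R) := fun w hw ↦ by
    simpa [dist_eq_norm] using hw
  have hBC := borelCaratheodory_zero (f := fun w ↦ g (c + w)) (z := z - c) hM
    (hg.comp (by fun_prop) hmaps)
    (fun w hw ↦ by
      have hre := hle _ (hmaps hw)
      rw [hlog (hmaps hw)] at hre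
      exact le_of_add_le_add_left hre)
    hR (by simpa [dist_eq_norm] using hz) (by simpa using hgc)
  rw [add_sub_cancel] at hBC
  rw [hlog hz]
  linarith [(abs_le.mp ((abs_re_le_norm (g z)).trans hBC)).1]

theorem neg_le_log_norm_of_re_le_two {f : ℂ → ℂ} {s : ℂ} {h A B : ℝ} (hh : 0 < h)
    (hAB : 0 < A + B) (hf : DifferentiableOn ℂ f {z | 1 / 2 < z.re})
    (hne : ∀ z, 1 / 2 < z.re → f z ≠ 0)
    (hlower : ∀ z : ℂ, 2 ≤ z.re → ‖z‖ ≤ ‖s‖ + 3 → -A ≤ Real.log ‖f z‖)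
    (hupper : ∀ z : ℂ, 1 / 2 < z.re → ‖z‖ ≤ ‖s‖ + 3 → Real.log ‖f z‖ ≤ B)
    (hs : 1 / 2 + h ≤ s.re) (hs' : s.re ≤ 2) :
    -(A + 3 * (A + B) / h) ≤ Real.log ‖f s‖ := by
  set c : ℂ := s + (2 - s.re : ℝ) with hc
  have hcre : c.re = 2 := by simp [hc]
  have hdist : ‖s - c‖ = 2 - s.re := by
    rw [hc, sub_add_cancel_left, norm_neg, Complex.norm_of_nonneg (by linarith)]
  have hcs : ‖c‖ ≤ ‖s‖ + 3 / 2 := by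
    have htri := norm_le_norm_add_norm_sub s c
    linarith
  have hball {z : ℂ} (hz : z ∈ Metric.ball c (3 / 2)) : 1 / 2 < z.re ∧ ‖z‖ ≤ ‖s‖ + 3 := by
    rw [mem_ball_iff_norm] at hz
    have hre := (abs_re_le_norm (z - c)).trans_lt hz
    rw [sub_re, hcre, abs_lt] at hre
    have htri := norm_le_norm_add_norm_sub' z c
    exact ⟨by linarith, by linarith⟩
  have hlower_c := hlower c hcre.ge (by linarith)
  have hBC := log_norm_ge_of_log_norm_le_on_ball hAB (hf.mono fun z hz ↦ (hball hz).1)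
    (fun z hz ↦ hne z (hball hz).1)
    (fun z hz ↦ by linarith [hupper z (hball hz).1 (hball hz).2])
    (mem_ball_iff_norm.mpr (by linarith : ‖s - c‖ < 3 / 2))
  have hquot : 2 * (A + B) * ‖s - c‖ / (3 / 2 - ‖s - c‖) ≤ 2 * (A + B) * (3 / 2) / h := by
    gcongr <;> linarith
  calc
    -(A + 3 * (A + B) / h) = -A - 2 * (A + B) * (3 / 2) / h := by ring
    _ ≤ Real.log ‖f c‖ - 2 * (A + B) * ‖s - c‖ / (3 / 2 - ‖s - c‖) := by linarith
    _ ≤ _ := hBC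

theorem exists_le_log_norm_riemannXi (hRH : RiemannHypothesis) {h : ℝ} (hh : 0 < h) :
    ∃ C : ℝ, 0 < C ∧ ∀ s : ℂ, 1 / 2 + h ≤ s.re →
      -(C * (7 + ‖s‖) ^ (3 / 2 : ℝ)) ≤ Real.log ‖riemannXi s‖ := by
  obtain ⟨C₁, hC₁, hlower⟩ := exists_abs_log_norm_riemannXi_le
  obtain ⟨C₂, hC₂, hupper⟩ := exists_norm_riemannXi_le_exp
  refine ⟨C₁ + 3 * (C₁ + C₂) / h, by positivity, fun s hs ↦ ?_⟩
  set U := (7 + ‖s‖) ^ (3 / 2 : ℝ)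
  have hpow {z : ℂ} (hz : ‖z‖ ≤ ‖s‖ + 3) : (4 + ‖z‖) ^ (3 / 2 : ℝ) ≤ U :=
    Real.rpow_le_rpow (by positivity) (by linarith) (by norm_num)
  have hlowerU (z : ℂ) (hz : 2 ≤ z.re) (hzs : ‖z‖ ≤ ‖s‖ + 3) :
      -(C₁ * U) ≤ Real.log ‖riemannXi z‖ := by
    grw [← hpow hzs]
    exact (abs_le.mp (hlower z hz)).1
  have hupperU (z : ℂ) (hz : 1 / 2 < z.re) (hzs : ‖z‖ ≤ ‖s‖ + 3) :
      Real.log ‖riemannXi z‖ ≤ C₂ * U := by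
    grw [← hpow hzs]
    exact (Real.log_le_iff_le_exp (norm_pos_iff.mpr (riemannXi_ne_zero hRH hz))).mpr
      (hupper z (by linarith))
  rcases le_total 2 s.re with h₂ | h₂
  · refine le_trans ?_ (hlowerU s h₂ (by linarith))
    gcongr
    exact le_add_of_nonneg_right (by positivity)
  · calc
      -((C₁ + 3 * (C₁ + C₂) / h) * U) = -(C₁ * U + 3 * (C₁ * U + C₂ * U) / h) := by ring
      _ ≤ Real.log ‖riemannXi s‖ :=
        neg_le_log_norm_of_re_le_two hh (by positivity) differentiable_riemannXi.differentiableOn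
          (fun _ ↦ riemannXi_ne_zero hRH) hlowerU hupperU hs h₂

end Growth

section Positivity

theorem norm_le_of_forall_eventually_le_exp {f : ℂ → ℂ} {C : ℝ} {z : ℂ}
    (hd : DiffContOnCl ℂ f {z | 0 < z.re})
    (hexp : ∃ c < (2 : ℝ), ∃ B, f =O[Bornology.cobounded ℂ ⊓ 𝓟 {z | 0 < z.re}]
      fun z ↦ Real.exp (B * ‖z‖ ^ c))
    (hre : ∀ ε > 0, ∀ᶠ x : ℝ in atTop, ‖f x‖ ≤ Real.exp (ε * x))
    (him : ∀ x : ℝ, ‖f (x * I)‖ ≤ C) (hz : 0 ≤ z.re) : ‖f z‖ ≤ C := by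
  suffices h : ∀ᶠ ε : ℝ in 𝓝[<] 0, ‖Complex.exp (ε * z) * f z‖ ≤ C by
    refine le_of_tendsto (Tendsto.mono_left ?_ nhdsWithin_le_nhds) h
    exact Continuous.tendsto' (by fun_prop) _ _ (by simp)
  filter_upwards [self_mem_nhdsWithin] with ε (hε : ε < 0)
  have hnorm (w : ℂ) : ‖Complex.exp (ε * w) * f w‖ = Real.exp (ε * w.re) * ‖f w‖ := by
    rw [norm_mul, Complex.norm_exp, re_ofReal_mul]
  refine PhragmenLindelof.right_half_plane_of_bounded_on_real
    (f := fun w ↦ Complex.exp (ε * w) * f w)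
    ((differentiable_id.const_mul _).cexp.diffContOnCl.smul hd) ?_ ?_ (fun y ↦ ?_) hz
  · obtain ⟨c, hc, B, hO⟩ := hexp
    refine ⟨c, hc, B, .trans (.of_bound' ?_) hO⟩
    refine eventually_inf_principal.mpr (.of_forall fun w (hw : 0 < w.re) ↦ ?_)
    rw [hnorm]
    exact mul_le_of_le_one_left (norm_nonneg _)
      (Real.exp_le_one_iff.mpr (mul_nonpos_of_nonpos_of_nonneg hε.le hw.le))
  · refine isBoundedUnder_of_eventually_le (a := 1) ?_
    filter_upwards [hre (-ε) (neg_pos.mpr hε)] with x hx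
    rw [hnorm, ofReal_re]
    calc
      Real.exp (ε * x) * ‖f x‖ ≤ Real.exp (ε * x) * Real.exp (-ε * x) := by gcongr
      _ = 1 := by rw [← Real.exp_add, neg_mul, add_neg_cancel, Real.exp_zero]
  · rw [hnorm, re_ofReal_mul, I_re, mul_zero, mul_zero, Real.exp_zero, one_mul]
    exact him y

variable {h : ℝ}

theorem norm_riemannXi_half_add_sub (h₀ : 0 < h) (h₁ : h < 1 / 2) (y : ℝ) :
    ‖riemannXi (1 / 2 + y * I - h)‖ = ‖riemannXi (1 / 2 + y * I + h)‖ := by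
  have hre : (1 / 2 + y * I + h : ℂ).re = 1 / 2 + h := by simp
  have hreflect : (1 / 2 + y * I - h : ℂ) = 1 - starRingEnd ℂ (1 / 2 + y * I + h) := by
    simp only [map_add, map_mul, map_div₀, map_one, conj_ofNat, conj_ofReal, conj_I]
    ring
  have hne : (1 / 2 + y * I + h : ℂ) ≠ 1 := fun heq ↦ by
    rw [heq, one_re] at hre
    linarith
  rw [hreflect, riemannXi_one_sub, riemannXi_conj (by linarith) hne, norm_conj]

theorem exists_norm_riemannXi_div_le_exp (hRH : RiemannHypothesis) (h₀ : 0 < h) (h₁ : h < 1 / 2) :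
    ∃ B : ℝ, ∀ z : ℂ, 0 ≤ z.re → 1 ≤ ‖z‖ →
      ‖riemannXi (1 / 2 + z - h) / riemannXi (1 / 2 + z + h)‖ ≤
        Real.exp (B * ‖z‖ ^ (3 / 2 : ℝ)) := by
  obtain ⟨C₁, hC₁, hlower⟩ := exists_le_log_norm_riemannXi hRH h₀
  obtain ⟨C₂, hC₂, hupper⟩ := exists_norm_riemannXi_le_exp
  refine ⟨(C₂ + C₁) * 9 ^ (3 / 2 : ℝ), fun z hz hz₁ ↦ ?_⟩
  have hnorm {r : ℝ} (hr : |r| ≤ 1) {a : ℝ} (ha₀ : 0 ≤ a) (ha : a ≤ 7) :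
      (a + ‖z + r‖) ^ (3 / 2 : ℝ) ≤ 9 ^ (3 / 2 : ℝ) * ‖z‖ ^ (3 / 2 : ℝ) := by
    rw [← Real.mul_rpow (by norm_num) (norm_nonneg z)]
    have htri : ‖z + r‖ ≤ ‖z‖ + 1 := (norm_add_le _ _).trans (by simpa using hr)
    exact Real.rpow_le_rpow (by positivity) (by linarith) (by norm_num)
  have hnum_eq : (1 / 2 + z - h : ℂ) = z + (1 / 2 - h : ℝ) := by push_cast; ring
  have hden_eq : (1 / 2 + z + h : ℂ) = z + (1 / 2 + h : ℝ) := by push_cast; ring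
  have hden_re : 1 / 2 + h ≤ (z + (1 / 2 + h : ℝ)).re := by simpa using hz
  have hnum := hupper (z + (1 / 2 - h : ℝ)) (by rw [add_re, ofReal_re]; linarith)
  have hden := hlower _ hden_re
  have hden_pos : 0 < ‖riemannXi (z + (1 / 2 + h : ℝ))‖ :=
    norm_pos_iff.mpr (riemannXi_ne_zero hRH (by linarith))
  rw [hnum_eq, hden_eq, norm_div, div_le_iff₀ hden_pos, ← Real.exp_log hden_pos,
    ← Real.exp_add]
  refine hnum.trans (Real.exp_le_exp.mpr ?_)
  have hnum_pow := hnorm (r := 1 / 2 - h) (abs_le.mpr ⟨by linarith, by linarith⟩)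
    (a := 4) (by norm_num) (by norm_num)
  have hden_pow := hnorm (r := 1 / 2 + h) (abs_le.mpr ⟨by linarith, by linarith⟩)
    (a := 7) (by norm_num) le_rfl
  calc
    C₂ * (4 + ‖z + (1 / 2 - h : ℝ)‖) ^ (3 / 2 : ℝ)
      ≤ C₂ * (9 ^ (3 / 2 : ℝ) * ‖z‖ ^ (3 / 2 : ℝ)) := by gcongr
    _ = (C₂ + C₁) * 9 ^ (3 / 2 : ℝ) * ‖z‖ ^ (3 / 2 : ℝ) -
        C₁ * (9 ^ (3 / 2 : ℝ) * ‖z‖ ^ (3 / 2 : ℝ)) := by ring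
    _ ≤ (C₂ + C₁) * 9 ^ (3 / 2 : ℝ) * ‖z‖ ^ (3 / 2 : ℝ) -
        C₁ * (7 + ‖z + (1 / 2 + h : ℝ)‖) ^ (3 / 2 : ℝ) := by gcongr
    _ ≤ _ := by linarith

theorem eventually_norm_riemannXi_div_le_exp (h₀ : 0 < h) (h₁ : h < 1 / 2) {ε : ℝ}
    (hε : 0 < ε) : ∀ᶠ x : ℝ in atTop,
      ‖riemannXi (1 / 2 + x - h) / riemannXi (1 / 2 + x + h)‖ ≤ Real.exp (ε * x) := by
  obtain ⟨K, hK, hcompare⟩ := exists_abs_log_norm_riemannXi_sub_le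
  have hlog : ∀ᶠ x : ℝ in atTop, ‖Real.log (3 + 2 * x)‖ ≤ ε / (3 * K) * ‖3 + 2 * x‖ :=
    (Real.isLittleO_log_id_atTop.comp_tendsto (tendsto_atTop_add_const_left _ 3
      (tendsto_id.const_mul_atTop two_pos))).bound (by positivity)
  filter_upwards [hlog, eventually_ge_atTop 3] with x hx hx₃
  rw [Real.norm_of_nonneg (by linarith : 0 ≤ 3 + 2 * x)] at hx
  have hnum_eq : (1 / 2 + x - h : ℂ) = (1 / 2 + x - h : ℝ) := by push_cast; rfl
  have hden_eq : (1 / 2 + x + h : ℂ) = (1 / 2 + x + h : ℝ) := by push_cast; rfl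
  have hpos {r : ℝ} (hr : 2 ≤ r) : 0 < ‖riemannXi r‖ :=
    norm_pos_iff.mpr (riemannXi_ne_zero_of_one_le_re (by rw [ofReal_re]; linarith))
  have hlog_sub := (le_abs_self _).trans (hcompare (1 / 2 + x + h : ℝ) (1 / 2 + x - h : ℝ)
    (by rw [ofReal_re]; linarith) (by rw [ofReal_re]; linarith))
  rw [← ofReal_sub, norm_real, norm_real, norm_real, Real.norm_of_nonneg (by linarith),
    Real.norm_of_nonneg (by linarith), norm_sub_rev, Real.norm_of_nonneg (by linarith),
    ← Real.log_div (hpos (by linarith)).ne' (hpos (by linarith)).ne'] at hlog_sub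
  rw [hnum_eq, hden_eq, norm_div,
    ← Real.log_le_iff_le_exp (div_pos (hpos (by linarith)) (hpos (by linarith)))]
  calc
    _ ≤ K * Real.log (3 + 2 * x) * (2 * h) := hlog_sub.trans_eq (by ring_nf)
    _ ≤ K * (ε / (3 * K) * (3 * x)) * 1 := by
      have hlog_le : Real.log (3 + 2 * x) ≤ ε / (3 * K) * (3 * x) :=
        (Real.le_norm_self _).trans (hx.trans (by gcongr; linarith))
      gcongr
      linarith
    _ = ε * x := by
      field_simp

theorem norm_riemannXi_sub_le_norm_riemannXi_add (hRH : RiemannHypothesis) (h₀ : 0 < h)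
    (h₁ : h < 1 / 2) {s : ℂ} (hs : 1 / 2 ≤ s.re) : ‖riemannXi (s - h)‖ ≤ ‖riemannXi (s + h)‖ := by
  have hne {z : ℂ} (hz : 0 ≤ z.re) : riemannXi (1 / 2 + z + h) ≠ 0 :=
    riemannXi_ne_zero hRH (by
      simp only [add_re, div_ofNat_re, one_re, ofReal_re]
      linarith)
  have hquot : ‖riemannXi (1 / 2 + (s - 1 / 2) - h) / riemannXi (1 / 2 + (s - 1 / 2) + h)‖ ≤ 1 := by
    refine norm_le_of_forall_eventually_le_exp
      (f := fun z ↦ riemannXi (1 / 2 + z - h) / riemannXi (1 / 2 + z + h)) ?_ ?_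
      (fun ε hε ↦ eventually_norm_riemannXi_div_le_exp h₀ h₁ hε) (fun y ↦ ?_) ?_
    · refine DifferentiableOn.diffContOnCl fun z hz ↦ ?_
      have hz₀ : 0 ≤ z.re := closure_lt_subset_le continuous_const continuous_re hz
      have hξ := differentiable_riemannXi
      exact DifferentiableAt.differentiableWithinAt
        (.div (hξ.comp (by fun_prop) z) (hξ.comp (by fun_prop) z) (hne hz₀))
    · obtain ⟨B, hB⟩ := exists_norm_riemannXi_div_le_exp hRH h₀ h₁
      refine ⟨3 / 2, by norm_num, B, .of_bound' (eventually_inf_principal.mpr ?_)⟩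
      filter_upwards [tendsto_norm_cobounded_atTop.eventually_ge_atTop 1] with z hz₁ (hz : 0 < z.re)
      exact (hB z hz.le hz₁).trans (Real.le_norm_self _)
    · rw [norm_div, norm_riemannXi_half_add_sub h₀ h₁ y]
      exact div_self_le_one _
    · simpa using hs
  rwa [norm_div, div_le_one (norm_pos_iff.mpr (hne (by simpa using hs))), add_sub_cancel] at hquot

theorem re_logDeriv_nonneg_of_norm_sub_le_norm_add {f : ℂ → ℂ} {s : ℂ} (hf : DifferentiableAt ℂ f s)
    (hle : ∀ᶠ h : ℝ in 𝓝[>] 0, ‖f (s - h)‖ ≤ ‖f (s + h)‖) : 0 ≤ (logDeriv f s).re := by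
  have hline (c : ℝ) : HasDerivAt (fun r : ℝ ↦ f (s + r * c)) (deriv f s * c) 0 := by
    have houter : HasDerivAt f (deriv f s) (s + (0 : ℝ) * c) := by simpa using hf.hasDerivAt
    have hinner : HasDerivAt (fun r : ℂ ↦ s + r * c) c (0 : ℝ) := by
      simpa using ((hasDerivAt_id ((0 : ℝ) : ℂ)).mul_const (c : ℂ)).const_add s
    exact (HasDerivAt.comp (h := fun r : ℂ ↦ s + r * c) _ houter hinner).comp_ofReal
  have hslope := ((hline 1).norm_sq.sub (hline (-1)).norm_sq).tendsto_slope_zero_right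
  have hnonneg := ge_of_tendsto (b := 0) hslope (by
    filter_upwards [hle, self_mem_nhdsWithin] with h hh (h₀ : 0 < h)
    have hsq := pow_le_pow_left₀ (norm_nonneg _) hh 2
    refine smul_nonneg (inv_nonneg.mpr h₀.le) ?_
    simpa [← sub_eq_add_neg] using hsq)
  have hre : 0 ≤ (deriv f s).re * (f s).re + (deriv f s).im * (f s).im := by
    simp only [ofReal_zero, ofReal_one, mul_one, add_zero, Complex.inner, mul_re, conj_re, conj_im,
      mul_neg, sub_neg_eq_add, ofReal_neg, neg_zero, inner_neg_right, neg_add_rev, sub_nonneg,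
      Nat.ofNat_pos, mul_le_mul_iff_right₀, add_neg_le_iff_le_add] at hnonneg
    linarith
  rw [logDeriv_apply, div_re, ← add_div]
  exact div_nonneg hre (normSq_nonneg _)

theorem re_logDeriv_riemannXi_nonneg (hRH : RiemannHypothesis) {s : ℂ} (hs : 1 / 2 < s.re) :
    0 ≤ (logDeriv riemannXi s).re := by
  refine re_logDeriv_nonneg_of_norm_sub_le_norm_add (differentiable_riemannXi s) ?_
  filter_upwards [Ioo_mem_nhdsGT one_half_pos] with h hh
  exact norm_riemannXi_sub_le_norm_riemannXi_add hRH hh.1 hh.2 hs.le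

end Positivity

section Strip

theorem differentiableAt_logDeriv {f : ℂ → ℂ} {s : ℂ} (hf : AnalyticAt ℂ f s) (hs : f s ≠ 0) :
    DifferentiableAt ℂ (logDeriv f) s :=
  hf.deriv.differentiableAt.div hf.differentiableAt hs

theorem differentiableAt_logDeriv_riemannXi (hRH : RiemannHypothesis) {s : ℂ}
    (hs : 1 / 2 < s.re) : DifferentiableAt ℂ (logDeriv riemannXi) s :=
  differentiableAt_logDeriv (differentiable_riemannXi.analyticAt s) (riemannXi_ne_zero hRH hs)

theorem differentiableAt_archimedeanTerm {s : ℂ} (hs : 0 < s.re) :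
    DifferentiableAt ℂ archimedeanTerm s := by
  have hGamma : AnalyticAt ℂ Gammaℝ s :=
    DifferentiableOn.analyticAt (s := {z : ℂ | 0 < z.re})
      (fun z hz ↦ (differentiableAt_Gammaℝ hz).differentiableWithinAt)
      ((isOpen_lt continuous_const continuous_re).mem_nhds hs)
  exact ((differentiableAt_const 1).div differentiableAt_id (ne_zero_of_re_pos hs)).add
    (differentiableAt_logDeriv hGamma (Gammaℝ_ne_zero_of_re_pos hs))

/-- The function `-ζ'/ζ` with its pole at `1` removed, which extends `L(Λ, s) - 1 / (s - 1)`
from `1 < re s`; it is holomorphic on `1 / 2 < re s` under the Riemann hypothesis. -/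
def zetaLogDerivRemainder (s : ℂ) : ℂ := archimedeanTerm s - logDeriv riemannXi s

theorem zetaLogDerivRemainder_eq {s : ℂ} (hs : 1 < s.re) :
    zetaLogDerivRemainder s = LSeries (fun n ↦ Λ n) s - 1 / (s - 1) := by
  rw [zetaLogDerivRemainder, logDeriv_riemannXi hs]
  ring

theorem differentiableAt_zetaLogDerivRemainder (hRH : RiemannHypothesis) {s : ℂ}
    (hs : 1 / 2 < s.re) : DifferentiableAt ℂ zetaLogDerivRemainder s :=
  (differentiableAt_archimedeanTerm (by linarith)).sub (differentiableAt_logDeriv_riemannXi hRH hs)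

theorem norm_le_of_re_nonneg_on_ball {f : ℂ → ℂ} {c z : ℂ} {R : ℝ}
    (hf : DifferentiableOn ℂ f (Metric.ball c R)) (hre : ∀ w ∈ Metric.ball c R, 0 ≤ (f w).re)
    (hz : z ∈ Metric.ball c R) : ‖f z‖ ≤ ‖f c‖ * (R + ‖z - c‖) / (R - ‖z - c‖) := by
  have hmaps : MapsTo (fun w ↦ c + w) (Metric.ball 0 R) (Metric.ball c R) := fun w hw ↦ by
    simpa using hw
  have hR : 0 < R := Metric.pos_of_mem_ball hz
  have hBC (M : ℝ) (hM : 0 < M) : ‖f z‖ ≤ 2 * M * ‖z - c‖ / (R - ‖z - c‖) +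
      ‖f c‖ * (R + ‖z - c‖) / (R - ‖z - c‖) := by
    simpa using Complex.borelCaratheodory (f := fun w ↦ -f (c + w)) (z := z - c) hM
      (hf.comp (by fun_prop) hmaps).neg
      (fun w hw ↦ by
        change (-f (c + w)).re ≤ M
        rw [neg_re]
        linarith [hre _ (hmaps hw)]) hR
      (by simpa [dist_eq_norm] using hz)
  have hlim : Tendsto (fun M : ℝ ↦ 2 * M * ‖z - c‖ / (R - ‖z - c‖) +
      ‖f c‖ * (R + ‖z - c‖) / (R - ‖z - c‖)) (𝓝[>] 0)
      (𝓝 (‖f c‖ * (R + ‖z - c‖) / (R - ‖z - c‖))) :=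
    tendsto_nhdsWithin_of_tendsto_nhds (Continuous.tendsto' (by fun_prop) _ _ (by simp))
  exact ge_of_tendsto hlim (eventually_mem_nhdsWithin.mono hBC)

theorem log_two_add_le_three_mul_log_two_add {x y : ℝ} (hx : 0 ≤ x) (hy : 0 ≤ y)
    (hyx : y ≤ x + 3) : Real.log (2 + y) ≤ 3 * Real.log (2 + x) := by
  have hpow : 2 + y ≤ (2 + x) ^ 3 := by nlinarith [pow_nonneg hx 2, pow_nonneg hx 3]
  exact_mod_cast (Real.log_le_log (by positivity) hpow).trans_eq (Real.log_pow _ 3)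

theorem log_two_add_norm_le {s : ℂ} (hs : |s.re| ≤ 3) :
    Real.log (2 + ‖s‖) ≤ 3 * Real.log (2 + |s.im|) :=
  log_two_add_le_three_mul_log_two_add (abs_nonneg _) (norm_nonneg _)
    ((norm_le_abs_re_add_abs_im s).trans (by linarith))

theorem exists_norm_logDeriv_riemannXi_le_of_re_le_three (hRH : RiemannHypothesis) {ε : ℝ}
    (hε : 0 < ε) (hε' : ε < 1 / 2) : ∃ C : ℝ, 0 < C ∧ ∀ s : ℂ, 1 / 2 + ε ≤ s.re → s.re ≤ 3 →
      ‖logDeriv riemannXi s‖ ≤ C * Real.log (2 + |s.im|) := by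
  obtain ⟨K, hK, hle⟩ := exists_norm_logDeriv_riemannXi_le
  refine ⟨3 * K * 3 / ε, by positivity, fun s hs₁ hs₂ ↦ ?_⟩
  set c : ℂ := s + ((2 - s.re : ℝ) : ℂ) with hc
  have hre : c.re = 2 := by simp [hc]
  have him : c.im = s.im := by simp [hc]
  have hsc : ‖s - c‖ ≤ 3 / 2 - ε := by
    rw [hc, sub_add_cancel_left, norm_neg, Complex.norm_real, Real.norm_eq_abs, abs_le]
    constructor <;> linarith
  have hball (w : ℂ) (hw : w ∈ Metric.ball c (3 / 2)) : 1 / 2 < w.re := by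
    have hdist := (abs_re_le_norm (w - c)).trans_lt (mem_ball_iff_norm.mp hw)
    rw [sub_re, hre] at hdist
    linarith [(abs_lt.mp hdist).1]
  have hcenter : ‖logDeriv riemannXi c‖ ≤ 3 * K * Real.log (2 + |s.im|) := by
    have hlog := log_two_add_norm_le (s := c) (by rw [hre]; norm_num)
    calc ‖logDeriv riemannXi c‖ ≤ K * Real.log (2 + ‖c‖) := hle c hre.ge
      _ ≤ K * (3 * Real.log (2 + |s.im|)) := by rw [← him]; gcongr
      _ = _ := by ring
  have hlog : 0 ≤ Real.log (2 + |s.im|) := Real.log_nonneg (by linarith [abs_nonneg s.im])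
  calc ‖logDeriv riemannXi s‖
      ≤ ‖logDeriv riemannXi c‖ * (3 / 2 + ‖s - c‖) / (3 / 2 - ‖s - c‖) :=
        norm_le_of_re_nonneg_on_ball
          (fun w hw ↦
            (differentiableAt_logDeriv_riemannXi hRH (hball w hw)).differentiableWithinAt)
          (fun w hw ↦ re_logDeriv_riemannXi_nonneg hRH (hball w hw))
          (mem_ball_iff_norm.mpr (by linarith))
    _ ≤ 3 * K * Real.log (2 + |s.im|) * 3 / ε := by
        gcongr <;> linarith
    _ = _ := by ring

theorem exists_norm_zetaLogDerivRemainder_le (hRH : RiemannHypothesis) {ε : ℝ}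
    (hε : 0 < ε) (hε' : ε < 1 / 2) : ∃ C : ℝ, 0 < C ∧ ∀ s : ℂ, 1 / 2 + ε ≤ s.re → s.re ≤ 3 →
      ‖zetaLogDerivRemainder s‖ ≤ C * Real.log (2 + |s.im|) := by
  obtain ⟨C, hC, hle⟩ := exists_norm_logDeriv_riemannXi_le_of_re_le_three hRH hε hε'
  refine ⟨C + 42, by positivity, fun s hs₁ hs₂ ↦ ?_⟩
  have hlog := log_two_add_norm_le (s := s) (by rw [abs_of_nonneg (by linarith)]; exact hs₂)
  calc ‖zetaLogDerivRemainder s‖ ≤ ‖archimedeanTerm s‖ + ‖logDeriv riemannXi s‖ := norm_sub_le _ _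
    _ ≤ 14 * (3 * Real.log (2 + |s.im|)) + C * Real.log (2 + |s.im|) :=
        add_le_add ((norm_archimedeanTerm_le (by linarith)).trans (by gcongr)) (hle s hs₁ hs₂)
    _ = _ := by ring

end Strip

section LineMass

variable {f : ℂ → ℂ} {σ τ a b H M : ℝ}

theorem integral_re_left_edge_eq (hf : DifferentiableOn ℂ f ([[σ, τ]] ×ℂ [[a, b]])) :
    ∫ y in a..b, (f (σ + y * I)).re = (∫ x in σ..τ, (f (x + a * I)).im) -
      (∫ x in σ..τ, (f (x + b * I)).im) + ∫ y in a..b, (f (τ + y * I)).re := by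
  have hhor {y : ℝ} (hy : y ∈ [[a, b]]) :
      IntervalIntegrable (fun x : ℝ ↦ f (x + y * I)) volume σ τ :=
    (hf.continuousOn.comp (by fun_prop) fun x hx ↦ by
      simpa [mem_reProdIm] using ⟨hx, hy⟩).intervalIntegrable
  have hver {x : ℝ} (hx : x ∈ [[σ, τ]]) :
      IntervalIntegrable (fun y : ℝ ↦ f (x + y * I)) volume a b :=
    (hf.continuousOn.comp (by fun_prop) fun y hy ↦ by
      simpa [mem_reProdIm] using ⟨hx, hy⟩).intervalIntegrable
  have him {g : ℝ → ℂ} {c d : ℝ} (hg : IntervalIntegrable g volume c d) :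
      ∫ x in c..d, (g x).im = (∫ x in c..d, g x).im := imCLM.intervalIntegral_comp_comm hg
  have hre {g : ℝ → ℂ} {c d : ℝ} (hg : IntervalIntegrable g volume c d) :
      ∫ x in c..d, (g x).re = (∫ x in c..d, g x).re := reCLM.intervalIntegral_comp_comm hg
  have hrect := congrArg Complex.im
    (integral_boundary_rect_eq_zero_of_differentiableOn f (σ + a * I) (τ + b * I)
      (by simpa using hf))
  rw [him (hhor left_mem_uIcc), him (hhor right_mem_uIcc), hre (hver left_mem_uIcc),
    hre (hver right_mem_uIcc)]
  simp only [add_re, ofReal_re, re_ofReal_mul, I_re, mul_zero, add_zero, add_im, ofReal_im,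
    im_ofReal_mul, I_im, mul_one, zero_add, sub_im, smul_eq_mul, I_mul_im, zero_im] at hrect
  linarith

/-- The entire function which on the half-strip `σ ≤ re s`, `a ≤ im s ≤ a + H` is a sine bump on
the left edge and is purely imaginary, of opposite signs, on the two horizontal edges. -/
def sineKernel (σ a H : ℝ) (s : ℂ) : ℂ := Complex.sin (π / H * (-I * (s - σ) - a))

theorem differentiable_sineKernel : Differentiable ℂ (sineKernel σ a H) := by
  unfold sineKernel
  fun_prop

theorem sineKernel_apply (x y : ℝ) :
    sineKernel σ a H (x + y * I) =
      (Real.sin (π / H * (y - a)) * Real.cosh (π / H * (x - σ)) : ℝ) -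
        (Real.cos (π / H * (y - a)) * Real.sinh (π / H * (x - σ)) : ℝ) * I := by
  have harg : (π / H * (-I * (x + y * I - σ) - a) : ℂ) =
      (π / H * (y - a) : ℝ) - (π / H * (x - σ) : ℝ) * I := by
    push_cast
    linear_combination (-π / H * y : ℂ) * I_sq
  rw [sineKernel, harg, Complex.sin_sub, Complex.sin_mul_I, Complex.cos_mul_I]
  push_cast
  ring

theorem sineKernel_left_edge (y : ℝ) :
    sineKernel σ a H (σ + y * I) = Real.sin (π / H * (y - a)) := by
  rw [sineKernel_apply, sub_self, mul_zero, Real.cosh_zero, Real.sinh_zero, mul_one, mul_zero,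
    ofReal_zero, zero_mul, sub_zero]

theorem sineKernel_bottom_edge (x : ℝ) :
    sineKernel σ a H (x + a * I) = -(Real.sinh (π / H * (x - σ)) * I) := by
  rw [sineKernel_apply, sub_self, mul_zero, Real.sin_zero, Real.cos_zero, zero_mul, one_mul,
    ofReal_zero, zero_sub]

theorem sineKernel_top_edge (hH : H ≠ 0) (x : ℝ) :
    sineKernel σ a H (x + (a + H : ℝ) * I) = Real.sinh (π / H * (x - σ)) * I := by
  rw [sineKernel_apply, add_sub_cancel_left, div_mul_cancel₀ _ hH, Real.sin_pi, Real.cos_pi,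
    zero_mul, neg_one_mul, ofReal_zero, zero_sub, ofReal_neg, neg_mul, neg_neg]

theorem norm_sineKernel_le (hH : 0 ≤ H) {x : ℝ} (hx : σ ≤ x) (y : ℝ) :
    ‖sineKernel σ a H (x + y * I)‖ ≤ Real.exp (π / H * (x - σ)) := by
  have hsinh : 0 ≤ Real.sinh (π / H * (x - σ)) :=
    Real.sinh_nonneg_iff.mpr (mul_nonneg (by positivity) (by linarith))
  rw [sineKernel_apply, ← Real.cosh_add_sinh]
  refine (norm_sub_le _ _).trans (add_le_add ?_ ?_)
  · rw [norm_real, norm_mul, Real.norm_of_nonneg (Real.cosh_pos _).le]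
    exact mul_le_of_le_one_left (Real.cosh_pos _).le (Real.abs_sin_le_one _)
  · rw [norm_mul, norm_I, mul_one, norm_real, norm_mul, Real.norm_of_nonneg hsinh]
    exact mul_le_of_le_one_left hsinh (Real.abs_cos_le_one _)

theorem integral_re_mul_sin_le (hH : 0 < H) (hστ : σ ≤ τ)
    (hf : DifferentiableOn ℂ f ([[σ, τ]] ×ℂ [[a, a + H]]))
    (hre : ∀ s ∈ [[σ, τ]] ×ℂ [[a, a + H]], 0 ≤ (f s).re)
    (hM : ∀ y ∈ [[a, a + H]], ‖f (τ + y * I)‖ ≤ M) :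
    ∫ y in a..a + H, (f (σ + y * I)).re * Real.sin (π / H * (y - a)) ≤
      M * Real.exp (π / H * (τ - σ)) * H := by
  have hedge {x y : ℝ} (hx : x ∈ Icc σ τ) (hy : y ∈ [[a, a + H]]) :
      0 ≤ (f (x + y * I)).re * Real.sinh (π / H * (x - σ)) := by
    have hsinh : 0 ≤ Real.sinh (π / H * (x - σ)) :=
      Real.sinh_nonneg_iff.mpr (mul_nonneg (by positivity) (by linarith [hx.1]))
    refine mul_nonneg (hre _ ?_) hsinh
    rw [← uIcc_of_le hστ] at hx
    simpa [mem_reProdIm] using ⟨hx, hy⟩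
  have hbottom : ∫ x in σ..τ, (f (x + a * I) * sineKernel σ a H (x + a * I)).im ≤ 0 := by
    rw [← neg_nonneg, ← intervalIntegral.integral_neg]
    refine intervalIntegral.integral_nonneg hστ fun x hx ↦ ?_
    rw [sineKernel_bottom_edge, mul_neg, neg_im, neg_neg, ← mul_assoc, mul_I_im, re_mul_ofReal]
    exact hedge hx left_mem_uIcc
  have htop : 0 ≤ ∫ x in σ..τ,
      (f (x + (a + H : ℝ) * I) * sineKernel σ a H (x + (a + H : ℝ) * I)).im := by
    refine intervalIntegral.integral_nonneg hστ fun x hx ↦ ?_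
    rw [sineKernel_top_edge hH.ne', ← mul_assoc, mul_I_im, re_mul_ofReal]
    exact hedge hx right_mem_uIcc
  have hright : ∫ y in a..a + H, (f (τ + y * I) * sineKernel σ a H (τ + y * I)).re ≤
      M * Real.exp (π / H * (τ - σ)) * |a + H - a| := by
    refine (Real.le_norm_self _).trans
      (intervalIntegral.norm_integral_le_of_norm_le_const fun y hy ↦ (abs_re_le_norm _).trans ?_)
    rw [norm_mul]
    have hfM := hM y (uIoc_subset_uIcc hy)
    exact mul_le_mul hfM (norm_sineKernel_le hH.le hστ y) (norm_nonneg _)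
      ((norm_nonneg _).trans hfM)
  have hrect := integral_re_left_edge_eq
    (hf.mul (differentiable_sineKernel (σ := σ) (a := a) (H := H)).differentiableOn)
  simp only [Pi.mul_apply, sineKernel_left_edge, re_mul_ofReal] at hrect
  rw [add_sub_cancel_left, abs_of_pos hH] at hright
  linarith

theorem two_thirds_le_sin_pi_mul {u : ℝ} (hu : 1 / 3 ≤ u) (hu' : u ≤ 2 / 3) :
    2 / 3 ≤ Real.sin (π * u) := by
  have hpi := Real.pi_pos
  wlog hhalf : u ≤ 1 / 2 generalizing u
  · have := this (u := 1 - u) (by linarith) (by linarith) (by linarith)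
    rwa [mul_sub, mul_one, Real.sin_pi_sub] at this
  calc 2 / 3 ≤ 2 / π * (π * u) := by field_simp; linarith
    _ ≤ Real.sin (π * u) := Real.mul_le_sin (by nlinarith) (by nlinarith)

theorem integral_middle_third_le {g : ℝ → ℝ} (hH : 0 < H)
    (hg : ContinuousOn g (Icc a (a + H))) (hg₀ : ∀ y ∈ Icc a (a + H), 0 ≤ g y) :
    ∫ y in a + H / 3..a + 2 * H / 3, g y ≤
      3 / 2 * ∫ y in a..a + H, g y * Real.sin (π / H * (y - a)) := by
  have harg (y : ℝ) : π / H * (y - a) = π * ((y - a) / H) := by ring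
  have hsub : Icc (a + H / 3) (a + 2 * H / 3) ⊆ Icc a (a + H) :=
    Icc_subset_Icc (by linarith) (by linarith)
  have hcont : ContinuousOn (fun y ↦ g y * Real.sin (π / H * (y - a))) (Icc a (a + H)) :=
    hg.mul (by fun_prop)
  have hint := hcont.intervalIntegrable_of_Icc (μ := volume) (by linarith : a ≤ a + H)
  have hmiddle : ∫ y in a + H / 3..a + 2 * H / 3, g y ≤
      ∫ y in a + H / 3..a + 2 * H / 3, 3 / 2 * (g y * Real.sin (π / H * (y - a))) := by
    refine intervalIntegral.integral_mono_on (by linarith)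
      ((hg.mono hsub).intervalIntegrable_of_Icc (by linarith))
      (((hcont.mono hsub).intervalIntegrable_of_Icc (by linarith)).const_mul _) fun y hy ↦ ?_
    have hsin : 2 / 3 ≤ Real.sin (π / H * (y - a)) := by
      rw [harg]
      refine two_thirds_le_sin_pi_mul ?_ ?_
      · rw [le_div_iff₀ hH]
        linarith [hy.1]
      · rw [div_le_iff₀ hH]
        linarith [hy.2]
    nlinarith [hg₀ y (hsub hy)]
  refine hmiddle.trans ?_
  rw [intervalIntegral.integral_const_mul]
  gcongr
  refine intervalIntegral.integral_mono_interval (by linarith) (by linarith) (by linarith) ?_ hint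
  filter_upwards [ae_restrict_mem measurableSet_Ioc] with y hy
  refine mul_nonneg (hg₀ y (Ioc_subset_Icc_self hy)) ?_
  rw [harg]
  have hle_one : (y - a) / H ≤ 1 := (div_le_one hH).mpr (by linarith [hy.2])
  exact Real.sin_nonneg_of_nonneg_of_le_pi
    (mul_nonneg Real.pi_pos.le (div_nonneg (by linarith [hy.1]) hH.le))
    (mul_le_of_le_one_right Real.pi_pos.le hle_one)

theorem integral_re_middle_third_le (hH : 0 < H) (hστ : σ ≤ τ)
    (hf : DifferentiableOn ℂ f ([[σ, τ]] ×ℂ [[a, a + H]]))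
    (hre : ∀ s ∈ [[σ, τ]] ×ℂ [[a, a + H]], 0 ≤ (f s).re)
    (hM : ∀ y ∈ [[a, a + H]], ‖f (τ + y * I)‖ ≤ M) :
    ∫ y in a + H / 3..a + 2 * H / 3, (f (σ + y * I)).re ≤
      3 / 2 * (M * Real.exp (π / H * (τ - σ)) * H) := by
  have hmem {y : ℝ} (hy : y ∈ Icc a (a + H)) : (σ + y * I : ℂ) ∈ [[σ, τ]] ×ℂ [[a, a + H]] := by
    rw [← uIcc_of_le (by linarith)] at hy
    simpa [mem_reProdIm] using hy
  have hcont : ContinuousOn (fun y : ℝ ↦ (f (σ + y * I)).re) (Icc a (a + H)) :=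
    continuous_re.comp_continuousOn (hf.continuousOn.comp (by fun_prop) fun y hy ↦ hmem hy)
  refine (integral_middle_third_le hH hcont fun y hy ↦ hre _ (hmem hy)).trans ?_
  gcongr
  exact integral_re_mul_sin_le hH hστ hf hre hM

theorem exists_integral_re_logDeriv_riemannXi_le (hRH : RiemannHypothesis) :
    ∃ C : ℝ, 0 < C ∧ ∀ σ : ℝ, 1 / 2 < σ → σ ≤ 1 → ∀ k : ℝ,
      ∫ t in k..k + 1, (logDeriv riemannXi (σ + t * I)).re ≤ C * Real.log (2 + |k|) := by
  obtain ⟨K, hK, hle⟩ := exists_norm_logDeriv_riemannXi_le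
  refine ⟨3 / 2 * (9 * K * Real.exp (π / 3 * 2) * 3), by positivity, fun σ hσ hσ₁ k ↦ ?_⟩
  have hre {s : ℂ} (hs : s ∈ [[σ, 2]] ×ℂ [[k - 1, k - 1 + 3]]) : 1 / 2 < s.re := by
    have := hs.1
    rw [mem_preimage, uIcc_of_le (by linarith)] at this
    linarith [this.1]
  have hlog : 0 ≤ Real.log (2 + |k|) := Real.log_nonneg (by linarith [abs_nonneg k])
  have hright (y : ℝ) (hy : y ∈ [[k - 1, k - 1 + 3]]) :
      ‖logDeriv riemannXi ((2 : ℝ) + y * I)‖ ≤ 9 * K * Real.log (2 + |k|) := by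
    rw [uIcc_of_le (by linarith)] at hy
    have habs : |y| ≤ |k| + 3 := by
      rw [abs_le]
      constructor <;> linarith [hy.1, hy.2, le_abs_self k, neg_abs_le k]
    calc ‖logDeriv riemannXi ((2 : ℝ) + y * I)‖
        ≤ K * Real.log (2 + ‖((2 : ℝ) + y * I : ℂ)‖) := hle _ (by simp)
      _ ≤ K * (3 * Real.log (2 + |y|)) := by
          gcongr
          simpa using log_two_add_norm_le (s := (2 : ℝ) + y * I) (by simp; norm_num)
      _ ≤ K * (3 * (3 * Real.log (2 + |k|))) := by
          gcongr
          exact log_two_add_le_three_mul_log_two_add (abs_nonneg _) (abs_nonneg _) habs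
      _ = _ := by ring
  have hmass := integral_re_middle_third_le (f := logDeriv riemannXi) (τ := 2) three_pos
    (by linarith)
    (fun s hs ↦ (differentiableAt_logDeriv_riemannXi hRH (hre hs)).differentiableWithinAt)
    (fun s hs ↦ re_logDeriv_riemannXi_nonneg hRH (hre hs)) hright
  have hk : k - 1 + 3 / 3 = k ∧ k - 1 + 2 * 3 / 3 = k + 1 := by constructor <;> ring
  rw [hk.1, hk.2] at hmass
  calc ∫ t in k..k + 1, (logDeriv riemannXi (σ + t * I)).re
      ≤ 3 / 2 * (9 * K * Real.log (2 + |k|) * Real.exp (π / 3 * (2 - σ)) * 3) := hmass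
    _ ≤ 3 / 2 * (9 * K * Real.log (2 + |k|) * Real.exp (π / 3 * 2) * 3) := by
        gcongr
        linarith
    _ = _ := by ring

end LineMass

section ParametricIntegral

variable {α : Type*} [MeasurableSpace α] {μ : Measure α} {E : Type*} [NormedAddCommGroup E]
  [NormedSpace ℂ E] {U : Set ℂ} {F : ℂ → α → E} {bound : α → ℝ}

theorem aestronglyMeasurable_deriv_of_differentiableOn (hU : IsOpen U)
    (hmeas : ∀ z ∈ U, AEStronglyMeasurable (F z) μ)
    (hdiff : ∀ᵐ a ∂μ, DifferentiableOn ℂ (F · a) U) {z : ℂ} (hz : z ∈ U) :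
    AEStronglyMeasurable (fun a ↦ deriv (F · a) z) μ := by
  classical
  refine aestronglyMeasurable_of_tendsto_ae (𝓝[≠] z)
    (f := fun y a ↦ if y ∈ U then slope (F · a) z y else 0) (fun y ↦ ?_) ?_
  · by_cases hy : y ∈ U
    · simp only [hy, if_true]
      exact ((hmeas y hy).sub (hmeas z hz)).const_smul (y - z)⁻¹
    · simp only [hy, if_false]
      exact aestronglyMeasurable_const
  · filter_upwards [hdiff] with a ha
    refine (ha.differentiableAt (hU.mem_nhds hz)).hasDerivAt.tendsto_slope.congr' ?_
    filter_upwards [nhdsWithin_le_nhds (hU.mem_nhds hz)] with y hy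
    rw [if_pos hy]

theorem differentiableOn_integral_of_norm_le [CompleteSpace E] (hU : IsOpen U)
    (hmeas : ∀ z ∈ U, AEStronglyMeasurable (F z) μ)
    (hdiff : ∀ᵐ a ∂μ, DifferentiableOn ℂ (F · a) U)
    (hbound : ∀ᵐ a ∂μ, ∀ z ∈ U, ‖F z a‖ ≤ bound a) (hint : Integrable bound μ) :
    DifferentiableOn ℂ (fun z ↦ ∫ a, F z a ∂μ) U := by
  intro z₀ hz₀
  obtain ⟨r, hr, hball⟩ := Metric.isOpen_iff.mp hU z₀ hz₀
  have hsub {z : ℂ} (hz : z ∈ Metric.ball z₀ (r / 2)) : Metric.closedBall z (r / 3) ⊆ U := by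
    intro y hy
    rw [Metric.mem_ball] at hz
    rw [Metric.mem_closedBall] at hy
    exact hball (by rw [Metric.mem_ball]; linarith [dist_triangle y z z₀])
  have hderiv_le : ∀ᵐ a ∂μ, ∀ z ∈ Metric.ball z₀ (r / 2),
      ‖deriv (F · a) z‖ ≤ bound a / (r / 3) := by
    filter_upwards [hdiff, hbound] with a ha hb z hz
    exact norm_deriv_le_of_forall_mem_sphere_norm_le (by positivity)
      ((ha.mono (hsub hz)).diffContOnCl_ball le_rfl)
      fun y hy ↦ hb y (hsub hz (Metric.sphere_subset_closedBall hy))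
  have hhasDeriv : ∀ᵐ a ∂μ, ∀ z ∈ Metric.ball z₀ (r / 2),
      HasDerivAt (F · a) (deriv (F · a) z) z := by
    filter_upwards [hdiff] with a ha z hz
    have hzU : z ∈ U := hsub hz (Metric.mem_closedBall_self (by positivity))
    exact (ha.differentiableAt (hU.mem_nhds hzU)).hasDerivAt
  exact (hasDerivAt_integral_of_dominated_loc_of_deriv_le
    (Metric.ball_mem_nhds _ (by positivity)) (eventually_of_mem (hU.mem_nhds hz₀) hmeas)
    (hint.mono' (hmeas z₀ hz₀) (hbound.mono fun a ha ↦ ha z₀ hz₀))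
    (aestronglyMeasurable_deriv_of_differentiableOn hU hmeas hdiff hz₀) hderiv_le
    (hint.div_const _) hhasDeriv).2.differentiableAt.differentiableWithinAt

end ParametricIntegral

section ExplicitFormula

variable {w : ℝ → ℂ} {A a₀ σ : ℝ} {s : ℂ} {N : ℕ}

/-- The Fourier transform of `w` in the angular frequency `a`, i.e. with kernel `e^{-ita}` instead
of Mathlib's `e^{-2πita}`; the frequency `log n` then corresponds to the Dirichlet series term
`n^{-it}`. -/
def angularFourier (w : ℝ → ℂ) (a : ℝ) : ℂ := ∫ t : ℝ, w t * cexp ((-(t * a) : ℝ) * I)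

theorem integrable_mul_exp (hw : Integrable w) (a : ℝ) :
    Integrable fun t : ℝ ↦ w t * cexp ((-(t * a) : ℝ) * I) :=
  hw.mul_bdd (c := 1) (by fun_prop) (.of_forall fun _ ↦ (norm_exp_ofReal_mul_I _).le)

theorem continuous_angularFourier (hw : Integrable w) : Continuous (angularFourier w) := by
  refine continuous_of_dominated (fun a ↦ (integrable_mul_exp hw a).aestronglyMeasurable)
    (bound := fun t ↦ ‖w t‖) (fun a ↦ .of_forall fun t ↦ ?_) hw.norm
    (.of_forall fun t ↦ by fun_prop)
  rw [norm_mul, norm_exp_ofReal_mul_I, mul_one]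

theorem term_add_ofReal_mul_I (f : ℕ → ℂ) (s : ℂ) (t : ℝ) (n : ℕ) :
    LSeries.term f (s + t * I) n =
      LSeries.term f s n * cexp ((-(t * Real.log n) : ℝ) * I) := by
  rcases eq_or_ne n 0 with rfl | hn
  · simp only [LSeries.term_zero, zero_mul]
  · have hn' : (n : ℂ) ≠ 0 := Nat.cast_ne_zero.mpr hn
    rw [LSeries.term_of_ne_zero hn, LSeries.term_of_ne_zero hn, cpow_add _ _ hn', ← div_div,
      div_eq_mul_inv _ ((n : ℂ) ^ _), cpow_def_of_ne_zero hn' (t * I), ← Complex.exp_neg,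
      ← natCast_log]
    push_cast
    ring_nf

theorem integral_mul_LSeries {f : ℕ → ℂ} (hw : Integrable w) (hf : LSeriesSummable f s) :
    ∫ t : ℝ, w t * LSeries f (s + t * I) =
      ∑' n : ℕ, LSeries.term f s n * angularFourier w (Real.log n) := by
  have hterm (n : ℕ) (t : ℝ) : w t * LSeries.term f (s + t * I) n =
      LSeries.term f s n * (w t * cexp ((-(t * Real.log n) : ℝ) * I)) := by
    rw [term_add_ofReal_mul_I]
    ring
  have hsummable :
      Summable fun n ↦ ∫ t : ℝ, ‖w t * LSeries.term f (s + t * I) n‖ := by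
    simp only [hterm, norm_mul, norm_exp_ofReal_mul_I, mul_one, integral_const_mul]
    exact hf.norm.mul_right _
  simp only [LSeries, ← tsum_mul_left]
  rw [← integral_tsum_of_summable_integral_norm (fun n ↦ ?_) hsummable]
  · simp only [hterm, integral_const_mul, angularFourier]
  · simp only [hterm]
    exact (integrable_mul_exp hw _).const_mul _

theorem integrable_mul_one_div_add (hw : Integrable w) (hs : 0 < s.re) :
    Integrable fun t : ℝ ↦ w t * (1 / (s + t * I)) := by
  have hre (t : ℝ) : s.re ≤ ‖s + t * I‖ := by
    simpa using Complex.re_le_norm (s + t * I)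
  have hne (t : ℝ) : s + t * I ≠ 0 := norm_pos_iff.mp (hs.trans_le (hre t))
  refine hw.mul_bdd (c := 1 / s.re)
    (continuous_const.div (by fun_prop) hne).aestronglyMeasurable (.of_forall fun t ↦ ?_)
  rw [norm_div, norm_one]
  exact one_div_le_one_div_of_le hs (hre t)

theorem integral_mul_one_div_add (hw : Integrable w) (hs : 0 < s.re) :
    ∫ t : ℝ, w t * (1 / (s + t * I)) =
      ∫ a in Ioi (0 : ℝ), cexp (-s * a) * angularFourier w a := by
  have hLaplace (t : ℝ) : w t * (1 / (s + t * I)) =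
      ∫ a in Ioi (0 : ℝ), w t * cexp (-s * a) * cexp ((-(t * a) : ℝ) * I) := by
    have hexp (a : ℝ) : w t * cexp (-s * a) * cexp ((-(t * a) : ℝ) * I) =
        w t * cexp (-(s + t * I) * a) := by
      rw [mul_assoc, ← Complex.exp_add]
      push_cast
      ring_nf
    simp only [hexp]
    rw [integral_const_mul, integral_exp_mul_complex_Ioi (by simpa using hs), ofReal_zero,
      mul_zero, Complex.exp_zero, neg_div_neg_eq]
  have hint : Integrable (fun a : ℝ ↦ cexp (-s * a)) (volume.restrict (Ioi 0)) :=
    integrableOn_exp_mul_complex_Ioi (by simpa using hs) 0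
  have hprod : Integrable (Function.uncurry fun (t a : ℝ) ↦
      w t * cexp (-s * a) * cexp ((-(t * a) : ℝ) * I)) (volume.prod (volume.restrict (Ioi 0))) :=
    (hw.mul_prod hint).mul_bdd (c := 1) (by fun_prop)
      (.of_forall fun _ ↦ (norm_exp_ofReal_mul_I _).le)
  simp only [hLaplace]
  rw [integral_integral_swap hprod]
  refine integral_congr_ae (.of_forall fun a ↦ ?_)
  simp only [angularFourier, ← integral_const_mul]
  congr 1 with t
  ring

theorem integral_mul_one_div_add_eq_setIntegral_Ioc (hw : Integrable w)
    (hw₀ : ∀ a, a₀ ≤ a → angularFourier w a = 0) (hs : 0 < s.re) :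
    ∫ t : ℝ, w t * (1 / (s + t * I)) =
      ∫ a in Ioc 0 a₀, cexp (-s * a) * angularFourier w a := by
  rw [integral_mul_one_div_add hw hs]
  refine setIntegral_eq_of_subset_of_forall_sdiff_eq_zero measurableSet_Ioi
    Ioc_subset_Ioi_self fun a ha ↦ ?_
  rw [hw₀ a (not_lt.mp fun h ↦ ha.2 ⟨ha.1, h.le⟩), mul_zero]

theorem integral_mul_LSeries_eq_sum_range {f : ℕ → ℂ} (hw : Integrable w)
    (hw₀ : ∀ a, a₀ ≤ a → angularFourier w a = 0) (hN : a₀ ≤ Real.log (N + 1))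
    (hf : LSeriesSummable f s) :
    ∫ t : ℝ, w t * LSeries f (s + t * I) =
      ∑ n ∈ Finset.range (N + 1), LSeries.term f s n * angularFourier w (Real.log n) := by
  rw [integral_mul_LSeries hw hf, tsum_eq_sum fun n hn ↦ ?_]
  have hNn : (N + 1 : ℝ) ≤ n := by exact_mod_cast not_lt.mp (mt Finset.mem_range.mpr hn)
  rw [hw₀ _ (hN.trans (Real.log_le_log (by positivity) hNn)), mul_zero]

theorem integrable_of_norm_le_div_sq (hmeas : AEStronglyMeasurable w)
    (hw : ∀ t, ‖w t‖ ≤ A / (1 + |t|) ^ 2) : Integrable w := by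
  have hint := (integrable_one_add_norm (E := ℝ) (μ := volume) (r := 2) (by simp)).const_mul A
  refine hint.mono' hmeas (.of_forall fun t ↦ (hw t).trans_eq ?_)
  rw [Real.rpow_neg (by positivity), Real.norm_eq_abs, div_eq_mul_inv, Real.rpow_two]

theorem log_three_add_le {α u : ℝ} (hα : 0 < α) (hα' : α ≤ 1) (hu : 0 ≤ u) :
    Real.log (3 + u) ≤ 3 / α * (1 + u) ^ α := by
  calc Real.log (3 + u) ≤ (3 + u) ^ α / α := Real.log_le_rpow_div (by linarith) hα
    _ ≤ (3 * (1 + u)) ^ α / α := by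
        gcongr
        linarith
    _ = 3 ^ α * (1 + u) ^ α / α := by rw [Real.mul_rpow (by norm_num) (by linarith)]
    _ ≤ 3 * (1 + u) ^ α / α := by
        gcongr
        exact Real.rpow_le_self_of_one_le (by norm_num) hα'
    _ = 3 / α * (1 + u) ^ α := by ring

theorem exists_norm_mul_zetaLogDerivRemainder_le (hRH : RiemannHypothesis) {ε : ℝ} (hε : 0 < ε)
    (hε' : ε < 1 / 2) (hw : ∀ t, ‖w t‖ ≤ A / (1 + |t|) ^ 2) :
    ∃ C : ℝ, ∀ s : ℂ, 1 / 2 + ε ≤ s.re → s.re ≤ 3 → |s.im| ≤ 1 → ∀ t : ℝ,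
      ‖w t * zetaLogDerivRemainder (s + t * I)‖ ≤ C * (1 + ‖t‖) ^ (-(3 / 2) : ℝ) := by
  obtain ⟨C, hC, hbound⟩ := exists_norm_zetaLogDerivRemainder_le hRH hε hε'
  refine ⟨6 * A * C, fun s hs hs' him t ↦ ?_⟩
  have hA : 0 ≤ A / (1 + |t|) ^ 2 := (norm_nonneg _).trans (hw t)
  have him' : 2 + |(s + t * I).im| ≤ 3 + |t| := by
    have : (s + t * I).im = s.im + t := by simp
    rw [this]
    linarith [abs_add_le s.im t]
  have hlog : Real.log (2 + |(s + t * I).im|) ≤ 6 * (1 + |t|) ^ (1 / 2 : ℝ) := by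
    refine (Real.log_le_log (by positivity) him').trans
      ((log_three_add_le one_half_pos one_half_lt_one.le (abs_nonneg t)).trans_eq ?_)
    norm_num
  have hpow : (1 + |t|) ^ (1 / 2 : ℝ) / (1 + |t|) ^ 2 = (1 + ‖t‖) ^ (-(3 / 2) : ℝ) := by
    rw [Real.norm_eq_abs, ← Real.rpow_two, ← Real.rpow_sub (by positivity)]
    norm_num
  calc ‖w t * zetaLogDerivRemainder (s + t * I)‖
      ≤ A / (1 + |t|) ^ 2 * (C * Real.log (2 + |(s + t * I).im|)) := by
        rw [norm_mul]
        exact mul_le_mul (hw t) (hbound _ (by simpa using hs) (by simpa using hs'))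
          (norm_nonneg _) hA
    _ ≤ A / (1 + |t|) ^ 2 * (C * (6 * (1 + |t|) ^ (1 / 2 : ℝ))) := by gcongr
    _ = 6 * A * C * ((1 + |t|) ^ (1 / 2 : ℝ) / (1 + |t|) ^ 2) := by ring
    _ = 6 * A * C * (1 + ‖t‖) ^ (-(3 / 2) : ℝ) := by rw [hpow]

theorem continuous_zetaLogDerivRemainder_vertical (hRH : RiemannHypothesis) (hs : 1 / 2 < s.re) :
    Continuous fun t : ℝ ↦ zetaLogDerivRemainder (s + t * I) := by
  rw [continuous_iff_continuousAt]
  intro t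
  exact ContinuousAt.comp (f := fun t : ℝ ↦ s + t * I)
    (differentiableAt_zetaLogDerivRemainder hRH (by simpa using hs)).continuousAt (by fun_prop)

/-- The rectangle in which the explicit formula is continued from `re s > 1` to `re s > 1 / 2 + ε`;
its left edge keeps a distance from the critical line, so that the remainder is bounded by
`log |t|` on it. -/
def continuationRect (ε : ℝ) : Set ℂ := Ioo (1 / 2 + ε) 3 ×ℂ Ioo (-1) 1

theorem isOpen_continuationRect (ε : ℝ) : IsOpen (continuationRect ε) :=
  isOpen_Ioo.reProdIm isOpen_Ioo

theorem isPreconnected_continuationRect (ε : ℝ) : IsPreconnected (continuationRect ε) :=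
  (((convex_Ioo _ _).linear_preimage reLm).inter
    ((convex_Ioo _ _).linear_preimage imLm)).isPreconnected

theorem ofReal_mem_continuationRect {ε x : ℝ} (hx : 1 / 2 + ε < x) (hx' : x < 3) :
    (x : ℂ) ∈ continuationRect ε := by
  rw [continuationRect, mem_reProdIm, ofReal_re, ofReal_im]
  exact ⟨⟨hx, hx'⟩, by norm_num, zero_lt_one⟩

theorem integrable_and_differentiableOn_integral_mul_zetaLogDerivRemainder
    (hRH : RiemannHypothesis) (hmeas : AEStronglyMeasurable w)
    (hw : ∀ t, ‖w t‖ ≤ A / (1 + |t|) ^ 2) {ε : ℝ} (hε : 0 < ε) (hε' : ε < 1 / 2) :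
    (∀ s ∈ continuationRect ε, Integrable fun t : ℝ ↦ w t * zetaLogDerivRemainder (s + t * I)) ∧
      DifferentiableOn ℂ (fun s : ℂ ↦ ∫ t : ℝ, w t * zetaLogDerivRemainder (s + t * I))
        (continuationRect ε) := by
  obtain ⟨C, hC⟩ := exists_norm_mul_zetaLogDerivRemainder_le hRH hε hε' hw
  have hbound (t : ℝ) : ∀ s ∈ continuationRect ε,
      ‖w t * zetaLogDerivRemainder (s + t * I)‖ ≤ C * (1 + ‖t‖) ^ (-(3 / 2) : ℝ) :=
    fun s hs ↦ hC s hs.1.1.le hs.1.2.le (abs_le.mpr ⟨hs.2.1.le, hs.2.2.le⟩) t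
  have hint : Integrable fun t : ℝ ↦ C * (1 + ‖t‖) ^ (-(3 / 2) : ℝ) :=
    (integrable_one_add_norm (by norm_num)).const_mul C
  have hmeas' : ∀ s ∈ continuationRect ε,
      AEStronglyMeasurable fun t : ℝ ↦ w t * zetaLogDerivRemainder (s + t * I) :=
    fun s hs ↦ hmeas.mul (continuous_zetaLogDerivRemainder_vertical hRH
      (by linarith [hs.1.1])).aestronglyMeasurable
  refine ⟨fun s hs ↦ hint.mono' (hmeas' s hs) (.of_forall fun t ↦ hbound t s hs),
    differentiableOn_integral_of_norm_le (isOpen_continuationRect ε) hmeas'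
      (.of_forall fun t s hs ↦ ?_) (.of_forall hbound) hint⟩
  have hre : 1 / 2 < (s + t * I).re := by simpa using (lt_add_of_pos_right _ hε).trans hs.1.1
  exact ((differentiableAt_zetaLogDerivRemainder hRH hre).comp (f := fun s : ℂ ↦ s + t * I) s
    (by fun_prop)).const_mul _ |>.differentiableWithinAt

theorem differentiable_setIntegral_Ioc_exp_mul {g : ℝ → ℂ} (hg : Continuous g) :
    Differentiable ℂ fun s : ℂ ↦ ∫ a in Ioc 0 a₀, cexp ((1 - s) * a) * g a := by
  intro s₀
  have hdiff : DifferentiableOn ℂ (fun s : ℂ ↦ ∫ a in Ioc 0 a₀, cexp ((1 - s) * a) * g a)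
      {s | s₀.re - 1 < s.re} := by
    refine differentiableOn_integral_of_norm_le
      (bound := fun a ↦ Real.exp ((2 - s₀.re) * a) * ‖g a‖)
      (isOpen_lt continuous_const continuous_re)
      (fun s _ ↦ Continuous.aestronglyMeasurable (by fun_prop))
      (.of_forall fun a ↦ Differentiable.differentiableOn (by fun_prop)) ?_
      (Continuous.integrableOn_Ioc (by fun_prop))
    refine (ae_restrict_mem measurableSet_Ioc).mono fun a ha s hs ↦ ?_
    rw [norm_mul, Complex.norm_exp, re_mul_ofReal, sub_re, one_re]
    have hre : 1 - s.re ≤ 2 - s₀.re := by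
      have : s₀.re - 1 < s.re := hs
      linarith
    have hle := mul_le_mul_of_nonneg_right hre ha.1.le
    gcongr
  exact hdiff.differentiableAt
    ((isOpen_lt continuous_const continuous_re).mem_nhds (sub_one_lt s₀.re))

theorem differentiable_term_mul (f : ℕ → ℂ) (n : ℕ) (c : ℂ) :
    Differentiable ℂ fun s ↦ LSeries.term f s n * c :=
  fun s ↦ (LSeries.hasDerivAt_term f n s).differentiableAt.mul_const c

theorem integral_mul_zetaLogDerivRemainder_of_one_lt_re (hw : Integrable w)
    (hw₀ : ∀ a, a₀ ≤ a → angularFourier w a = 0) (hN : a₀ ≤ Real.log (N + 1)) (hs : 1 < s.re)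
    (hint : Integrable fun t : ℝ ↦ w t * zetaLogDerivRemainder (s + t * I)) :
    ∫ t : ℝ, w t * zetaLogDerivRemainder (s + t * I) =
      ∑ n ∈ Finset.range (N + 1), LSeries.term (fun n ↦ Λ n) s n * angularFourier w (Real.log n) -
        ∫ a in Ioc 0 a₀, cexp ((1 - s) * a) * angularFourier w a := by
  have hs' : 0 < (s - 1).re := by simpa using hs
  have hsplit (t : ℝ) : w t * LSeries (fun n ↦ Λ n) (s + t * I) =
      w t * zetaLogDerivRemainder (s + t * I) + w t * (1 / (s - 1 + t * I)) := by
    rw [zetaLogDerivRemainder_eq (by simpa using hs)]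
    ring
  rw [eq_sub_iff_add_eq, ← neg_sub s 1,
    ← integral_mul_one_div_add_eq_setIntegral_Ioc hw hw₀ hs',
    ← integral_add hint (integrable_mul_one_div_add hw hs'),
    ← integral_mul_LSeries_eq_sum_range hw hw₀ hN
      (ArithmeticFunction.LSeriesSummable_vonMangoldt hs)]
  simp only [hsplit]

theorem integrable_and_integral_mul_zetaLogDerivRemainder (hRH : RiemannHypothesis)
    (hmeas : AEStronglyMeasurable w) (hw : ∀ t, ‖w t‖ ≤ A / (1 + |t|) ^ 2)
    (hw₀ : ∀ a, a₀ ≤ a → angularFourier w a = 0) (hN : a₀ ≤ Real.log (N + 1))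
    (hσ : 1 / 2 < σ) (hσ' : σ ≤ 1) :
    Integrable (fun t : ℝ ↦ w t * zetaLogDerivRemainder (σ + t * I)) ∧
      ∫ t : ℝ, w t * zetaLogDerivRemainder (σ + t * I) =
        ∑ n ∈ Finset.range (N + 1),
            LSeries.term (fun n ↦ Λ n) σ n * angularFourier w (Real.log n) -
          ∫ a in Ioc 0 a₀, cexp ((1 - σ) * a) * angularFourier w a := by
  obtain ⟨ε, hε, hεσ⟩ : ∃ ε, 0 < ε ∧ ε < σ - 1 / 2 := exists_between (by linarith)
  have hwint := integrable_of_norm_le_div_sq hmeas hw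
  obtain ⟨hint, hleft⟩ := integrable_and_differentiableOn_integral_mul_zetaLogDerivRemainder
    hRH hmeas hw hε (by linarith)
  have hright : Differentiable ℂ fun s : ℂ ↦
      ∑ n ∈ Finset.range (N + 1), LSeries.term (fun n ↦ Λ n) s n * angularFourier w (Real.log n) -
        ∫ a in Ioc 0 a₀, cexp ((1 - s) * a) * angularFourier w a :=
    (Differentiable.fun_sum fun n _ ↦ differentiable_term_mul _ n _).sub
      (differentiable_setIntegral_Ioc_exp_mul (continuous_angularFourier hwint))
  have hopen := isOpen_continuationRect ε
  have htwo : ((2 : ℝ) : ℂ) ∈ continuationRect ε :=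
    ofReal_mem_continuationRect (by linarith) (by norm_num)
  have hσmem : (σ : ℂ) ∈ continuationRect ε :=
    ofReal_mem_continuationRect (by linarith) (by linarith)
  refine ⟨hint σ hσmem, AnalyticOnNhd.eqOn_of_preconnected_of_eventuallyEq
    (hleft.analyticOnNhd hopen) (hright.differentiableOn.analyticOnNhd hopen)
    (isPreconnected_continuationRect ε) htwo ?_ hσmem⟩
  filter_upwards [hopen.mem_nhds htwo, (isOpen_lt continuous_const continuous_re).mem_nhds
    (show 1 < ((2 : ℝ) : ℂ).re by norm_num)] with s hs hs'
  exact integral_mul_zetaLogDerivRemainder_of_one_lt_re hwint hw₀ hN hs' (hint s hs)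

end ExplicitFormula

section Inversion

open scoped ComplexConjugate

variable {f : ℝ → ℂ} {g : ℝ → ℝ} {c : ℝ}

theorem fourier_eq_angularFourier (f : ℝ → ℂ) (ξ : ℝ) :
    FourierTransform.fourier f ξ = angularFourier f (2 * π * ξ) := by
  rw [Real.fourier_real_eq_integral_exp_smul, angularFourier]
  congr 1 with t
  rw [smul_eq_mul, mul_comm]
  ring_nf

theorem angularFourier_comp_mul_left (f : ℝ → ℂ) (hc : 0 < c) (a : ℝ) :
    angularFourier (fun t ↦ f (c * t)) (c * a) = (c : ℂ)⁻¹ * angularFourier f a := by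
  have hscale := Measure.integral_comp_mul_left (fun t : ℝ ↦ f t * cexp ((-(t * a) : ℝ) * I)) c
  rw [abs_of_pos (inv_pos.mpr hc), real_smul, ofReal_inv] at hscale
  rw [angularFourier, angularFourier, ← hscale]
  congr 1 with t
  ring_nf

theorem angularFourier_angularFourier (hf : Continuous f) (hint : Integrable f)
    (hint' : Integrable (angularFourier f)) (a : ℝ) :
    angularFourier (angularFourier f) a = 2 * π * f (-a) := by
  have hfourier : FourierTransform.fourier f = fun ξ ↦ angularFourier f (2 * π * ξ) :=
    funext (fourier_eq_angularFourier f)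
  have hfourier_int : Integrable (FourierTransform.fourier f) := by
    rw [hfourier]
    exact hint'.comp_mul_left' two_pi_pos.ne'
  have hinv := congrFun (hf.fourierInv_fourier_eq hint hfourier_int) (-a)
  rw [Real.fourierInv_eq_fourier_neg, neg_neg, fourier_eq_angularFourier, hfourier,
    angularFourier_comp_mul_left _ two_pi_pos] at hinv
  have hpi : (π : ℂ) ≠ 0 := ofReal_ne_zero.mpr pi_ne_zero
  rw [← hinv, ofReal_mul, ofReal_ofNat]
  field_simp

theorem angularFourier_ofReal_of_even (hg : Continuous g) (heven : ∀ a, g (-a) = g a)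
    (hsupp : ∀ a, c ≤ |a| → g a = 0) (t : ℝ) :
    angularFourier (fun a ↦ (g a : ℂ)) t =
      (2 * (∫ a in (0 : ℝ)..c, (g a : ℂ) * cexp ((t * a : ℝ) * I)).re : ℝ) := by
  set h : ℝ → ℂ := fun a ↦ (g a : ℂ) * cexp ((-(a * t) : ℝ) * I)
  have hint (u v : ℝ) : IntervalIntegrable h volume u v :=
    Continuous.intervalIntegrable (by fun_prop) u v
  have hsupp' : Function.support h ⊆ Ioc (-c) c := fun a ha ↦ by
    have hac : |a| < c := not_le.mp fun hca ↦
      ha (by simp only [h, hsupp a hca, ofReal_zero, zero_mul])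
    exact ⟨(abs_lt.mp hac).1, (abs_lt.mp hac).2.le⟩
  have hneg (a : ℝ) : h (-a) = g a * cexp ((t * a : ℝ) * I) := by
    simp only [h, heven]
    ring_nf
  have hconj (a : ℝ) : h a = conj ((g a : ℂ) * cexp ((t * a : ℝ) * I)) := by
    rw [map_mul, ← exp_conj, map_mul, conj_ofReal, conj_ofReal, conj_I]
    simp only [h]
    push_cast
    ring_nf
  have hleft : ∫ a in -c..0, h a = ∫ a in (0 : ℝ)..c, (g a : ℂ) * cexp ((t * a : ℝ) * I) := by
    rw [← neg_zero, ← intervalIntegral.integral_comp_neg, neg_zero]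
    simp only [hneg]
  have hright : ∫ a in (0 : ℝ)..c, h a =
      conj (∫ a in (0 : ℝ)..c, (g a : ℂ) * cexp ((t * a : ℝ) * I)) := by
    simp only [hconj]
    exact intervalIntegral.intervalIntegral_conj
  rw [angularFourier, ← intervalIntegral.integral_eq_integral_of_support_subset hsupp',
    ← intervalIntegral.integral_add_adjacent_intervals (hint _ 0) (hint 0 _), hleft, hright,
    add_conj]

end Inversion

section Ramp

variable {b η a σ : ℝ} {s : ℂ}

/-- The continuous cutoff which is `1` on `(-∞, b]`, `0` on `[b + η, ∞)` and affine in between. -/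
def ramp (b η a : ℝ) : ℝ := max 0 (min 1 ((b + η - a) / η))

@[fun_prop]
theorem continuous_ramp : Continuous (ramp b η) := by
  unfold ramp
  fun_prop

theorem ramp_nonneg : 0 ≤ ramp b η a := le_max_left _ _

theorem ramp_le_one : ramp b η a ≤ 1 := max_le zero_le_one (min_le_left _ _)

theorem ramp_eq_one (hη : 0 < η) (ha : a ≤ b) : ramp b η a = 1 := by
  have hle : 1 ≤ (b + η - a) / η := by
    rw [le_div_iff₀ hη]
    linarith
  rw [ramp, min_eq_left hle, max_eq_right zero_le_one]

theorem ramp_eq_zero (hη : 0 < η) (ha : b + η ≤ a) : ramp b η a = 0 :=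
  max_eq_left <| (min_le_right _ _).trans <|
    div_nonpos_of_nonpos_of_nonneg (by linarith) hη.le

theorem ramp_eq_div (hη : 0 < η) (ha : b ≤ a) (ha' : a ≤ b + η) :
    ramp b η a = (b + η - a) / η := by
  have hle : (b + η - a) / η ≤ 1 := by
    rw [div_le_one hη]
    linarith
  rw [ramp, min_eq_right hle, max_eq_right (div_nonneg (by linarith) hη.le)]

/-- The Laplace transform of the ramp on the positive half-line, with the sign convention
`e^{sa}`. -/
def rampLaplace (b η : ℝ) (s : ℂ) : ℂ := ∫ a in (0 : ℝ)..b + η, cexp (s * a) * ramp b η a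

theorem integral_exp_mul_affine (hη : η ≠ 0) (hs : s ≠ 0) :
    ∫ a in b..b + η, cexp (s * a) * ((b + η - a) / η) =
      cexp (s * b) * (cexp (s * η) - 1) / (η * s ^ 2) - cexp (s * b) / s := by
  have hη' : (η : ℂ) ≠ 0 := ofReal_ne_zero.mpr hη
  have hderiv (a : ℝ) : HasDerivAt (fun a : ℝ ↦ cexp (s * a) *
      ((b + η - a) / (s * η) + 1 / (s ^ 2 * η))) (cexp (s * a) * ((b + η - a) / η)) a := by
    have hid : HasDerivAt (fun a : ℝ ↦ (a : ℂ)) 1 a := ofRealCLM.hasDerivAt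
    refine ((hid.const_mul s).cexp.mul
      (((hid.const_sub (b + η : ℂ)).div_const (s * η)).add_const _)).congr_deriv ?_
    field_simp
    ring
  rw [intervalIntegral.integral_eq_sub_of_hasDerivAt (fun a _ ↦ hderiv a)
    (Continuous.intervalIntegrable (by fun_prop) _ _), ofReal_add, mul_add s, Complex.exp_add]
  field_simp
  ring

theorem rampLaplace_eq (hb : 0 ≤ b) (hη : 0 < η) (hs : s ≠ 0) :
    rampLaplace b η s = cexp (s * b) * (cexp (s * η) - 1) / (η * s ^ 2) - 1 / s := by
  have hint (u v : ℝ) : IntervalIntegrable (fun a : ℝ ↦ cexp (s * a) * (ramp b η a : ℂ))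
      volume u v := Continuous.intervalIntegrable (by fun_prop) _ _
  have hflat : ∫ a in (0 : ℝ)..b, cexp (s * a) * ramp b η a = ∫ a in (0 : ℝ)..b, cexp (s * a) := by
    refine intervalIntegral.integral_congr fun a ha ↦ ?_
    rw [uIcc_of_le hb] at ha
    simp only [ramp_eq_one hη ha.2, ofReal_one, mul_one]
  have hslope : ∫ a in b..b + η, cexp (s * a) * ramp b η a =
      ∫ a in b..b + η, cexp (s * a) * ((b + η - a) / η) := by
    refine intervalIntegral.integral_congr fun a ha ↦ ?_
    rw [uIcc_of_le (by linarith)] at ha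
    simp only [ramp_eq_div hη ha.1 ha.2, ofReal_div, ofReal_sub, ofReal_add]
  rw [rampLaplace, ← intervalIntegral.integral_add_adjacent_intervals (hint 0 b) (hint b _), hflat,
    hslope, integral_exp_mul_complex hs, integral_exp_mul_affine hη.ne' hs, ofReal_zero, mul_zero,
    Complex.exp_zero]
  ring

theorem norm_exp_sub_one_le_two_mul_exp_re (hs : 0 ≤ s.re) :
    ‖cexp s - 1‖ ≤ 2 * Real.exp s.re := by
  have hle := norm_sub_le (cexp s) 1
  rw [Complex.norm_exp, norm_one] at hle
  linarith [Real.one_le_exp hs]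

theorem norm_exp_sub_one_le_two_mul_norm_mul_exp_re (hs : 0 ≤ s.re) :
    ‖cexp s - 1‖ ≤ 2 * ‖s‖ * Real.exp s.re := by
  have hone := Real.one_le_exp hs
  rcases le_total ‖s‖ 1 with h | h
  · nlinarith [Complex.norm_exp_sub_one_le h, norm_nonneg s]
  · nlinarith [norm_exp_sub_one_le_two_mul_exp_re hs]

theorem norm_exp_mul_exp_sub_one_div (hη : 0 ≤ η) :
    ‖cexp (s * b) * (cexp (s * η) - 1) / (η * s ^ 2)‖ =
      Real.exp (s.re * b) * ‖cexp (s * η) - 1‖ / (η * ‖s‖ ^ 2) := by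
  rw [norm_div, norm_mul, norm_mul, norm_pow, Complex.norm_of_nonneg hη, Complex.norm_exp,
    re_mul_ofReal]

theorem norm_rampLaplace_le (hb : 0 ≤ b) (hη : 0 < η) (hs : 0 < s.re) :
    ‖rampLaplace b η s‖ ≤ 3 * Real.exp (s.re * (b + η)) / ‖s‖ := by
  have hs' : s ≠ 0 := fun h ↦ by simp [h] at hs
  have : 0 < ‖s‖ := norm_pos_iff.mpr hs'
  have hdiff := norm_exp_sub_one_le_two_mul_norm_mul_exp_re (s := s * η)
    (by rw [re_mul_ofReal]; positivity)
  rw [re_mul_ofReal, norm_mul, Complex.norm_of_nonneg hη.le] at hdiff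
  have hone : 1 ≤ Real.exp (s.re * (b + η)) := Real.one_le_exp (by positivity)
  rw [rampLaplace_eq hb hη hs']
  calc _ ≤ _ := norm_sub_le _ _
    _ ≤ Real.exp (s.re * b) * (2 * (‖s‖ * η) * Real.exp (s.re * η)) / (η * ‖s‖ ^ 2) +
          Real.exp (s.re * (b + η)) / ‖s‖ := by
        rw [norm_exp_mul_exp_sub_one_div hη.le, norm_div, norm_one]
        gcongr
    _ = 3 * Real.exp (s.re * (b + η)) / ‖s‖ := by
        rw [mul_add, Real.exp_add]
        field_simp
        ring

theorem abs_re_rampLaplace_le (hb : 0 ≤ b) (hη : 0 < η) (hs : 0 < s.re) :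
    |(rampLaplace b η s).re| ≤ 3 * Real.exp (s.re * (b + η)) / η / ‖s‖ ^ 2 := by
  have hs' : s ≠ 0 := fun h ↦ by simp [h] at hs
  have : 0 < ‖s‖ := norm_pos_iff.mpr hs'
  have hdiff := norm_exp_sub_one_le_two_mul_exp_re (s := s * η)
    (by rw [re_mul_ofReal]; positivity)
  rw [re_mul_ofReal] at hdiff
  have hpole : |(1 / s).re| ≤ Real.exp (s.re * (b + η)) / η / ‖s‖ ^ 2 := by
    rw [one_div, inv_re, normSq_eq_norm_sq, abs_of_nonneg (by positivity)]
    gcongr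
    rw [le_div_iff₀ hη]
    nlinarith [Real.add_one_le_exp (s.re * (b + η))]
  rw [rampLaplace_eq hb hη hs', sub_re]
  calc _ ≤ _ := abs_sub _ _
    _ ≤ Real.exp (s.re * b) * (2 * Real.exp (s.re * η)) / (η * ‖s‖ ^ 2) +
          Real.exp (s.re * (b + η)) / η / ‖s‖ ^ 2 := by
        refine add_le_add ((Complex.abs_re_le_norm _).trans ?_) hpole
        rw [norm_exp_mul_exp_sub_one_div hη.le]
        gcongr
    _ = 3 * Real.exp (s.re * (b + η)) / η / ‖s‖ ^ 2 := by
        rw [mul_add, Real.exp_add]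
        field_simp
        ring

/-- The even function `e^{σ|a|} ramp(|a|)`: its values at `log n` turn the coefficients
`Λ(n) n^{-σ}` of the explicit formula into `Λ(n) ramp(log n)`. -/
def tiltedRamp (σ b η a : ℝ) : ℝ := Real.exp (σ * |a|) * ramp b η |a|

@[fun_prop]
theorem continuous_tiltedRamp : Continuous (tiltedRamp σ b η) := by
  unfold tiltedRamp
  fun_prop

theorem tiltedRamp_neg : tiltedRamp σ b η (-a) = tiltedRamp σ b η a := by
  rw [tiltedRamp, tiltedRamp, abs_neg]

theorem tiltedRamp_of_nonneg (ha : 0 ≤ a) :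
    tiltedRamp σ b η a = Real.exp (σ * a) * ramp b η a := by
  rw [tiltedRamp, abs_of_nonneg ha]

theorem tiltedRamp_eq_zero (hη : 0 < η) (ha : b + η ≤ |a|) : tiltedRamp σ b η a = 0 := by
  rw [tiltedRamp, ramp_eq_zero hη ha, mul_zero]

theorem integrable_tiltedRamp (hη : 0 < η) : Integrable fun a ↦ (tiltedRamp σ b η a : ℂ) := by
  refine Continuous.integrable_of_hasCompactSupport (by fun_prop)
    (.intro (isCompact_Icc (a := -(b + η)) (b := b + η)) fun a ha ↦ ?_)
  rw [tiltedRamp_eq_zero hη (le_of_lt (not_le.mp (mt abs_le.mp ha))), ofReal_zero]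

/-- The weight on the line `re s = σ` whose angular Fourier transform is `tiltedRamp σ b η`. -/
def rampWeight (σ b η t : ℝ) : ℝ := (rampLaplace b η (σ + t * I)).re / π

theorem angularFourier_tiltedRamp (hb : 0 ≤ b) (hη : 0 < η) (t : ℝ) :
    angularFourier (fun a ↦ (tiltedRamp σ b η a : ℂ)) t = 2 * π * rampWeight σ b η t := by
  have hlaplace : ∫ a in (0 : ℝ)..b + η, (tiltedRamp σ b η a : ℂ) * cexp ((t * a : ℝ) * I) =
      rampLaplace b η (σ + t * I) := by
    refine intervalIntegral.integral_congr fun a ha ↦ ?_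
    rw [uIcc_of_le (by linarith)] at ha
    rw [tiltedRamp_of_nonneg ha.1]
    push_cast
    rw [mul_right_comm, ← Complex.exp_add]
    ring_nf
  rw [angularFourier_ofReal_of_even continuous_tiltedRamp (fun _ ↦ tiltedRamp_neg)
    (fun _ ↦ tiltedRamp_eq_zero hη), hlaplace, rampWeight]
  push_cast
  have := ofReal_ne_zero.mpr pi_ne_zero
  field_simp

theorem continuous_rampWeight (hb : 0 ≤ b) (hη : 0 < η) : Continuous (rampWeight σ b η) := by
  have heq : rampWeight σ b η =
      fun t ↦ (angularFourier (fun a ↦ (tiltedRamp σ b η a : ℂ)) t).re / (2 * π) := by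
    ext t
    rw [angularFourier_tiltedRamp hb hη, ← ofReal_ofNat, ← ofReal_mul, ← ofReal_mul, ofReal_re,
      mul_div_cancel_left₀ _ two_pi_pos.ne']
  rw [heq]
  exact (continuous_re.comp (continuous_angularFourier (integrable_tiltedRamp hη))).div_const _

theorem one_add_abs_le_three_mul_norm (hσ : 1 / 2 ≤ σ) (t : ℝ) :
    1 + |t| ≤ 3 * ‖(σ + t * I : ℂ)‖ := by
  have him := Complex.abs_im_le_norm (σ + t * I : ℂ)
  have hre := Complex.re_le_norm (σ + t * I : ℂ)
  simp only [add_im, ofReal_im, im_ofReal_mul, I_im, mul_one, zero_add] at him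
  simp only [add_re, ofReal_re, re_ofReal_mul, I_re, mul_zero, add_zero] at hre
  linarith

theorem abs_rampWeight_le_abs_re_div_three (t : ℝ) :
    |rampWeight σ b η t| ≤ |(rampLaplace b η (σ + t * I)).re| / 3 := by
  rw [rampWeight, abs_div, abs_of_pos pi_pos]
  gcongr
  exact pi_gt_three.le

theorem abs_rampWeight_le (hb : 0 ≤ b) (hη : 0 < η) (hσ : 1 / 2 ≤ σ) (t : ℝ) :
    |rampWeight σ b η t| ≤ 9 * Real.exp (σ * (b + η)) / (1 + |t|) := by
  have hre : (σ + t * I : ℂ).re = σ := by simp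
  have hle := norm_rampLaplace_le hb hη (s := σ + t * I) (by rw [hre]; linarith)
  rw [hre] at hle
  have hnorm := one_add_abs_le_three_mul_norm hσ t
  calc |rampWeight σ b η t| ≤ |(rampLaplace b η (σ + t * I)).re| / 3 :=
        abs_rampWeight_le_abs_re_div_three t
    _ ≤ 3 * Real.exp (σ * (b + η)) / ‖(σ + t * I : ℂ)‖ / 3 := by
        gcongr
        exact (Complex.abs_re_le_norm _).trans hle
    _ = 3 * Real.exp (σ * (b + η)) / (3 * ‖(σ + t * I : ℂ)‖) := by ring
    _ ≤ 9 * Real.exp (σ * (b + η)) / (1 + |t|) := by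
        gcongr
        norm_num

theorem abs_rampWeight_le_div_sq (hb : 0 ≤ b) (hη : 0 < η) (hσ : 1 / 2 ≤ σ) (t : ℝ) :
    |rampWeight σ b η t| ≤ 9 * Real.exp (σ * (b + η)) / η / (1 + |t|) ^ 2 := by
  have hre : (σ + t * I : ℂ).re = σ := by simp
  have hle := abs_re_rampLaplace_le hb hη (s := σ + t * I) (by rw [hre]; linarith)
  rw [hre] at hle
  have hnorm : (1 + |t|) ^ 2 ≤ 9 * ‖(σ + t * I : ℂ)‖ ^ 2 := by
    calc (1 + |t|) ^ 2 ≤ (3 * ‖(σ + t * I : ℂ)‖) ^ 2 := by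
          gcongr
          exact one_add_abs_le_three_mul_norm hσ t
      _ = 9 * ‖(σ + t * I : ℂ)‖ ^ 2 := by ring
  calc |rampWeight σ b η t| ≤ |(rampLaplace b η (σ + t * I)).re| / 3 :=
        abs_rampWeight_le_abs_re_div_three t
    _ ≤ 3 * Real.exp (σ * (b + η)) / η / ‖(σ + t * I : ℂ)‖ ^ 2 / 3 := by gcongr
    _ = 9 * Real.exp (σ * (b + η)) / η / (9 * ‖(σ + t * I : ℂ)‖ ^ 2) := by ring
    _ ≤ 9 * Real.exp (σ * (b + η)) / η / (1 + |t|) ^ 2 := by gcongr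

theorem integrable_rampWeight (hb : 0 ≤ b) (hη : 0 < η) (hσ : 1 / 2 ≤ σ) :
    Integrable fun t ↦ (rampWeight σ b η t : ℂ) :=
  integrable_of_norm_le_div_sq
    (continuous_ofReal.comp (continuous_rampWeight hb hη)).aestronglyMeasurable fun t ↦ by
      simpa only [norm_real, Real.norm_eq_abs] using abs_rampWeight_le_div_sq hb hη hσ t

theorem angularFourier_rampWeight (hb : 0 ≤ b) (hη : 0 < η) (hσ : 1 / 2 ≤ σ) (a : ℝ) :
    angularFourier (fun t ↦ (rampWeight σ b η t : ℂ)) a = tiltedRamp σ b η a := by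
  have htransform : angularFourier (fun a ↦ (tiltedRamp σ b η a : ℂ)) =
      fun t ↦ 2 * π * (rampWeight σ b η t : ℂ) := funext (angularFourier_tiltedRamp hb hη)
  have hinv := angularFourier_angularFourier (f := fun a ↦ (tiltedRamp σ b η a : ℂ)) (by fun_prop)
    (integrable_tiltedRamp hη)
    (by rw [htransform]; exact (integrable_rampWeight hb hη hσ).const_mul _) a
  rw [tiltedRamp_neg, htransform] at hinv
  simp only [angularFourier, mul_assoc, integral_const_mul] at hinv
  have hpi : (π : ℂ) ≠ 0 := ofReal_ne_zero.mpr pi_ne_zero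
  exact mul_left_cancel₀ hpi (mul_left_cancel₀ two_ne_zero hinv)

end Ramp

section UnitCells

variable {a b A B M Y α β m u : ℝ} {g w : ℝ → ℝ}

theorem sum_one_add_rpow_le (hβ : 0 < β) (N : ℕ) :
    ∑ j ∈ Finset.range N, (1 + j : ℝ) ^ (-1 - β) ≤ 1 + 1 / β := by
  cases N with
  | zero =>
    rw [Finset.sum_range_zero]
    positivity
  | succ N =>
    have hanti : AntitoneOn (fun x : ℝ ↦ x ^ (-1 - β)) (Icc 1 (1 + N)) := fun x hx y _ hxy ↦
      Real.rpow_le_rpow_of_nonpos (zero_lt_one.trans_le hx.1) hxy (by linarith)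
    have hzero : (0 : ℝ) ∉ [[1, 1 + (N : ℝ)]] := by
      rw [uIcc_of_le (by linarith [N.cast_nonneg (α := ℝ)])]
      exact fun h ↦ absurd h.1 (by norm_num)
    have hint : ∫ x in (1 : ℝ)..1 + N, x ^ (-1 - β) = (1 - (1 + N : ℝ) ^ (-β)) / β := by
      rw [integral_rpow (.inr ⟨by linarith, hzero⟩), show -1 - β + 1 = -β by ring, Real.one_rpow,
        div_neg, ← neg_div, neg_sub]
    have htail : ∑ j ∈ Finset.range N, (1 + (j + 1 : ℕ) : ℝ) ^ (-1 - β) ≤ 1 / β := by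
      refine hanti.sum_le_integral.trans (hint.le.trans ?_)
      gcongr
      exact sub_le_self _ (by positivity)
    rw [Finset.sum_range_succ', Nat.cast_zero, add_zero, Real.one_rpow]
    linarith

theorem le_mul_rpow_of_le_div (hA : 0 ≤ A) (hY : 0 ≤ Y) (hu : 0 < u) (hα : 0 ≤ α) (hα' : α ≤ 1)
    (hm : m ≤ A / u) (hm' : m ≤ A * Y / u ^ 2) : m ≤ A * Y ^ α * u ^ (-1 - α) := by
  have heq : A * Y ^ α * u ^ (-1 - α) = A / u * (Y / u) ^ α := by
    rw [Real.div_rpow hY hu.le, neg_sub_left, Real.rpow_neg hu.le, Real.rpow_add_one hu.ne']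
    field_simp
  rw [heq]
  rcases le_total 1 (Y / u) with h | h
  · exact hm.trans (le_mul_of_one_le_right (by positivity) (Real.one_le_rpow h hα))
  · calc m ≤ A / u * (Y / u) := hm'.trans_eq (by field_simp)
      _ ≤ A / u * (Y / u) ^ α := by
        gcongr
        exact Real.self_le_rpow_of_le_one (by positivity) h hα'

theorem intervalIntegral_abs_mul_le (hab : a ≤ b) (hw : ∀ t ∈ Icc a b, |w t| ≤ m)
    (hg : IntervalIntegrable g volume a b)
    (hwg : IntervalIntegrable (fun t ↦ w t * g t) volume a b) :
    ∫ t in a..b, |w t * g t| ≤ m * ∫ t in a..b, |g t| := by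
  rw [← intervalIntegral.integral_const_mul]
  refine intervalIntegral.integral_mono_on hab hwg.abs (hg.abs.const_mul m) fun t ht ↦ ?_
  rw [abs_mul]
  exact mul_le_mul_of_nonneg_right (hw t ht) (abs_nonneg _)

theorem intervalIntegral_abs_mul_le_rpow (hM : 0 ≤ M) (hB : 0 ≤ B) (hα : 0 < α) (hα' : α ≤ 1)
    (hg : Continuous g) (hmass : ∀ k : ℝ, ∫ t in k..k + 1, |g t| ≤ M * Real.log (2 + |k|))
    (hw : ∀ t, |w t| ≤ B * (1 + |t|) ^ (-1 - α)) (hwg : Integrable fun t ↦ w t * g t)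
    {n : ℕ} {k : ℝ} (hk : |k| ≤ n + 1) (hcell : ∀ t ∈ Icc k (k + 1), n ≤ |t|) :
    ∫ t in k..k + 1, |w t * g t| ≤ 6 * M * B / α * (1 + n : ℝ) ^ (-1 - α / 2) := by
  have hn : (0 : ℝ) ≤ n := n.cast_nonneg
  have hweight : ∀ t ∈ Icc k (k + 1), |w t| ≤ B * (1 + n : ℝ) ^ (-1 - α) := fun t ht ↦ by
    refine (hw t).trans (mul_le_mul_of_nonneg_left ?_ hB)
    exact Real.rpow_le_rpow_of_nonpos (by positivity) (by linarith [hcell t ht]) (by linarith)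
  have hlog : Real.log (2 + |k|) ≤ 3 / (α / 2) * (1 + n) ^ (α / 2) :=
    (Real.log_le_log (by positivity) (by linarith)).trans
      (log_three_add_le (half_pos hα) (by linarith) hn)
  calc _ ≤ B * (1 + n : ℝ) ^ (-1 - α) * ∫ t in k..k + 1, |g t| :=
        intervalIntegral_abs_mul_le (by linarith) hweight (hg.intervalIntegrable _ _)
          hwg.intervalIntegrable
    _ ≤ B * (1 + n : ℝ) ^ (-1 - α) * (M * (3 / (α / 2) * (1 + n) ^ (α / 2))) := by
        gcongr
        exact (hmass k).trans (by gcongr)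
    _ = 6 * M * B / α * ((1 + n : ℝ) ^ (-1 - α) * (1 + n : ℝ) ^ (α / 2)) := by ring
    _ = 6 * M * B / α * (1 + n : ℝ) ^ (-1 - α / 2) := by
        rw [← Real.rpow_add (by positivity)]
        ring_nf

theorem abs_integral_mul_le_of_unit_mass (hM : 0 ≤ M) (hB : 0 ≤ B) (hα : 0 < α) (hα' : α ≤ 1)
    (hg : Continuous g) (hmass : ∀ k : ℝ, ∫ t in k..k + 1, |g t| ≤ M * Real.log (2 + |k|))
    (hw : ∀ t, |w t| ≤ B * (1 + |t|) ^ (-1 - α)) (hwg : Integrable fun t ↦ w t * g t) :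
    |∫ t, w t * g t| ≤ 36 * M * B / α ^ 2 := by
  have hsum := (hwg.abs.hasSum_intervalIntegral 0).nat_add_neg_add_one.tendsto_sum_nat
  refine (abs_integral_le_integral_abs).trans (le_of_tendsto' hsum fun N ↦ ?_)
  have hcells (n : ℕ) : (∫ t in 0 + ((n : ℤ) : ℝ)..0 + ((n : ℤ) : ℝ) + 1, |w t * g t|) +
      (∫ t in 0 + ((-(n + 1) : ℤ) : ℝ)..0 + ((-(n + 1) : ℤ) : ℝ) + 1, |w t * g t|) ≤
        12 * M * B / α * (1 + n : ℝ) ^ (-1 - α / 2) := by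
    have hn : (0 : ℝ) ≤ n := n.cast_nonneg
    push_cast
    rw [zero_add, zero_add]
    have hright := intervalIntegral_abs_mul_le_rpow hM hB hα hα' hg hmass hw hwg (n := n) (k := n)
      (by rw [abs_of_nonneg hn]; linarith) fun t ht ↦ ht.1.trans (le_abs_self t)
    have hleft := intervalIntegral_abs_mul_le_rpow hM hB hα hα' hg hmass hw hwg (n := n)
      (k := -(n + 1)) (by rw [abs_neg, abs_of_nonneg (by positivity)])
      fun t ht ↦ le_abs.mpr (.inr (by linarith [ht.2]))
    exact (add_le_add hright hleft).trans_eq (by ring)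
  calc _ ≤ ∑ n ∈ Finset.range N, 12 * M * B / α * (1 + n : ℝ) ^ (-1 - α / 2) :=
        Finset.sum_le_sum fun n _ ↦ hcells n
    _ ≤ 12 * M * B / α * (1 + 1 / (α / 2)) := by
        rw [← Finset.mul_sum]
        gcongr
        exact sum_one_add_rpow_le (half_pos hα) N
    _ ≤ 12 * M * B / α * (3 / α) := by
        gcongr
        rw [le_div_iff₀ hα, add_mul, one_mul, one_div_div, div_mul_cancel₀ _ hα.ne']
        linarith
    _ = 36 * M * B / α ^ 2 := by ring

theorem exists_integral_abs_re_zetaLogDerivRemainder_le (hRH : RiemannHypothesis) :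
    ∃ M : ℝ, 0 < M ∧ ∀ σ : ℝ, 1 / 2 < σ → σ ≤ 1 → ∀ k : ℝ,
      ∫ t in k..k + 1, |(zetaLogDerivRemainder (σ + t * I)).re| ≤ M * Real.log (2 + |k|) := by
  obtain ⟨C, hC, hmass⟩ := exists_integral_re_logDeriv_riemannXi_le hRH
  refine ⟨126 + C, by positivity, fun σ hσ hσ' k ↦ ?_⟩
  have hre (t : ℝ) : (σ + t * I : ℂ).re = σ := by simp
  have him (t : ℝ) : (σ + t * I : ℂ).im = t := by simp
  have hpointwise : ∀ t ∈ Icc k (k + 1), |(zetaLogDerivRemainder (σ + t * I)).re| ≤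
      126 * Real.log (2 + |k|) + (logDeriv riemannXi (σ + t * I)).re := fun t ht ↦ by
    have harch := (Complex.abs_re_le_norm _).trans
      (norm_archimedeanTerm_le (s := σ + t * I) (by rw [hre]; exact hσ.le))
    have hlog := log_two_add_norm_le (s := σ + t * I) (by rw [hre, abs_of_pos] <;> linarith)
    have htk : |t| ≤ |k| + 3 := by
      have := abs_sub_abs_le_abs_sub t k
      rw [abs_of_nonneg (sub_nonneg.mpr ht.1)] at this
      linarith [ht.2]
    have hlog' := log_two_add_le_three_mul_log_two_add (abs_nonneg k) (abs_nonneg t) htk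
    rw [him] at hlog
    have hpos := re_logDeriv_riemannXi_nonneg hRH (s := σ + t * I) (by rw [hre]; exact hσ)
    rw [zetaLogDerivRemainder, sub_re]
    refine (abs_sub _ _).trans ?_
    rw [abs_of_nonneg hpos]
    linarith
  have hcont : Continuous fun t : ℝ ↦ (logDeriv riemannXi (σ + t * I)).re :=
    continuous_iff_continuousAt.mpr fun t ↦ continuous_re.continuousAt.comp
      (ContinuousAt.comp (g := logDeriv riemannXi)
        (differentiableAt_logDeriv_riemannXi hRH (by rw [hre]; exact hσ)).continuousAt
        (by fun_prop))
  have hcont' : Continuous fun t : ℝ ↦ (zetaLogDerivRemainder (σ + t * I)).re :=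
    continuous_re.comp (continuous_zetaLogDerivRemainder_vertical hRH (by rwa [ofReal_re]))
  calc _ ≤ ∫ t in k..k + 1, (126 * Real.log (2 + |k|) + (logDeriv riemannXi (σ + t * I)).re) :=
        intervalIntegral.integral_mono_on (by linarith) (hcont'.abs.intervalIntegrable _ _)
          ((continuous_const.add hcont).intervalIntegrable _ _) hpointwise
    _ = 126 * Real.log (2 + |k|) + ∫ t in k..k + 1, (logDeriv riemannXi (σ + t * I)).re := by
        rw [intervalIntegral.integral_add intervalIntegrable_const (hcont.intervalIntegrable _ _),
          intervalIntegral.integral_const, add_sub_cancel_left, one_smul]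
    _ ≤ (126 + C) * Real.log (2 + |k|) := by linarith [hmass σ hσ hσ' k]

end UnitCells

section Smoothing

variable {b η x σ : ℝ}

/-- The Chebyshev function `∑ Λ(n)` with the sharp cutoff `log n ≤ b` replaced by a ramp of
width `η`. -/
def smoothedPsi (b η : ℝ) : ℝ :=
  ∑ n ∈ Finset.range (⌊Real.exp (b + η)⌋₊ + 1), Λ n * ramp b η (Real.log n)

/-- The contribution of the pole of `ζ` to `smoothedPsi`. -/
def smoothedMain (b η : ℝ) : ℝ := ∫ a in (0 : ℝ)..b + η, Real.exp a * ramp b η a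

theorem chebyshevPsi_eq_sum_range (x : ℝ) :
    chebyshevPsi x = ∑ n ∈ Finset.range (⌊x⌋₊ + 1), Λ n := by
  rw [chebyshevPsi, Nat.range_succ_eq_Iic]

theorem smoothedPsi_le_chebyshevPsi : smoothedPsi b η ≤ chebyshevPsi (Real.exp (b + η)) := by
  rw [chebyshevPsi_eq_sum_range]
  exact Finset.sum_le_sum fun n _ ↦
    mul_le_of_le_one_right ArithmeticFunction.vonMangoldt_nonneg ramp_le_one

theorem chebyshevPsi_le_smoothedPsi (hb : 0 ≤ b) (hη : 0 < η) :
    chebyshevPsi (Real.exp b) ≤ smoothedPsi b η := by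
  have hramp : ∀ n ∈ Finset.range (⌊Real.exp b⌋₊ + 1), Λ n = Λ n * ramp b η (Real.log n) := by
    intro n hn
    have hnb : (n : ℝ) ≤ Real.exp b :=
      (Nat.le_floor_iff (Real.exp_pos b).le).mp (Finset.mem_range_succ_iff.mp hn)
    rw [ramp_eq_one hη, mul_one]
    rcases n.eq_zero_or_pos with rfl | hn₀
    · simpa using hb
    · exact (Real.log_le_iff_le_exp (Nat.cast_pos.mpr hn₀)).mpr hnb
  rw [chebyshevPsi_eq_sum_range, Finset.sum_congr rfl hramp]
  refine Finset.sum_le_sum_of_subset_of_nonneg (Finset.range_mono ?_) fun n _ _ ↦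
    mul_nonneg ArithmeticFunction.vonMangoldt_nonneg ramp_nonneg
  gcongr
  linarith

theorem intervalIntegrable_exp_mul_ramp (u v : ℝ) :
    IntervalIntegrable (fun a ↦ Real.exp a * ramp b η a) volume u v :=
  Continuous.intervalIntegrable (by fun_prop) u v

theorem smoothedMain_le (hb : 0 ≤ b) (hη : 0 ≤ η) : smoothedMain b η ≤ Real.exp (b + η) := by
  calc smoothedMain b η ≤ ∫ a in (0 : ℝ)..b + η, Real.exp a :=
        intervalIntegral.integral_mono_on (by linarith) (intervalIntegrable_exp_mul_ramp _ _)
          (Real.continuous_exp.intervalIntegrable _ _) fun a _ ↦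
            mul_le_of_le_one_right (Real.exp_pos a).le ramp_le_one
    _ ≤ Real.exp (b + η) := by
        rw [integral_exp]
        exact sub_le_self _ (Real.exp_pos 0).le

theorem le_smoothedMain (hb : 0 ≤ b) (hη : 0 < η) : Real.exp b - 1 ≤ smoothedMain b η := by
  have hflat : ∫ a in (0 : ℝ)..b, Real.exp a * ramp b η a = Real.exp b - 1 := by
    rw [← Real.exp_zero, ← integral_exp]
    refine intervalIntegral.integral_congr fun a ha ↦ ?_
    rw [uIcc_of_le hb] at ha
    simp only [ramp_eq_one hη ha.2, mul_one]
  have hslope : 0 ≤ ∫ a in b..b + η, Real.exp a * ramp b η a :=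
    intervalIntegral.integral_nonneg (by linarith) fun a _ ↦
      mul_nonneg (Real.exp_pos a).le ramp_nonneg
  rw [smoothedMain, ← intervalIntegral.integral_add_adjacent_intervals
    (intervalIntegrable_exp_mul_ramp 0 b) (intervalIntegrable_exp_mul_ramp b _), hflat]
  linarith

theorem term_vonMangoldt_mul_tiltedRamp (n : ℕ) :
    LSeries.term (fun n ↦ Λ n) σ n * (tiltedRamp σ b η (Real.log n) : ℂ) =
      (Λ n * ramp b η (Real.log n) : ℝ) := by
  rcases eq_or_ne n 0 with rfl | hn
  · simp
  have hn' : (0 : ℝ) < n := Nat.cast_pos.mpr (Nat.pos_of_ne_zero hn)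
  have hpow : ((n : ℂ) ^ (σ : ℂ)) = (Real.exp (σ * Real.log n) : ℝ) := by
    rw [mul_comm, ← Real.rpow_def_of_pos hn', ofReal_cpow hn'.le, ofReal_natCast]
  rw [LSeries.term_of_ne_zero hn, tiltedRamp_of_nonneg (Real.log_natCast_nonneg n), hpow]
  have := ofReal_ne_zero.mpr (Real.exp_pos (σ * Real.log n)).ne'
  push_cast
  field_simp

theorem integral_exp_mul_tiltedRamp (h : 0 ≤ b + η) :
    ∫ a in Ioc 0 (b + η), cexp ((1 - σ) * a) * tiltedRamp σ b η a = smoothedMain b η := by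
  rw [smoothedMain, intervalIntegral.integral_of_le h, ← integral_complex_ofReal]
  refine setIntegral_congr_fun measurableSet_Ioc fun a ha ↦ ?_
  rw [tiltedRamp_of_nonneg ha.1.le]
  push_cast
  rw [← mul_assoc, ← Complex.exp_add]
  ring_nf

theorem integrable_and_smoothedPsi_sub_smoothedMain (hRH : RiemannHypothesis) (hb : 0 ≤ b)
    (hη : 0 < η) (hσ : 1 / 2 < σ) (hσ' : σ ≤ 1) :
    Integrable (fun t : ℝ ↦ rampWeight σ b η t * (zetaLogDerivRemainder (σ + t * I)).re) ∧
      smoothedPsi b η - smoothedMain b η =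
        ∫ t : ℝ, rampWeight σ b η t * (zetaLogDerivRemainder (σ + t * I)).re := by
  have hlog : b + η ≤ Real.log (⌊Real.exp (b + η)⌋₊ + 1) :=
    (Real.le_log_iff_exp_le (by positivity)).mpr (Nat.lt_floor_add_one _).le
  obtain ⟨hint, hformula⟩ := integrable_and_integral_mul_zetaLogDerivRemainder hRH
    (w := fun t ↦ (rampWeight σ b η t : ℂ)) (integrable_rampWeight hb hη hσ.le).1
    (fun t ↦ by simpa only [norm_real, Real.norm_eq_abs] using
      abs_rampWeight_le_div_sq hb hη hσ.le t)
    (fun a ha ↦ by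
      rw [angularFourier_rampWeight hb hη hσ.le, tiltedRamp_eq_zero hη (ha.trans (le_abs_self a)),
        ofReal_zero]) hlog hσ hσ'
  simp only [angularFourier_rampWeight hb hη hσ.le, term_vonMangoldt_mul_tiltedRamp,
    integral_exp_mul_tiltedRamp (by positivity : 0 ≤ b + η)] at hformula
  have hre (t : ℝ) : ((rampWeight σ b η t : ℂ) * zetaLogDerivRemainder (σ + t * I)).re =
      rampWeight σ b η t * (zetaLogDerivRemainder (σ + t * I)).re := re_ofReal_mul _ _
  have hint_re := hint.re
  have hintegral_re := integral_re (𝕜 := ℂ) hint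
  simp only [RCLike.re_eq_complex_re, hre] at hint_re hintegral_re
  refine ⟨hint_re, ?_⟩
  rw [hintegral_re, hformula, ← ofReal_sum, ← ofReal_sub, ofReal_re, smoothedPsi]

theorem exists_abs_smoothedPsi_sub_smoothedMain_le (hRH : RiemannHypothesis) :
    ∃ C : ℝ, 0 < C ∧ ∀ b η ε : ℝ, 0 ≤ b → 0 < η → 0 < ε → ε ≤ 1 / 2 →
      |smoothedPsi b η - smoothedMain b η| ≤
        C * Real.exp ((1 / 2 + ε) * (b + η)) * (1 / η) ^ ε / ε ^ 2 := by
  obtain ⟨M, hM, hmass⟩ := exists_integral_abs_re_zetaLogDerivRemainder_le hRH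
  refine ⟨324 * M, by positivity, fun b η ε hb hη hε hε' ↦ ?_⟩
  obtain ⟨σ, hσ⟩ : ∃ σ, σ = 1 / 2 + ε := ⟨_, rfl⟩
  have hσ₁ : 1 / 2 < σ := by linarith
  have hσ₂ : σ ≤ 1 := by linarith
  obtain ⟨hint, hformula⟩ := integrable_and_smoothedPsi_sub_smoothedMain hRH hb hη hσ₁ hσ₂
  have hweight (t : ℝ) : |rampWeight σ b η t| ≤
      9 * Real.exp (σ * (b + η)) * (1 / η) ^ ε * (1 + |t|) ^ (-1 - ε) :=
    le_mul_rpow_of_le_div (by positivity) (by positivity) (by positivity) hε.le (by linarith)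
      (abs_rampWeight_le hb hη hσ₁.le t)
      ((abs_rampWeight_le_div_sq hb hη hσ₁.le t).trans_eq (by ring))
  have hcont : Continuous fun t : ℝ ↦ (zetaLogDerivRemainder (σ + t * I)).re :=
    continuous_re.comp (continuous_zetaLogDerivRemainder_vertical hRH (by rwa [ofReal_re]))
  rw [hformula, ← hσ]
  refine (abs_integral_mul_le_of_unit_mass hM.le (by positivity) hε (by linarith) hcont
    (hmass σ hσ₁ hσ₂) hweight hint).trans_eq ?_
  ring

theorem abs_chebyshevPsi_sub_le {E : ℝ} (hx : 0 < x) (hη : 0 < η) (hη' : η ≤ 1 / 2)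
    (hηx : η ≤ Real.log x)
    (hE : ∀ b, 0 ≤ b → b ≤ Real.log x → |smoothedPsi b η - smoothedMain b η| ≤ E) :
    |chebyshevPsi x - x| ≤ E + 2 * η * x + 1 := by
  have hupper : chebyshevPsi x ≤ x * Real.exp η + E := by
    have hb : 0 ≤ Real.log x := hη.le.trans hηx
    have hψ := chebyshevPsi_le_smoothedPsi hb hη
    have hmain := smoothedMain_le hb hη.le
    rw [Real.exp_log hx] at hψ
    rw [Real.exp_add, Real.exp_log hx] at hmain
    linarith [(abs_le.mp (hE _ hb le_rfl)).2]
  have hlower : x * Real.exp (-η) - 1 - E ≤ chebyshevPsi x := by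
    have hb : 0 ≤ Real.log x - η := sub_nonneg.mpr hηx
    have hψ := smoothedPsi_le_chebyshevPsi (b := Real.log x - η) (η := η)
    have hmain := le_smoothedMain hb hη
    rw [sub_add_cancel, Real.exp_log hx] at hψ
    rw [sub_eq_add_neg (Real.log x), Real.exp_add, Real.exp_log hx, ← sub_eq_add_neg] at hmain
    linarith [(abs_le.mp (hE _ hb (sub_le_self _ hη.le))).1]
  have hexp : Real.exp η ≤ 1 + 2 * η := by
    have hbound := Real.exp_bound_div_one_sub_of_interval hη.le (hη'.trans_lt one_half_lt_one)
    refine hbound.trans ((div_le_iff₀ (by linarith)).mpr ?_)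
    nlinarith
  have hexp_neg : 1 - η ≤ Real.exp (-η) := Real.one_sub_le_exp_neg η
  rw [abs_le]
  constructor <;> nlinarith

theorem exists_abs_chebyshevPsi_sub_le (hRH : RiemannHypothesis) :
    ∃ C : ℝ, 0 < C ∧ ∀ x ε : ℝ, 2 ≤ x → 0 < ε → ε ≤ 1 / 2 →
      |chebyshevPsi x - x| ≤ C * x ^ (1 / 2 + 2 * ε) / ε ^ 2 + 3 := by
  obtain ⟨C, hC, hsmoothed⟩ := exists_abs_smoothedPsi_sub_smoothedMain_le hRH
  refine ⟨C * Real.exp 1, by positivity, fun x ε hx hε hε' ↦ ?_⟩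
  have hx₀ : 0 < x := by linarith
  have hη : 1 / x ≤ 1 / 2 := one_div_le_one_div_of_le two_pos hx
  have hlog : 1 / 2 ≤ Real.log x := by
    linarith [Real.log_le_log two_pos hx, Real.log_two_gt_d9]
  have hE (b : ℝ) (hb : 0 ≤ b) (hbx : b ≤ Real.log x) :
      |smoothedPsi b (1 / x) - smoothedMain b (1 / x)| ≤
        C * Real.exp 1 * x ^ (1 / 2 + 2 * ε) / ε ^ 2 := by
    have hexp : Real.exp ((1 / 2 + ε) * (b + 1 / x)) ≤ Real.exp 1 * x ^ (1 / 2 + ε) := by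
      rw [Real.rpow_def_of_pos hx₀, ← Real.exp_add]
      gcongr
      nlinarith
    calc _ ≤ C * Real.exp ((1 / 2 + ε) * (b + 1 / x)) * (1 / (1 / x)) ^ ε / ε ^ 2 :=
          hsmoothed b (1 / x) ε hb (by positivity) hε hε'
      _ ≤ C * (Real.exp 1 * x ^ (1 / 2 + ε)) * x ^ ε / ε ^ 2 := by
          rw [one_div_one_div]
          gcongr
      _ = C * Real.exp 1 * x ^ (1 / 2 + 2 * ε) / ε ^ 2 := by
          rw [two_mul, ← add_assoc, Real.rpow_add hx₀ (1 / 2 + ε)]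
          ring
  refine (abs_chebyshevPsi_sub_le hx₀ (by positivity) hη (hη.trans hlog) hE).trans_eq ?_
  rw [mul_assoc 2, one_div_mul_cancel hx₀.ne']
  ring

theorem rpow_half_add_half_div_log (hx : 1 < x) :
    x ^ (1 / 2 + 1 / 2 / Real.log x) = Real.exp (1 / 2) * x ^ (1 / 2 : ℝ) := by
  have hx₀ : 0 < x := zero_lt_one.trans hx
  rw [Real.rpow_add hx₀, Real.rpow_def_of_pos hx₀ (1 / 2 / _),
    mul_div_cancel₀ _ (Real.log_pos hx).ne', mul_comm]

end Smoothing

end VonKoch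

/-- von Koch: assuming RH, `ψ(x) = x + O(x^{1/2} (log x)²)` for `x ≥ 2`. -/
theorem von_koch_psi (hRH : RiemannHypothesis) :
    ∃ C : ℝ, 0 < C ∧ ∀ x : ℝ, 2 ≤ x →
      |chebyshevPsi x - x| ≤ C * x ^ ((1 : ℝ) / 2) * Real.log x ^ 2 := by
  obtain ⟨C, hC, hψ⟩ := VonKoch.exists_abs_chebyshevPsi_sub_le hRH
  refine ⟨16 * C * Real.exp (1 / 2) + 12, by positivity, fun x hx ↦ ?_⟩
  have hlog : 1 / 2 ≤ Real.log x := by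
    linarith [Real.log_le_log two_pos hx, Real.log_two_gt_d9]
  have hlog₀ : 0 < Real.log x := by linarith
  have hε : 1 / (4 * Real.log x) ≤ 1 / 2 := one_div_le_one_div_of_le two_pos (by linarith)
  have hexponent : 2 * (1 / (4 * Real.log x)) = 1 / 2 / Real.log x := by
    rw [one_div, mul_inv]
    ring
  have hthree : 3 ≤ 12 * (x ^ ((1 : ℝ) / 2) * Real.log x ^ 2) := by
    have hpow : 1 ≤ x ^ ((1 : ℝ) / 2) := Real.one_le_rpow (by linarith) (by norm_num)
    nlinarith [pow_le_pow_left₀ one_half_pos.le hlog 2]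
  calc |chebyshevPsi x - x|
      ≤ C * x ^ (1 / 2 + 2 * (1 / (4 * Real.log x))) / (1 / (4 * Real.log x)) ^ 2 + 3 :=
        hψ x _ hx (one_div_pos.mpr (mul_pos four_pos hlog₀)) hε
    _ = 16 * C * Real.exp (1 / 2) * x ^ ((1 : ℝ) / 2) * Real.log x ^ 2 + 3 := by
        rw [hexponent, VonKoch.rpow_half_add_half_div_log (by linarith), one_div_pow,
          div_div_eq_mul_div]
        ring
    _ ≤ (16 * C * Real.exp (1 / 2) + 12) * x ^ ((1 : ℝ) / 2) * Real.log x ^ 2 := by linarith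
end
end
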